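/- arXiv:0812.1219 — 3 statements merged into one kernel-verified Lean document; each statement's English description precedes it below -/
import Mathlib

section
/- Let n = (n₁;n₂) ∈ ℤ₊^{m₁+1}(•) × ℤ₊^{m₂+1}(•) with |n₁| ≥ 1, and let S¹ = N(σ¹_0,…,σ¹_{m₁}), S² = N(σ²_0,…,σ²_{m₂}) be Nikishin systems with σ¹_0 = σ²_0. Then n is normal: every mixed type multiple orthogonal polynomial system (a_{n,0},…,a_{n,m₁}) relative to n and (S¹,S²) satisfies deg a_{n,j} = n_{1,j} − 1 for every j = 0,…,m₁; moreover, any two such systems are proportional (the solution is uniquely determined up to a constant factor). -/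
open MeasureTheory Polynomial Set Filter

noncomputable section

/-- The support of a Borel measure on `ℝ`: points all of whose open neighborhoods
have positive measure. -/
def msupport (μ : Measure ℝ) : Set ℝ :=
  {x : ℝ | ∀ U : Set ℝ, IsOpen U → x ∈ U → μ U ≠ 0}

/-- The copy of a real set inside `ℂ`. -/
def cpx (s : Set ℝ) : Set ℂ := (fun x : ℝ => (x : ℂ)) '' s

/-- `nikhat μ e j g` is the Cauchy transform of the measure `⟨σ_j, …, σ_{j+g}⟩`,
where `σ_i = (e i) • (μ i)` is a measure of constant sign. -/
def nikhat (μ : ℕ → Measure ℝ) (e : ℕ → ℝ) : ℕ → ℕ → ℂ → ℂ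
  | j, 0, z => (e j : ℂ) * ∫ t, 1 / (z - (t : ℂ)) ∂(μ j)
  | j, g + 1, z => (e j : ℂ) * ∫ t, nikhat μ e (j + 1) g (t : ℂ) / (z - (t : ℂ)) ∂(μ j)

/-- The Cauchy transform `ŝ_{j+1,k}` of `s_{j+1,k} = ⟨σ_{j+1},…,σ_k⟩`, with the
convention that it is `≡ 1` when `k ≤ j`. -/
def wt (μ : ℕ → Measure ℝ) (e : ℕ → ℝ) (j k : ℕ) (z : ℂ) : ℂ :=
  if j < k then nikhat μ e (j + 1) (k - (j + 1)) z else 1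

/-- Integral of `f` against the measure `s_{j,k} = ⟨σ_j, …, σ_k⟩`
(whose density with respect to `σ_j` is `ŝ_{j+1,k}`). -/
def sInt (μ : ℕ → Measure ℝ) (e : ℕ → ℝ) (j k : ℕ) (f : ℝ → ℂ) : ℂ :=
  (e j : ℂ) * ∫ x, f x * wt μ e j k (x : ℂ) ∂(μ j)

/-- The linear form `𝒜_{n,j}(z) = ∑_{k=j}^{m₁} a_k(z) ŝ¹_{j+1,k}(z)`. -/
def linForm (μ : ℕ → Measure ℝ) (e : ℕ → ℝ) (m₁ j : ℕ) (A : ℕ → Polynomial ℝ)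
    (z : ℂ) : ℂ :=
  ∑ k ∈ Finset.Icc j m₁, Polynomial.aeval z (A k) * wt μ e j k z

/-- The linear forms with negative index:
`𝒜_{n,-j-1}(z) = ∫ 𝒜_{n,-j}(x) dσ²_j(x) / (z - x)`. -/
def linFormNeg (μ : ℕ → Measure ℝ) (e : ℕ → ℝ) (F : ℂ → ℂ) : ℕ → ℂ → ℂ
  | 0 => F
  | j + 1 => fun z => (e j : ℂ) * ∫ x, linFormNeg μ e F j (x : ℂ) / (z - (x : ℂ)) ∂(μ j)

/-- A Nikishin system `N(σ_0,…,σ_m)` of measures of constant sign `σ_j = (e j) • (μ j)`,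
with `Co(supp σ_j) = Δ_j = [a j, b j]` and `Δ_j ∩ Δ_{j+1} = ∅`. -/
structure NikSys (m : ℕ) where
  μ : ℕ → Measure ℝ
  e : ℕ → ℝ
  a : ℕ → ℝ
  b : ℕ → ℝ
  fin : ∀ j, IsFiniteMeasure (μ j)
  sgn : ∀ j, e j = 1 ∨ e j = -1
  hull : ∀ j ≤ m, convexHull ℝ (msupport (μ j)) = Set.Icc (a j) (b j)
  inf : ∀ j ≤ m, (msupport (μ j)).Infinite
  disj : ∀ j < m, Set.Icc (a j) (b j) ∩ Set.Icc (a (j + 1)) (b (j + 1)) = ∅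

/-- Decreasing multi-index (the class `ℤ₊^{m+1}(•)`). -/
def Decr (m : ℕ) (n : ℕ → ℕ) : Prop := ∀ j < m, n (j + 1) ≤ n j

/-- `|n| = n_0 + ⋯ + n_m`. -/
def msum (m : ℕ) (n : ℕ → ℕ) : ℕ := ∑ j ∈ Finset.range (m + 1), n j

/-- `N_{1,j} = n_j + ⋯ + n_m` (partial tail sums). -/
def tailSum (m : ℕ) (n : ℕ → ℕ) (j : ℕ) : ℕ := ∑ k ∈ Finset.Icc j m, n k

/-- Mixed type multiple orthogonal polynomials relative to `(n1;n2)` and `(S1,S2)`. -/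
def IsMOP (m₁ m₂ : ℕ) (S1 : NikSys m₁) (S2 : NikSys m₂)
    (n1 n2 : ℕ → ℕ) (A : ℕ → Polynomial ℝ) : Prop :=
  (∀ j ≤ m₁, (A j).degree < (n1 j : WithBot ℕ)) ∧
  (∃ j ≤ m₁, A j ≠ 0) ∧
  ∀ k ≤ m₂, ∀ ν < n2 k,
    sInt S2.μ S2.e 0 k (fun x => (x : ℂ) ^ ν * linForm S1.μ S1.e m₁ 0 A (x : ℂ)) = 0

/-- The "monic" normalization: the last entry different from zero has leading
coefficient `1`. -/
def MonicLast (m₁ : ℕ) (A : ℕ → Polynomial ℝ) : Prop :=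
  ∃ j ≤ m₁, (A j).Monic ∧ ∀ k, j < k → k ≤ m₁ → A k = 0

/-- `n^l`: increase the `l`-th component by one. -/
def bump (l : ℕ) (n : ℕ → ℕ) : ℕ → ℕ := fun j => if j = l then n j + 1 else n j



/-! ### Basic analytic facts -/

lemma sign_poly (I : Set ℝ) (Z : Finset ℝ) : ∀ f : ℝ → ℝ,
    (∀ x ∈ I, ∀ y ∈ I, x < y → f x * f y < 0 → ∃ z ∈ Z, x < z ∧ z < y) →
    ∃ q : ℝ[X], q.natDegree ≤ Z.card ∧ (∀ x, q.eval x = 0 → x ∈ Z) ∧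
      ∀ x ∈ I, ∀ y ∈ I, 0 ≤ (q.eval x * f x) * (q.eval y * f y) := by
  induction Z using Finset.induction_on with
  | empty =>
    intro f hf
    refine ⟨1, by simp, by simp, ?_⟩
    intro x hx y hy
    simp only [eval_one, one_mul]
    rcases lt_trichotomy x y with h | h | h
    · by_contra hc
      push Not at hc
      obtain ⟨z, hz, _⟩ := hf x hx y hy h hc
      simp at hz
    · subst h; exact mul_self_nonneg _
    · by_contra hc
      push Not at hc
      obtain ⟨z, hz, _⟩ := hf y hy x hx h (by linarith)
      simp at hz
  | insert c Z hc ih =>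
    intro f hf
    by_cases h1 : ∀ x ∈ I, ∀ y ∈ I, x < y → f x * f y < 0 → ∃ z ∈ Z, x < z ∧ z < y
    · obtain ⟨q, hq1, hq2, hq3⟩ := ih f h1
      refine ⟨q, ?_, fun x hx => Finset.mem_insert_of_mem (hq2 x hx), hq3⟩
      rw [Finset.card_insert_of_notMem hc]; omega
    · push Not at h1
      obtain ⟨x, hx, y, hy, hxy, hfxy, hno⟩ := h1
      have hcxy : x < c ∧ c < y := by
        obtain ⟨z, hz, hz'⟩ := hf x hx y hy hxy hfxy
        rcases Finset.mem_insert.1 hz with rfl | hz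
        · exact hz'
        · exact absurd hz'.2 (not_lt.2 (hno z hz hz'.1))
      obtain ⟨q, hq1, hq2, hq3⟩ := ih (fun t => (t - c) * f t) (by
        intro x' hx' y' hy' hxy' hg
        by_contra hno'
        push Not at hno'
        have key : ∀ u ∈ I, ∀ v ∈ I, u < v → (∀ z ∈ Z, u < z → v ≤ z) → (v < c ∨ c < u) →
            0 ≤ f u * f v := by
          intro u hu v hv huv hz hcc
          by_contra hneg
          push Not at hneg
          obtain ⟨z, hz1, hz2, hz3⟩ := hf u hu v hv huv hneg
          rcases Finset.mem_insert.1 hz1 with rfl | hz1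
          · rcases hcc with h | h <;> linarith
          · linarith [hz z hz1 hz2]
        have hx'c : x' ≠ c := by rintro rfl; simp at hg
        have hy'c : y' ≠ c := by rintro rfl; simp at hg
        rcases lt_or_gt_of_ne hx'c with h1 | h1
        · rcases lt_or_gt_of_ne hy'c with h2 | h2
          · have := key x' hx' y' hy' hxy' hno' (Or.inl h2)
            have h3 : 0 < (c - x') * (c - y') := mul_pos (by linarith) (by linarith)
            nlinarith [mul_nonneg h3.le this]
          · have hpos : 0 < f x' * f y' := by
              by_contra hn
              push Not at hn
              have h3 : 0 < (c - x') * (y' - c) := mul_pos (by linarith) (by linarith)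
              nlinarith [mul_nonneg h3.le (neg_nonneg.2 hn)]
            have k1 : 0 ≤ f x * f x' := by
              rcases lt_trichotomy x x' with h | h | h
              · exact key x hx x' hx' h (fun z hz hxz => by linarith [hno z hz hxz]) (Or.inl h1)
              · subst h; exact mul_self_nonneg _
              · rw [mul_comm]
                exact key x' hx' x hx h (fun z hz hxz => by linarith [hno' z hz hxz])
                  (Or.inl hcxy.1)
            have k2 : 0 ≤ f y * f y' := by
              rcases lt_trichotomy y y' with h | h | h
              · exact key y hy y' hy' h (fun z hz hxz => hno' z hz (by linarith [hcxy.2]))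
                  (Or.inr hcxy.2)
              · subst h; exact mul_self_nonneg _
              · rw [mul_comm]
                exact key y' hy' y hy h (fun z hz hxz => hno z hz (by linarith [hcxy.1]))
                  (Or.inr h2)
            nlinarith [mul_nonneg k1 k2, mul_pos hpos (neg_pos.2 hfxy)]
        · have := key x' hx' y' hy' hxy' hno' (Or.inr h1)
          have h3 : 0 < (x' - c) * (y' - c) := mul_pos (by linarith) (by linarith)
          nlinarith [mul_nonneg h3.le this])
      refine ⟨q * (X - C c), ?_, ?_, ?_⟩
      · rw [Finset.card_insert_of_notMem hc]
        refine natDegree_mul_le.trans ?_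
        rw [natDegree_X_sub_C]; omega
      · intro x hx
        rw [eval_mul, mul_eq_zero] at hx
        rcases hx with hx | hx
        · exact Finset.mem_insert_of_mem (hq2 x hx)
        · simp only [eval_sub, eval_X, eval_C] at hx
          exact Finset.mem_insert.2 (Or.inl (by linarith))
      · intro x hx y hy
        have := hq3 x hx y hy
        simpa only [eval_mul, eval_sub, eval_X, eval_C, mul_assoc] using this

lemma int_of_cont {μ : Measure ℝ} [IsFiniteMeasure μ] {a b : ℝ} {f : ℝ → ℝ}
    (hμ : ∀ᵐ x ∂μ, x ∈ Icc a b) (hf : ContinuousOn f (Icc a b)) : Integrable f μ := by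
  have h : IntegrableOn f (Icc a b) μ := hf.integrableOn_Icc
  rwa [IntegrableOn, Measure.restrict_eq_self_of_ae_mem hμ] at h

lemma sub_ne_of_disj {a b c d x t : ℝ} (hd : Icc a b ∩ Icc c d = ∅) (ht : t ∈ Icc a b)
    (hx : x ∈ Icc c d) : x - t ≠ 0 := by
  intro h
  have : t = x := by linarith
  subst this
  exact (Set.eq_empty_iff_forall_notMem.1 hd t) ⟨ht, hx⟩

lemma ker_cont {a b c d : ℝ} {f : ℝ → ℝ} (hf : ContinuousOn f (Icc a b))
    (hd : Icc a b ∩ Icc c d = ∅) :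
    ContinuousOn (fun p : ℝ × ℝ => f p.2 / (p.1 - p.2)) (Icc c d ×ˢ Icc a b) := by
  refine ContinuousOn.div (hf.comp continuousOn_snd fun p hp => hp.2) (by fun_prop) ?_
  intro p hp
  exact sub_ne_of_disj hd hp.2 hp.1

lemma ker_int {μ : Measure ℝ} [IsFiniteMeasure μ] {a b c d x : ℝ} {f : ℝ → ℝ}
    (hμ : ∀ᵐ x ∂μ, x ∈ Icc a b) (hf : ContinuousOn f (Icc a b))
    (hd : Icc a b ∩ Icc c d = ∅) (hx : x ∈ Icc c d) :
    Integrable (fun t => f t / (x - t)) μ := by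
  refine int_of_cont hμ (hf.div (by fun_prop) fun t ht => sub_ne_of_disj hd ht hx)

lemma cauchy_cont {μ : Measure ℝ} [IsFiniteMeasure μ] {a b c d : ℝ} {f : ℝ → ℝ}
    (hμ : ∀ᵐ x ∂μ, x ∈ Icc a b) (hf : ContinuousOn f (Icc a b))
    (hd : Icc a b ∩ Icc c d = ∅) :
    ContinuousOn (fun x => ∫ t, f t / (x - t) ∂μ) (Icc c d) := by
  obtain ⟨K, hK⟩ := (isCompact_Icc.prod isCompact_Icc).exists_bound_of_continuousOn
    (ker_cont hf hd)
  refine continuousOn_of_dominated (bound := fun _ => K) ?_ ?_ (integrable_const _) ?_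
  · intro x hx
    exact (ker_int hμ hf hd hx).aestronglyMeasurable
  · intro x hx
    filter_upwards [hμ] with t ht
    exact hK (x, t) ⟨hx, ht⟩
  · filter_upwards [hμ] with t ht
    exact continuousOn_const.div (by fun_prop) fun x hx => sub_ne_of_disj hd ht hx

lemma prod_int {μ ν : Measure ℝ} [IsFiniteMeasure μ] [IsFiniteMeasure ν] {a b c d : ℝ}
    {F : ℝ × ℝ → ℝ} (hμ : ∀ᵐ x ∂μ, x ∈ Icc a b) (hν : ∀ᵐ x ∂ν, x ∈ Icc c d)
    (hF : ContinuousOn F (Icc a b ×ˢ Icc c d)) : Integrable F (μ.prod ν) := by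
  have h : IntegrableOn F (Icc a b ×ˢ Icc c d) (μ.prod ν) :=
    hF.integrableOn_compact (isCompact_Icc.prod isCompact_Icc)
  rwa [IntegrableOn, ← Measure.prod_restrict, Measure.restrict_eq_self_of_ae_mem hμ,
    Measure.restrict_eq_self_of_ae_mem hν] at h

lemma ae_msupport (μ : Measure ℝ) : ∀ᵐ x ∂μ, x ∈ msupport μ := by
  refine measure_null_of_locally_null _ ?_
  intro x hx
  have hx' : x ∉ msupport μ := hx
  simp only [msupport, Set.mem_ofPred_eq] at hx'
  push Not at hx'
  obtain ⟨U, hU, hxU, h0⟩ := hx'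
  exact ⟨U, mem_nhdsWithin_of_mem_nhds (hU.mem_nhds hxU), h0⟩

/-- Continuous functions vanishing almost everywhere vanish on the support. -/
lemma zero_on_msupport {μ : Measure ℝ} {a b : ℝ} {f : ℝ → ℝ}
    (hs : msupport μ ⊆ Icc a b) (hf : ContinuousOn f (Icc a b))
    (h0 : ∀ᵐ x ∂μ, f x = 0) {x : ℝ} (hx : x ∈ msupport μ) : f x = 0 := by
  by_contra hne
  have h1 : {y | f y ≠ 0} ∈ nhdsWithin x (Icc a b) :=
    (hf x (hs hx)).eventually_ne hne
  obtain ⟨U, hU, hxU, hsub⟩ := mem_nhdsWithin.1 h1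
  refine hx U hU hxU ?_
  have h2 : ∀ᵐ y ∂μ, y ∉ U := by
    filter_upwards [h0, ae_msupport μ] with y hy hys hyU
    exact hsub ⟨hyU, hs hys⟩ hy
  have := ae_iff.1 h2
  simpa using this

/-- Orthogonality to polynomials of degree `< N` forces `N` distinct zeros. -/
lemma many_zeros {μ : Measure ℝ} [IsFiniteMeasure μ] {a b : ℝ} {f : ℝ → ℝ}
    (hs : msupport μ ⊆ Icc a b) (hinf : (msupport μ).Infinite)
    (hf : ContinuousOn f (Icc a b)) (N : ℕ)
    (ho : ∀ ν < N, ∫ x, x ^ ν * f x ∂μ = 0) :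
    ∃ Z : Finset ℝ, (∀ z ∈ Z, z ∈ Icc a b) ∧ Z.card = N ∧ ∀ z ∈ Z, f z = 0 := by
  have hμ : ∀ᵐ x ∂μ, x ∈ Icc a b := (ae_msupport μ).mono fun x hx => hs hx
  set S : Set ℝ := {x | x ∈ Icc a b ∧ f x = 0} with hS
  by_contra hcon
  have hsub : ∀ T : Finset ℝ, (T : Set ℝ) ⊆ S → T.card < N := by
    intro T hT
    by_contra hc
    push Not at hc
    obtain ⟨Z, hZ, hZc⟩ := Finset.exists_subset_card_eq hc
    exact hcon ⟨Z, fun z hz => (hT (hZ hz)).1, hZc, fun z hz => (hT (hZ hz)).2⟩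
  have hSf : S.Finite := by
    by_contra hSi
    obtain ⟨T, hT, hTc⟩ := Set.Infinite.exists_subset_card_eq hSi N
    exact absurd (hsub T hT) (by omega)
  have hcard := hsub hSf.toFinset (by simp)
  obtain ⟨q, hq1, hq2, hq3⟩ := sign_poly (Icc a b) hSf.toFinset f (by
    intro x hx y hy hxy hneg
    have hsubI : Icc x y ⊆ Icc a b := Icc_subset_Icc hx.1 hy.2
    have h0 : (0:ℝ) ∈ f '' Icc x y := by
      rcases mul_neg_iff.1 hneg with h | h
      · exact intermediate_value_Icc' hxy.le (hf.mono hsubI) ⟨h.2.le, h.1.le⟩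
      · exact intermediate_value_Icc hxy.le (hf.mono hsubI) ⟨h.1.le, h.2.le⟩
    obtain ⟨z, hz, hz0⟩ := h0
    refine ⟨z, by simpa [hS] using ⟨hsubI hz, hz0⟩, ?_, ?_⟩
    · refine lt_of_le_of_ne hz.1 ?_
      rintro rfl; simp [hz0] at hneg
    · refine lt_of_le_of_ne hz.2 ?_
      rintro rfl; simp [hz0] at hneg)
  have hqf : ContinuousOn (fun x => q.eval x * f x) (Icc a b) :=
    q.continuous.continuousOn.mul hf
  have hint : ∫ x, q.eval x * f x ∂μ = 0 := by
    have : ∀ x, q.eval x * f x = ∑ i ∈ Finset.range (q.natDegree + 1),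
        q.coeff i * (x ^ i * f x) := by
      intro x
      rw [eval_eq_sum_range, Finset.sum_mul]
      simp only [mul_assoc]
    simp_rw [this]
    rw [integral_finsetSum]
    · refine Finset.sum_eq_zero fun i hi => ?_
      rw [integral_const_mul, ho i, mul_zero]
      have := Finset.mem_range.1 hi
      omega
    · intro i hi
      refine (int_of_cont hμ ?_).const_mul _
      exact (continuous_pow i).continuousOn.mul hf
  have hzero : ∀ᵐ x ∂μ, q.eval x * f x = 0 := by
    by_cases hp : ∃ x ∈ Icc a b, q.eval x * f x < 0
    · obtain ⟨x0, hx0, hneg⟩ := hp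
      have hle : ∀ᵐ x ∂μ, 0 ≤ -(q.eval x * f x) := by
        filter_upwards [hμ] with x hx
        have := hq3 x0 hx0 x hx
        by_contra hc
        push Not at hc
        nlinarith
      have hi := (integral_eq_zero_iff_of_nonneg_ae hle (int_of_cont hμ hqf).neg).1 (by
        rw [integral_neg, hint, neg_zero])
      filter_upwards [hi] with x hx
      simpa using hx
    · push Not at hp
      have hle : ∀ᵐ x ∂μ, 0 ≤ q.eval x * f x := by
        filter_upwards [hμ] with x hx
        exact hp x hx
      exact (integral_eq_zero_iff_of_nonneg_ae hle (int_of_cont hμ hqf)).1 hint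
  refine hinf (hSf.subset ?_)
  intro x hx
  have h := zero_on_msupport hs hqf hzero hx
  rcases mul_eq_zero.1 h with h | h
  · simpa using hq2 x h
  · exact ⟨hs hx, h⟩

/-! ### Partial fractions -/

lemma part_frac (Z : Finset ℝ) (P : ℝ[X]) (hP : P.degree < Z.card) (x : ℝ) (hx : x ∉ Z) :
    P.eval x / (Lagrange.nodal Z id).eval x =
      ∑ z ∈ Z, Lagrange.nodalWeight Z id z * P.eval z / (x - z) := by
  have hne : ∀ i ∈ Z, x ≠ id i := by
    rintro i hi rfl; exact hx hi
  have h1 := Lagrange.eq_interpolate (s := Z) (v := id) (Set.injOn_id _) hP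
  have h0 := Lagrange.eval_nodal_not_at_node hne
  rw [div_eq_iff h0]
  conv_lhs => rw [h1]
  rw [Lagrange.eval_interpolate_not_at_node _ hne, mul_comm]
  congr 1
  refine Finset.sum_congr rfl fun i _ => ?_
  simp only [id]
  ring

lemma sum_weight (Z : Finset ℝ) (P : ℝ[X]) (hP : P.degree < ((Z.card - 1 : ℕ) : WithBot ℕ)) :
    ∑ z ∈ Z, Lagrange.nodalWeight Z id z * P.eval z = 0 := by
  have h := Lagrange.coeff_eq_sum (s := Z) (v := id) (Set.injOn_id _) (P := P)
    (hP.trans_le (by exact_mod_cast Nat.sub_le _ _))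
  rw [coeff_eq_zero_of_degree_lt hP] at h
  rw [h]
  refine Finset.sum_congr rfl fun i _ => ?_
  rw [Lagrange.nodalWeight, Finset.prod_inv_distrib, div_eq_mul_inv, mul_comm]
  rfl

/-! ### The real version of the Nikishin functions -/

/-- `Hr μ e j g` is `ŝ_{j+1,j+g}` on the real line, with the value `1` when `g = 0`. -/
def Hr (μ : ℕ → Measure ℝ) (e : ℕ → ℝ) : ℕ → ℕ → ℝ → ℝ
  | _, 0, _ => 1
  | j, g + 1, x => e (j + 1) * ∫ t, Hr μ e (j + 1) g t / (x - t) ∂(μ (j + 1))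

/-- The real linear forms. -/
def Lr (μ : ℕ → Measure ℝ) (e : ℕ → ℝ) (j N : ℕ) (A : ℕ → ℝ[X]) (x : ℝ) : ℝ :=
  ∑ g ∈ Finset.range (N + 1), (A g).eval x * Hr μ e j g x

lemma nikhat_real (μ : ℕ → Measure ℝ) (e : ℕ → ℝ) (g : ℕ) : ∀ (j : ℕ) (x : ℝ),
    nikhat μ e (j + 1) g (x : ℂ) = (Hr μ e j (g + 1) x : ℂ) := by
  induction g with
  | zero =>
    intro j x
    simp only [nikhat, Hr]
    push_cast
    rw [← integral_complex_ofReal]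
    push_cast
    rfl
  | succ g ih =>
    intro j x
    rw [nikhat, Hr]
    push_cast
    rw [← integral_complex_ofReal]
    push_cast
    simp_rw [ih]

lemma wt_real (μ : ℕ → Measure ℝ) (e : ℕ → ℝ) (j g : ℕ) (x : ℝ) :
    wt μ e j (j + g) (x : ℂ) = (Hr μ e j g x : ℂ) := by
  cases g with
  | zero => simp [wt, Hr]
  | succ g =>
    rw [wt, if_pos (by omega), ← nikhat_real]
    congr 1
    omega

lemma linForm_real (μ : ℕ → Measure ℝ) (e : ℕ → ℝ) (m : ℕ) (A : ℕ → ℝ[X]) (x : ℝ) :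
    linForm μ e m 0 A (x : ℂ) = (Lr μ e 0 m A x : ℂ) := by
  have : Finset.Icc 0 m = Finset.range (m + 1) := by ext; simp
  rw [linForm, Lr, this]
  push_cast
  refine Finset.sum_congr rfl fun k _ => ?_
  have h := wt_real μ e 0 k x
  rw [zero_add] at h
  rw [h]
  congr 1
  have := Polynomial.aeval_algebraMap_apply ℂ x (A k)
  simpa using this

namespace NikSys

variable {m : ℕ} (S : NikSys m)

lemma supp_sub {j : ℕ} (hj : j ≤ m) : msupport (S.μ j) ⊆ Icc (S.a j) (S.b j) := by
  rw [← S.hull j hj]; exact subset_convexHull ℝ _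

lemma ae_mem {j : ℕ} (hj : j ≤ m) : ∀ᵐ x ∂(S.μ j), x ∈ Icc (S.a j) (S.b j) :=
  (ae_msupport _).mono fun _ hx => S.supp_sub hj hx

lemma e_sq (j : ℕ) : S.e j * S.e j = 1 := by
  rcases S.sgn j with h | h <;> rw [h] <;> norm_num

lemma Hr_cont (g : ℕ) : ∀ j, j + g ≤ m →
    ContinuousOn (Hr S.μ S.e j g) (Icc (S.a j) (S.b j)) := by
  induction g with
  | zero =>
    intro j _
    have : Hr S.μ S.e j 0 = fun _ => 1 := by funext x; rw [Hr]
    rw [this]; exact continuousOn_const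
  | succ g ih =>
    intro j hj
    have : Hr S.μ S.e j (g + 1) = fun x =>
      S.e (j + 1) * ∫ t, Hr S.μ S.e (j + 1) g t / (x - t) ∂(S.μ (j + 1)) := by
      funext x; rw [Hr]
    rw [this]
    have := S.fin (j + 1)
    refine continuousOn_const.mul (cauchy_cont (S.ae_mem (by omega)) (ih (j + 1) (by omega)) ?_)
    rw [Set.inter_comm]
    exact S.disj j (by omega)

lemma Lr_cont (N j : ℕ) (hj : j + N ≤ m) (A : ℕ → ℝ[X]) :
    ContinuousOn (Lr S.μ S.e j N A) (Icc (S.a j) (S.b j)) := by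
  unfold Lr
  refine continuousOn_finsetSum _ fun g hg => ?_
  have := Finset.mem_range.1 hg
  exact (A g).continuous.continuousOn.mul (S.Hr_cont g j (by omega))

lemma nodal_cont_ne {a b c d : ℝ} {Z : Finset ℝ} (hd : Icc a b ∩ Icc c d = ∅)
    (hZ : ∀ z ∈ Z, z ∈ Icc a b) {x : ℝ} (hx : x ∈ Icc c d) :
    x ∉ Z ∧ (Lagrange.nodal Z id).eval x ≠ 0 := by
  have h : x ∉ Z := fun h => sub_ne_of_disj hd (hZ x h) hx (sub_self x)
  refine ⟨h, Lagrange.eval_nodal_not_at_node ?_⟩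
  rintro i hi rfl
  exact h hi

/-- The AT property: a linear form with too many zeros is trivial. -/
lemma at_system (N : ℕ) : ∀ (j : ℕ), j + N ≤ m → ∀ (n : ℕ → ℕ) (A : ℕ → ℝ[X]) (Z : Finset ℝ),
    (∀ k l, k < l → l ≤ N → n l ≤ n k + 1) →
    (∀ k ≤ N, (A k).degree < (n k : WithBot ℕ)) →
    (∀ z ∈ Z, z ∈ Icc (S.a j) (S.b j)) →
    (Z.card = ∑ k ∈ Finset.range (N + 1), n k) →
    (∀ z ∈ Z, Lr S.μ S.e j N A z = 0) → ∀ k ≤ N, A k = 0 := by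
  induction N with
  | zero =>
    intro j hj n A Z hn hA hZ hc h0 k hk
    obtain rfl : k = 0 := by omega
    simp only [zero_add, Finset.range_one, Finset.sum_singleton] at hc
    refine Polynomial.eq_zero_of_degree_lt_of_eval_finset_eq_zero Z (by rw [hc]; exact hA 0 le_rfl) ?_
    intro z hz
    have := h0 z hz
    simpa [Lr, Hr] using this
  | succ N ih =>
    intro j hj n A Z hn hA hZ hc h0
    have hfin := S.fin (j + 1)
    have hdisj := S.disj j (by omega)
    have hdisj' := hdisj
    rw [Set.inter_comm] at hdisj'
    have hae := S.ae_mem (j := j + 1) (by omega)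
    rw [Finset.sum_range_succ'] at hc
    set K := ∑ k ∈ Finset.range (N + 1), n (k + 1) with hK
    set W := Lagrange.nodal Z id with hW
    set w := Lagrange.nodalWeight Z id with hw
    set A' : ℕ → ℝ[X] := fun g => A (g + 1) with hA'
    set I : ℕ → ℝ → ℝ := fun g z => ∫ x, Hr S.μ S.e (j + 1) g x / (z - x) ∂(S.μ (j + 1)) with hI
    have hLz : ∀ z ∈ Z, ∑ g ∈ Finset.range (N + 1), (A' g).eval z * I g z
        = - (S.e (j + 1) * (A 0).eval z) := by
      intro z hz
      have h := h0 z hz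
      rw [Lr, Finset.sum_range_succ'] at h
      simp only [Hr, mul_one] at h
      have h2 : ∑ g ∈ Finset.range (N + 1), (A' g).eval z * I g z = S.e (j + 1) *
          ∑ g ∈ Finset.range (N + 1), eval z (A (g + 1)) * (S.e (j + 1) *
            ∫ t, Hr S.μ S.e (j + 1) g t / (z - t) ∂(S.μ (j + 1))) := by
        rw [Finset.mul_sum]
        refine Finset.sum_congr rfl fun g _ => ?_
        have := S.e_sq (j + 1)
        simp only [hA', hI]
        linear_combination (-(eval z (A (g + 1)) *
            ∫ t, Hr S.μ S.e (j + 1) g t / (z - t) ∂(S.μ (j + 1)))) * this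
      rw [h2, eq_neg_of_add_eq_zero_left h]
      ring
    have hWc : ContinuousOn (fun x => W.eval x) (Icc (S.a (j + 1)) (S.b (j + 1))) :=
      W.continuous.continuousOn
    have hfc : ContinuousOn (fun x => Lr S.μ S.e (j + 1) N A' x / W.eval x)
        (Icc (S.a (j + 1)) (S.b (j + 1))) :=
      (S.Lr_cont N (j + 1) (by omega) A').div hWc fun x hx => (nodal_cont_ne hdisj hZ hx).2
    have horth : ∀ ν < K, ∫ x, x ^ ν * (Lr S.μ S.e (j + 1) N A' x / W.eval x) ∂(S.μ (j + 1))
        = 0 := by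
      intro ν hν
      have hpt : ∀ᵐ x ∂(S.μ (j + 1)), x ^ ν * (Lr S.μ S.e (j + 1) N A' x / W.eval x)
          = ∑ z ∈ Z, ∑ g ∈ Finset.range (N + 1), (-(w z * z ^ ν * (A' g).eval z)) *
            (Hr S.μ S.e (j + 1) g x / (z - x)) := by
        filter_upwards [hae] with x hx
        have hxZ := (nodal_cont_ne hdisj hZ hx).1
        rw [Finset.sum_comm, Lr, Finset.sum_div, Finset.mul_sum]
        refine Finset.sum_congr rfl fun g hg => ?_
        have hg' := Finset.mem_range.1 hg
        have hdeg : (X ^ ν * A' g).degree < (Z.card : WithBot ℕ) := by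
          by_cases hz : A' g = 0
          · rw [hz, mul_zero, degree_zero]; exact WithBot.bot_lt_coe _
          · have h1 := hA (g + 1) (by omega)
            have h2 := hn 0 (g + 1) (by omega) (by omega)
            have h3 : A' g = A (g + 1) := rfl
            rw [← h3, degree_eq_natDegree hz] at h1
            have h1' : (A' g).natDegree < n (g + 1) := by exact_mod_cast h1
            rw [degree_mul, degree_X_pow, degree_eq_natDegree hz]
            have : ν + (A' g).natDegree < Z.card := by omega
            exact_mod_cast this
        have hpf := part_frac Z _ hdeg x hxZ
        simp only [eval_mul, eval_pow, eval_X] at hpf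
        calc x ^ ν * (eval x (A' g) * Hr S.μ S.e (j + 1) g x / eval x W)
            = (x ^ ν * eval x (A' g) / eval x W) * Hr S.μ S.e (j + 1) g x := by ring
          _ = _ := by
            rw [hpf, Finset.sum_mul]
            refine Finset.sum_congr rfl fun z _ => ?_
            rw [← neg_sub z x, div_neg]
            ring
      have hii : ∀ z ∈ Z, ∀ g ∈ Finset.range (N + 1),
          Integrable (fun x => (-(w z * z ^ ν * (A' g).eval z)) *
            (Hr S.μ S.e (j + 1) g x / (z - x))) (S.μ (j + 1)) := by
        intro z hz g hg
        have hg' := Finset.mem_range.1 hg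
        exact (ker_int hae (S.Hr_cont g (j + 1) (by omega)) hdisj' (hZ z hz)).const_mul _
      rw [integral_congr_ae hpt, integral_finsetSum _
        (fun z hz => integrable_finsetSum _ (hii z hz))]
      have hstep : ∀ z ∈ Z, ∫ x, ∑ g ∈ Finset.range (N + 1), (-(w z * z ^ ν * (A' g).eval z)) *
            (Hr S.μ S.e (j + 1) g x / (z - x)) ∂(S.μ (j + 1)) =
            S.e (j + 1) * (w z * (X ^ ν * A 0).eval z) := by
        intro z hz
        rw [integral_finsetSum _ (hii z hz)]
        simp_rw [integral_const_mul]
        have : ∑ g ∈ Finset.range (N + 1), (-(w z * z ^ ν * (A' g).eval z)) * I g z =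
            -(w z * z ^ ν) * ∑ g ∈ Finset.range (N + 1), (A' g).eval z * I g z := by
          rw [Finset.mul_sum]
          refine Finset.sum_congr rfl fun g _ => ?_
          ring
        rw [hLz z hz] at this
        refine this.trans ?_
        simp only [eval_mul, eval_pow, eval_X]
        ring
      rw [Finset.sum_congr rfl hstep, ← Finset.mul_sum, sum_weight, mul_zero]
      by_cases hz : A 0 = 0
      · rw [hz, mul_zero, degree_zero]; exact WithBot.bot_lt_coe _
      · have h1 := hA 0 (by omega)
        rw [degree_eq_natDegree hz] at h1
        have h1' : (A 0).natDegree < n 0 := by exact_mod_cast h1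
        rw [degree_mul, degree_X_pow, degree_eq_natDegree hz]
        have : ν + (A 0).natDegree < Z.card - 1 := by omega
        exact_mod_cast this
    obtain ⟨Z', hZ'1, hZ'2, hZ'3⟩ := many_zeros (S.supp_sub (by omega)) (S.inf _ (by omega))
      hfc K horth
    have hA0 := ih (j + 1) (by omega) (fun k => n (k + 1)) A' Z'
      (fun k l hkl hl => hn (k + 1) (l + 1) (by omega) (by omega))
      (fun k hk => hA (k + 1) (by omega)) hZ'1 hZ'2 (by
        intro z hz
        have h := hZ'3 z hz
        exact (div_eq_zero_iff.1 h).resolve_right (nodal_cont_ne hdisj hZ (hZ'1 z hz)).2)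
    have hA00 : A 0 = 0 := by
      refine Polynomial.eq_zero_of_degree_lt_of_eval_finset_eq_zero Z
        ((hA 0 (by omega)).trans_le (by rw [hc]; exact_mod_cast Nat.le_add_left _ _)) ?_
      intro z hz
      have h := h0 z hz
      rw [Lr, Finset.sum_range_succ', Finset.sum_eq_zero] at h
      · simpa [Hr] using h
      · intro g hg
        have hg' := Finset.mem_range.1 hg
        have : A (g + 1) = 0 := hA0 g (by omega)
        rw [this, eval_zero, zero_mul]
    intro k hk
    cases k with
    | zero => exact hA00
    | succ k => exact hA0 k (by omega)

/-- Multiple orthogonality forces many distinct zeros. -/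
lemma orth_zeros (N : ℕ) : ∀ (j : ℕ), j + N ≤ m → ∀ (n : ℕ → ℕ) (f : ℝ → ℝ),
    (∀ k l, k ≤ l → l ≤ N → n l ≤ n k) →
    ContinuousOn f (Icc (S.a j) (S.b j)) →
    (∀ g ≤ N, ∀ ν < n g, ∫ x, x ^ ν * f x * Hr S.μ S.e j g x ∂(S.μ j) = 0) →
    ∃ Z : Finset ℝ, (∀ z ∈ Z, z ∈ Icc (S.a j) (S.b j)) ∧
      Z.card = ∑ k ∈ Finset.range (N + 1), n k ∧ ∀ z ∈ Z, f z = 0 := by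
  induction N with
  | zero =>
    intro j hj n f hn hf ho
    have := S.fin j
    simp only [zero_add, Finset.range_one, Finset.sum_singleton]
    refine many_zeros (S.supp_sub (by omega)) (S.inf _ (by omega)) hf _ fun ν hν => ?_
    have := ho 0 le_rfl ν hν
    simpa [Hr] using this
  | succ N ih =>
    intro j hj n f hn hf ho
    have hfin0 := S.fin j
    have hfin := S.fin (j + 1)
    have hdisj := S.disj j (by omega)
    have hdisj' := hdisj
    rw [Set.inter_comm] at hdisj'
    have hae0 := S.ae_mem (j := j) (by omega)
    have hae := S.ae_mem (j := j + 1) (by omega)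
    set f1 : ℝ → ℝ := fun x => ∫ t, f t / (x - t) ∂(S.μ j) with hf1
    have hf1c : ContinuousOn f1 (Icc (S.a (j + 1)) (S.b (j + 1))) := cauchy_cont hae0 hf hdisj
    have ho0 : ∀ ν < n 0, ∫ x, x ^ ν * f x ∂(S.μ j) = 0 := by
      intro ν hν
      simpa [Hr] using ho 0 (by omega) ν hν
    have horth1 : ∀ g ≤ N, ∀ ν < n (g + 1),
        ∫ x, x ^ ν * f1 x * Hr S.μ S.e (j + 1) g x ∂(S.μ (j + 1)) = 0 := by
      intro g hg ν hν
      have hHc := S.Hr_cont g (j + 1) (by omega)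
      have hν0 : n (g + 1) ≤ n 0 := hn 0 (g + 1) (by omega) (by omega)
      have e1 : ∀ x, x ^ ν * f1 x * Hr S.μ S.e (j + 1) g x =
          ∫ t, x ^ ν * Hr S.μ S.e (j + 1) g x * (f t / (x - t)) ∂(S.μ j) := by
        intro x
        rw [integral_const_mul]
        ring
      simp_rw [e1]
      rw [integral_integral_swap]
      swap
      · refine prod_int hae hae0 ?_
        refine ContinuousOn.mul ?_ (ker_cont hf hdisj)
        exact (continuous_fst.pow ν).continuousOn.mul
          (hHc.comp continuousOn_fst fun p hp => hp.1)
      set M : ℕ → ℝ := fun i => ∫ x, x ^ i * Hr S.μ S.e (j + 1) g x ∂(S.μ (j + 1)) with hM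
      have hMi : ∀ i, Integrable (fun x => x ^ i * Hr S.μ S.e (j + 1) g x) (S.μ (j + 1)) :=
        fun i => int_of_cont hae ((continuous_pow i).continuousOn.mul hHc)
      have e2 : ∀ᵐ t ∂(S.μ j), ∫ x, x ^ ν * Hr S.μ S.e (j + 1) g x * (f t / (x - t))
            ∂(S.μ (j + 1)) =
          (-S.e (j + 1)) * (t ^ ν * f t * Hr S.μ S.e j (g + 1) t) +
            ∑ i ∈ Finset.range ν, M i * (t ^ (ν - 1 - i) * f t) := by
        filter_upwards [hae0] with t ht
        have e3 : ∀ᵐ x ∂(S.μ (j + 1)), x ^ ν * Hr S.μ S.e (j + 1) g x * (f t / (x - t)) =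
            (-(t ^ ν * f t)) * (Hr S.μ S.e (j + 1) g x / (t - x)) +
            ∑ i ∈ Finset.range ν, (t ^ (ν - 1 - i) * f t) * (x ^ i * Hr S.μ S.e (j + 1) g x) := by
          filter_upwards [hae] with x hx
          have hne := sub_ne_of_disj hdisj ht hx
          have hgs := geom_sum₂_mul x t ν
          have hs : ∑ i ∈ Finset.range ν, (t ^ (ν - 1 - i) * f t) *
              (x ^ i * Hr S.μ S.e (j + 1) g x) =
              (∑ i ∈ Finset.range ν, x ^ i * t ^ (ν - 1 - i)) * (f t * Hr S.μ S.e (j + 1) g x) := by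
            rw [Finset.sum_mul]
            refine Finset.sum_congr rfl fun i _ => ?_
            ring
          rw [hs, eq_div_of_mul_eq hne hgs, ← neg_sub x t, div_neg]
          field_simp
          ring
        have hi1 := ker_int hae hHc hdisj' ht
        rw [integral_congr_ae e3, integral_add (hi1.const_mul _)
          (integrable_finsetSum _ fun i _ => (hMi i).const_mul _), integral_const_mul,
          integral_finsetSum _ fun i _ => (hMi i).const_mul _]
        simp_rw [integral_const_mul]
        congr 1
        · have := S.e_sq (j + 1)
          simp only [Hr]
          linear_combination ((t ^ ν * f t) *
            ∫ x, Hr S.μ S.e (j + 1) g x / (t - x) ∂(S.μ (j + 1))) * this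
        · refine Finset.sum_congr rfl fun i _ => ?_
          simp only [hM]
          ring
      have hti : ∀ i, Integrable (fun t => t ^ i * f t) (S.μ j) :=
        fun i => int_of_cont hae0 ((continuous_pow i).continuousOn.mul hf)
      rw [integral_congr_ae e2, integral_add, integral_const_mul, ho (g + 1) (by omega) ν hν,
        integral_finsetSum _ fun i _ => (hti _).const_mul _]
      · rw [mul_zero, zero_add]
        refine Finset.sum_eq_zero fun i hi => ?_
        have := Finset.mem_range.1 hi
        rw [integral_const_mul, ho0 _ (by omega), mul_zero]
      · refine (int_of_cont hae0 ?_).const_mul _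
        exact ((continuous_pow ν).continuousOn.mul hf).mul (S.Hr_cont (g + 1) j (by omega))
      · exact integrable_finsetSum _ fun i _ => (hti _).const_mul _
    obtain ⟨Z, hZ1, hZ2, hZ3⟩ := ih (j + 1) (by omega) (fun k => n (k + 1)) f1
      (fun k l hkl hl => hn (k + 1) (l + 1) (by omega) (by omega)) hf1c horth1
    set W := Lagrange.nodal Z id with hW
    have hWm : W.Monic := Lagrange.nodal_monic
    have hWd : W.natDegree = Z.card := Lagrange.natDegree_nodal
    have hne : ∀ x ∈ Icc (S.a j) (S.b j), x ∉ Z ∧ W.eval x ≠ 0 :=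
      fun x hx => nodal_cont_ne hdisj' hZ1 hx
    have hfc : ContinuousOn (fun x => f x / W.eval x) (Icc (S.a j) (S.b j)) :=
      hf.div W.continuous.continuousOn fun x hx => (hne x hx).2
    obtain ⟨Y, hY1, hY2, hY3⟩ := many_zeros (S.supp_sub (by omega)) (S.inf _ (by omega))
      hfc (Z.card + n 0) (by
      intro ν hν
      set r := (X ^ ν : ℝ[X]) /ₘ W with hr
      set s := (X ^ ν : ℝ[X]) %ₘ W with hs
      have hsd : s.degree < (Z.card : WithBot ℕ) := by
        have := degree_modByMonic_lt (X ^ ν : ℝ[X]) hWm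
        rwa [degree_eq_natDegree hWm.ne_zero, hWd] at this
      have hrd : ∀ i ∈ Finset.range (r.natDegree + 1), r.coeff i ≠ 0 → i < n 0 := by
        intro i hi h
        have h1 := le_natDegree_of_ne_zero h
        have h2 : r.natDegree = ν - Z.card := by
          rw [hr, natDegree_divByMonic _ hWm, hWd, natDegree_X_pow]
        have h3 : Z.card ≤ ν := by
          by_contra hlt
          push Not at hlt
          have : r = 0 := by
            rw [hr, divByMonic_eq_zero_iff hWm, degree_eq_natDegree hWm.ne_zero, hWd,
              degree_X_pow]
            exact_mod_cast hlt
          rw [this] at h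
          simp at h
        omega
      have hdecomp : ∀ x : ℝ, x ^ ν = s.eval x + W.eval x * r.eval x := by
        intro x
        have := congrArg (eval x) (modByMonic_add_div (X ^ ν : ℝ[X]) W)
        simpa using this.symm
      have hpt : ∀ᵐ x ∂(S.μ j), x ^ ν * (f x / W.eval x) =
          ∑ z ∈ Z, (-(Lagrange.nodalWeight Z id z * s.eval z)) * (f x / (z - x)) +
          ∑ i ∈ Finset.range (r.natDegree + 1), r.coeff i * (x ^ i * f x) := by
        filter_upwards [hae0] with x hx
        obtain ⟨hxZ, hxW⟩ := hne x hx
        have hpf := part_frac Z s hsd x hxZ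
        have h1 : x ^ ν * (f x / W.eval x) = (s.eval x / W.eval x) * f x + r.eval x * f x := by
          rw [hdecomp x]
          field_simp
        rw [h1, hpf, eval_eq_sum_range, Finset.sum_mul, Finset.sum_mul]
        congr 1
        · refine Finset.sum_congr rfl fun z _ => ?_
          rw [← neg_sub z x, div_neg]
          ring
        · refine Finset.sum_congr rfl fun i _ => ?_
          ring
      have hti : ∀ i, Integrable (fun t => t ^ i * f t) (S.μ j) :=
        fun i => int_of_cont hae0 ((continuous_pow i).continuousOn.mul hf)
      have hzi : ∀ z ∈ Z, Integrable (fun x =>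
          (-(Lagrange.nodalWeight Z id z * s.eval z)) * (f x / (z - x))) (S.μ j) :=
        fun z hz => (ker_int hae0 hf hdisj (hZ1 z hz)).const_mul _
      rw [integral_congr_ae hpt, integral_add (integrable_finsetSum _ hzi)
        (integrable_finsetSum _ fun i _ => (hti i).const_mul _), integral_finsetSum _ hzi,
        integral_finsetSum _ fun i _ => (hti i).const_mul _]
      simp_rw [integral_const_mul]
      rw [Finset.sum_eq_zero, Finset.sum_eq_zero, zero_add]
      · intro i hi
        by_cases h : r.coeff i = 0
        · rw [h, zero_mul]
        · rw [ho0 i (hrd i hi h), mul_zero]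
      · intro z hz
        have : ∫ x, f x / (z - x) ∂(S.μ j) = 0 := hZ3 z hz
        rw [this, mul_zero])
    refine ⟨Y, hY1, ?_, ?_⟩
    · rw [hY2, hZ2, Finset.sum_range_succ' n]
    · intro z hz
      exact (div_eq_zero_iff.1 (hY3 z hz)).resolve_right (hne z (hY1 z hz)).2

end NikSys

lemma decr_le {m : ℕ} {n : ℕ → ℕ} (h : Decr m n) (k l : ℕ) (hkl : k ≤ l) (hl : l ≤ m) :
    n l ≤ n k := by
  induction l, hkl using Nat.le_induction with
  | base => exact le_rfl
  | succ l hkl ih => exact (h l (by omega)).trans (ih (by omega))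

/-- The degree part of normality. -/
lemma mop_degree
    (m₁ m₂ : ℕ) (S1 : NikSys m₁) (S2 : NikSys m₂)
    (hbase : S1.μ 0 = S2.μ 0 ∧ S1.e 0 = S2.e 0)
    (n1 n2 : ℕ → ℕ) (h1 : Decr m₁ n1) (h2 : Decr m₂ n2)
    (hsum : msum m₂ n2 + 1 = msum m₁ n1)
    (A : ℕ → Polynomial ℝ) (hA : IsMOP m₁ m₂ S1 S2 n1 n2 A) (j : ℕ) (hj : j ≤ m₁)
    (hnj : 1 ≤ n1 j) : (A j).degree = ((n1 j - 1 : ℕ) : WithBot ℕ) := by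
  obtain ⟨hdeg, hnz, ho⟩ := hA
  have hI : Icc (S1.a 0) (S1.b 0) = Icc (S2.a 0) (S2.b 0) := by
    rw [← S1.hull 0 (Nat.zero_le _), ← S2.hull 0 (Nat.zero_le _), hbase.1]
  obtain ⟨Z, hZ1, hZ2, hZ3⟩ := S2.orth_zeros m₂ 0 (by omega) n2 (Lr S1.μ S1.e 0 m₁ A)
    (decr_le h2) (by rw [← hI]; exact S1.Lr_cont m₁ 0 (by omega) A) (by
      intro g hg ν hν
      have h := ho g hg ν hν
      rw [sInt] at h
      have hw : ∀ x : ℝ, wt S2.μ S2.e 0 g (x : ℂ) = (Hr S2.μ S2.e 0 g x : ℂ) := by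
        intro x
        simpa using wt_real S2.μ S2.e 0 g x
      simp_rw [linForm_real, hw] at h
      have he : (S2.e 0 : ℂ) ≠ 0 := by
        rcases S2.sgn 0 with h | h <;> rw [h] <;> norm_num
      have h' := (mul_eq_zero.1 h).resolve_left he
      have hc : ∀ x : ℝ, (x : ℂ) ^ ν * (Lr S1.μ S1.e 0 m₁ A x : ℂ) * (Hr S2.μ S2.e 0 g x : ℂ)
          = ((x ^ ν * Lr S1.μ S1.e 0 m₁ A x * Hr S2.μ S2.e 0 g x : ℝ) : ℂ) := by
        intro x; push_cast; rfl
      simp_rw [hc] at h'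
      rw [integral_complex_ofReal] at h'
      exact_mod_cast h')
  by_contra hne
  have hlt : (A j).degree < ((n1 j - 1 : ℕ) : WithBot ℕ) := by
    refine lt_of_le_of_ne ?_ hne
    by_cases hz : A j = 0
    · rw [hz, degree_zero]; exact bot_le
    · have := hdeg j hj
      rw [degree_eq_natDegree hz] at this ⊢
      have h' : (A j).natDegree < n1 j := by exact_mod_cast this
      exact_mod_cast Nat.le_sub_one_of_lt h'
  obtain ⟨k, hk, hAk⟩ := hnz
  refine hAk (S1.at_system m₁ 0 (by omega) (fun i => if i = j then n1 j - 1 else n1 i) A Z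
    ?_ ?_ (by rw [hI]; exact hZ1) ?_ hZ3 k hk)
  · intro k l hkl hl
    have := decr_le h1 k l hkl.le hl
    split_ifs with ha hb hb
    · subst ha; subst hb; omega
    · subst ha; omega
    · subst hb; omega
    · omega
  · intro k hk
    split_ifs with ha
    · subst ha; exact hlt
    · exact hdeg k hk
  · rw [hZ2]
    unfold msum at hsum
    have hjm : j ∈ Finset.range (m₁ + 1) := Finset.mem_range.2 (by omega)
    rw [← Finset.add_sum_erase _ _ hjm] at hsum ⊢
    have : ∑ x ∈ (Finset.range (m₁ + 1)).erase j, (if x = j then n1 j - 1 else n1 x) =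
        ∑ x ∈ (Finset.range (m₁ + 1)).erase j, n1 x :=
      Finset.sum_congr rfl fun x hx => if_neg (Finset.ne_of_mem_erase hx)
    rw [this, if_pos rfl]
    omega

lemma Lr_comb (μ : ℕ → Measure ℝ) (e : ℕ → ℝ) (j N : ℕ) (A B : ℕ → ℝ[X]) (c : ℝ) (x : ℝ) :
    Lr μ e j N (fun k => B k - c • A k) x = Lr μ e j N B x - c * Lr μ e j N A x := by
  simp only [Lr, Finset.mul_sum, ← Finset.sum_sub_distrib]
  refine Finset.sum_congr rfl fun g _ => ?_
  simp only [eval_sub, eval_smul, smul_eq_mul]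
  ring

/-- **Normality.** For `n = (n₁;n₂) ∈ ℤ₊^{m₁+1}(•) × ℤ₊^{m₂+1}(•)` with
`|n₁| ≥ 1` and Nikishin systems `S¹, S²` with `σ¹_0 = σ²_0`, the multi-index `n` is
normal: every mixed type multiple orthogonal polynomial system has
`deg a_{n,j} = n_{1,j} - 1` for all `j`, and any two such systems are proportional. -/
theorem mixed_mop_normal
    (m₁ m₂ : ℕ) (S1 : NikSys m₁) (S2 : NikSys m₂)
    (hbase : S1.μ 0 = S2.μ 0 ∧ S1.e 0 = S2.e 0)
    (n1 n2 : ℕ → ℕ) (h1 : Decr m₁ n1) (h2 : Decr m₂ n2)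
    (hsum : msum m₂ n2 + 1 = msum m₁ n1) (hone : 1 ≤ msum m₁ n1) :
    (∀ A : ℕ → Polynomial ℝ, IsMOP m₁ m₂ S1 S2 n1 n2 A →
      ∀ j ≤ m₁, (n1 j = 0 → A j = 0) ∧
        (1 ≤ n1 j → (A j).degree = ((n1 j - 1 : ℕ) : WithBot ℕ))) ∧
    (∀ A A' : ℕ → Polynomial ℝ,
      IsMOP m₁ m₂ S1 S2 n1 n2 A → IsMOP m₁ m₂ S1 S2 n1 n2 A' →
      ∃ c : ℝ, c ≠ 0 ∧ ∀ j ≤ m₁, A' j = c • A j) := by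
  have hdegs : ∀ A : ℕ → Polynomial ℝ, IsMOP m₁ m₂ S1 S2 n1 n2 A →
      ∀ j ≤ m₁, (n1 j = 0 → A j = 0) ∧
        (1 ≤ n1 j → (A j).degree = ((n1 j - 1 : ℕ) : WithBot ℕ)) := by
    intro A hA j hj
    refine ⟨fun h0 => ?_, mop_degree m₁ m₂ S1 S2 hbase n1 n2 h1 h2 hsum A hA j hj⟩
    have := hA.1 j hj
    rw [h0] at this
    by_contra hne
    rw [degree_eq_natDegree hne] at this
    have h' : (A j).natDegree < 0 := by exact_mod_cast this
    omega
  refine ⟨hdegs, ?_⟩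
  intro A A' hA hA'
  have hn0 : 1 ≤ n1 0 := by
    by_contra hc
    have : msum m₁ n1 = 0 := by
      refine Finset.sum_eq_zero fun i hi => ?_
      have := decr_le h1 0 i (Nat.zero_le _) (by have := Finset.mem_range.1 hi; omega)
      omega
    omega
  have hd := (hdegs A hA 0 (Nat.zero_le _)).2 hn0
  have hd' := (hdegs A' hA' 0 (Nat.zero_le _)).2 hn0
  have hA0 : A 0 ≠ 0 := by rintro h; rw [h, degree_zero] at hd; exact WithBot.bot_ne_coe hd
  have hA0' : A' 0 ≠ 0 := by rintro h; rw [h, degree_zero] at hd'; exact WithBot.bot_ne_coe hd'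
  set c : ℝ := (A' 0).leadingCoeff / (A 0).leadingCoeff with hcdef
  have hl := leadingCoeff_ne_zero.2 hA0
  have hl' := leadingCoeff_ne_zero.2 hA0'
  have hc0 : c ≠ 0 := div_ne_zero hl' hl
  refine ⟨c, hc0, ?_⟩
  by_contra hcon
  push Not at hcon
  obtain ⟨j, hj, hjne⟩ := hcon
  have hB : IsMOP m₁ m₂ S1 S2 n1 n2 (fun k => A' k - c • A k) := by
    refine ⟨?_, ⟨j, hj, sub_ne_zero.2 hjne⟩, ?_⟩
    · intro k hk
      refine (degree_sub_le _ _).trans_lt (max_lt (hA'.1 k hk) ?_)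
      exact (degree_smul_le _ _).trans_lt (hA.1 k hk)
    · intro k hk ν hν
      have e1 := hA.2.2 k hk ν hν
      have e2 := hA'.2.2 k hk ν hν
      have hw : ∀ x : ℝ, wt S2.μ S2.e 0 k (x : ℂ) = (Hr S2.μ S2.e 0 k x : ℂ) := by
        intro x
        simpa using wt_real S2.μ S2.e 0 k x
      have hI : Icc (S1.a 0) (S1.b 0) = Icc (S2.a 0) (S2.b 0) := by
        rw [← S1.hull 0 (Nat.zero_le _), ← S2.hull 0 (Nat.zero_le _), hbase.1]
      have hfin := S2.fin 0
      have hint : ∀ B : ℕ → ℝ[X], Integrable (fun x : ℝ => (x : ℂ) ^ ν *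
          (Lr S1.μ S1.e 0 m₁ B x : ℂ) * (Hr S2.μ S2.e 0 k x : ℂ)) (S2.μ 0) := by
        intro B
        have hr : Integrable (fun x : ℝ => x ^ ν * Lr S1.μ S1.e 0 m₁ B x *
            Hr S2.μ S2.e 0 k x) (S2.μ 0) := by
          refine int_of_cont (S2.ae_mem (Nat.zero_le _)) ?_
          refine ((continuous_pow ν).continuousOn.mul ?_).mul (S2.Hr_cont k 0 (by omega))
          rw [← hI]
          exact S1.Lr_cont m₁ 0 (by omega) B
        have := hr.ofReal (𝕜 := ℂ)
        simpa using this
      simp_rw [sInt, linForm_real, hw] at e1 e2 ⊢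
      have hpt : ∀ x : ℝ, (x : ℂ) ^ ν * (Lr S1.μ S1.e 0 m₁ (fun k => A' k - c • A k) x : ℂ) *
          (Hr S2.μ S2.e 0 k x : ℂ) = (x : ℂ) ^ ν * (Lr S1.μ S1.e 0 m₁ A' x : ℂ) *
          (Hr S2.μ S2.e 0 k x : ℂ) - (c : ℂ) * ((x : ℂ) ^ ν * (Lr S1.μ S1.e 0 m₁ A x : ℂ) *
          (Hr S2.μ S2.e 0 k x : ℂ)) := by
        intro x
        rw [Lr_comb]
        push_cast
        ring
      simp_rw [hpt]
      rw [integral_sub (hint A') ((hint A).const_mul _), integral_const_mul, mul_sub, e2,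
        mul_left_comm, e1]
      simp
  have hBd := (hdegs _ hB 0 (Nat.zero_le _)).2 hn0
  have hlt : (A' 0 - c • A 0).degree < (A' 0).degree := by
    refine degree_sub_lt_left ?_ hA0' ?_
    · rw [degree_smul_of_smul_regular _ (IsSMulRegular.of_ne_zero hc0), hd, hd']
    · rw [leadingCoeff_smul_of_smul_regular _ (IsSMulRegular.of_ne_zero hc0), smul_eq_mul, hcdef,
        div_mul_cancel₀ _ hl]
  rw [hd', ← hBd] at hlt
  exact lt_irrefl _ hlt

end
end

section
/- Let n = (n₁;n₂) ∈ ℤ₊^{m₁+1}(•) × ℤ₊^{m₂+1}(•) with n_{1,m₁} ≥ 1, and S¹ = N(σ¹_0,…,σ¹_{m₁}), S² = N(σ²_0,…,σ²_{m₂}) with σ¹_0 = σ²_0. Then for each j = 0,…,m₂: ∫ x^ν A_{n,−j}(x) d s²_{j,k}(x) = 0 for every k = j,…,m₂ and every ν = 0,…,n_{2,k} − 1. -/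
open MeasureTheory Polynomial Set Filter

noncomputable section

theorem nk_compl_null {m : ℕ} (S : NikSys m) {j : ℕ} (hj : j ≤ m) :
    ∀ᵐ x ∂(S.μ j), x ∈ Set.Icc (S.a j) (S.b j) := by
  rw [ae_iff]
  apply measure_null_of_locally_null
  intro x hx
  have hx' : x ∉ msupport (S.μ j) := fun h => hx (by
    rw [← S.hull j hj]; exact subset_convexHull ℝ _ h)
  simp only [msupport, Set.mem_setOf_eq, not_forall, not_not] at hx'
  obtain ⟨U, hU, hxU, h0⟩ := hx'
  exact ⟨U, mem_nhdsWithin_of_mem_nhds (hU.mem_nhds hxU), h0⟩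

/-- Measurable and bounded on an interval. -/
def NkGood (a b : ℝ) (f : ℂ → ℂ) : Prop :=
  Measurable f ∧ ∃ C : ℝ, ∀ x ∈ Set.Icc a b, ‖f (x : ℂ)‖ ≤ C

theorem nk_kernel {a b c d : ℝ} (h : Set.Icc a b ∩ Set.Icc c d = ∅) :
    ∃ K : ℝ, 0 ≤ K ∧ ∀ x ∈ Set.Icc a b, ∀ t ∈ Set.Icc c d,
      (x : ℂ) - (t : ℂ) ≠ 0 ∧ ‖((x : ℂ) - (t : ℂ))⁻¹‖ ≤ K := by
  have hne : ∀ x ∈ Set.Icc a b, ∀ t ∈ Set.Icc c d, (x : ℂ) - (t : ℂ) ≠ 0 := by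
    intro x hx t ht h0
    have : x = t := by exact_mod_cast sub_eq_zero.1 h0
    subst this
    have : x ∈ Set.Icc a b ∩ Set.Icc c d := ⟨hx, ht⟩
    rw [h] at this
    exact this
  have hc : IsCompact (Set.Icc a b ×ˢ Set.Icc c d) := isCompact_Icc.prod isCompact_Icc
  obtain ⟨K, hK⟩ := hc.exists_bound_of_continuousOn
    (f := fun p : ℝ × ℝ => ((p.1 : ℂ) - (p.2 : ℂ))⁻¹) (by
      apply ContinuousOn.inv₀
      · fun_prop
      · rintro ⟨x, t⟩ ⟨hx, ht⟩
        exact hne x hx t ht)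
  refine ⟨max K 0, le_max_right _ _, fun x hx t ht => ⟨hne x hx t ht, ?_⟩⟩
  exact (hK (x, t) ⟨hx, ht⟩).trans (le_max_left _ _)

theorem nk_transform {a b c d : ℝ} (h : Set.Icc a b ∩ Set.Icc c d = ∅)
    (μ : Measure ℝ) [IsFiniteMeasure μ] (hμ : ∀ᵐ x ∂μ, x ∈ Set.Icc c d)
    {f : ℂ → ℂ} (hf : NkGood c d f) (e : ℂ) :
    NkGood a b (fun z => e * ∫ t, f (t : ℂ) / (z - (t : ℂ)) ∂μ) := by
  obtain ⟨hm, C, hC⟩ := hf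
  obtain ⟨K, hK0, hK⟩ := nk_kernel h
  constructor
  · apply Measurable.const_mul
    have : StronglyMeasurable (fun p : ℂ × ℝ => f (p.2 : ℂ) / (p.1 - (p.2 : ℂ))) := by
      apply Measurable.stronglyMeasurable
      apply Measurable.div
      · exact hm.comp (Complex.measurable_ofReal.comp measurable_snd)
      · exact measurable_fst.sub (Complex.measurable_ofReal.comp measurable_snd)
    exact this.integral_prod_right.measurable
  · refine ⟨‖e‖ * (C * K * μ.real Set.univ), fun x hx => ?_⟩
    rw [norm_mul]
    refine mul_le_mul_of_nonneg_left ?_ (norm_nonneg _)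
    apply norm_integral_le_of_norm_le_const
    filter_upwards [hμ] with t ht
    rw [div_eq_mul_inv, norm_mul]
    exact mul_le_mul (hC t ht) (hK x hx t ht).2 (norm_nonneg _) ((norm_nonneg _).trans (hC t ht))

theorem nk_wt_eq (μ : ℕ → Measure ℝ) (e : ℕ → ℝ) {j k : ℕ} (h : j < k) (z : ℂ) :
    wt μ e j k z = (e (j + 1) : ℂ) * ∫ t, wt μ e (j + 1) k (t : ℂ) / (z - (t : ℂ)) ∂(μ (j + 1)) := by
  obtain ⟨g, rfl⟩ := Nat.exists_eq_add_of_lt h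
  rcases g with _ | g
  · simp [wt, nikhat]
  · have h1 : j < j + (g + 1) + 1 := by omega
    have h2 : j + 1 < j + (g + 1) + 1 := by omega
    have e1 : j + (g + 1) + 1 - (j + 1) = g + 1 := by omega
    have e2 : j + (g + 1) + 1 - (j + 1 + 1) = g := by omega
    simp only [wt, if_pos h1, if_pos h2, e1, e2, nikhat]

theorem nk_wt_good {m : ℕ} (S : NikSys m) (k : ℕ) (hk : k ≤ m) :
    ∀ r j : ℕ, k ≤ j + r → NkGood (S.a j) (S.b j) (wt S.μ S.e j k) := by
  have base : ∀ j : ℕ, k ≤ j → NkGood (S.a j) (S.b j) (wt S.μ S.e j k) := by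
    intro j hj
    have : wt S.μ S.e j k = fun _ => 1 := by
      funext z
      simp [wt, not_lt.2 hj]
    rw [this]
    exact ⟨measurable_const, 1, fun x _ => by simp⟩
  intro r
  induction r with
  | zero => intro j hj; exact base j (by omega)
  | succ r ih =>
    intro j hj
    by_cases hjk : j < k
    · have hg := ih (j + 1) (by omega)
      have e1 : wt S.μ S.e j k = fun z => (S.e (j + 1) : ℂ) *
          ∫ t, wt S.μ S.e (j + 1) k (t : ℂ) / (z - (t : ℂ)) ∂(S.μ (j + 1)) :=
        funext fun z => nk_wt_eq S.μ S.e hjk z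
      rw [e1]
      haveI := S.fin (j + 1)
      exact nk_transform (S.disj j (by omega)) (S.μ (j + 1)) (nk_compl_null S (by omega)) hg _
    · exact base j (by omega)

theorem nk_linForm_good {m : ℕ} (S : NikSys m) (A : ℕ → Polynomial ℝ) :
    NkGood (S.a 0) (S.b 0) (linForm S.μ S.e m 0 A) := by
  have hw : ∀ k ∈ Finset.Icc 0 m, NkGood (S.a 0) (S.b 0)
      (fun z => Polynomial.aeval z (A k) * wt S.μ S.e 0 k z) := by
    intro k hk
    obtain ⟨hm, C, hC⟩ := nk_wt_good S k (Finset.mem_Icc.1 hk).2 k 0 (by omega)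
    have hcont : Continuous (fun z : ℂ => Polynomial.aeval z (A k)) :=
      Polynomial.continuous_aeval (A k)
    obtain ⟨D, hD⟩ := (isCompact_Icc (a := S.a 0) (b := S.b 0)).exists_bound_of_continuousOn
      (f := fun x : ℝ => Polynomial.aeval (x : ℂ) (A k))
      (hcont.comp Complex.continuous_ofReal).continuousOn
    refine ⟨hcont.measurable.mul hm, D * C, fun x hx => ?_⟩
    rw [norm_mul]
    exact mul_le_mul (hD x hx) (hC x hx) (norm_nonneg _) ((norm_nonneg _).trans (hD x hx))
  choose! hm C hC using hw
  refine ⟨?_, ∑ k ∈ Finset.Icc 0 m, C k, fun x hx => ?_⟩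
  · unfold linForm
    exact Finset.measurable_fun_sum _ hm
  · unfold linForm
    exact norm_sum_le_of_le _ fun k hk => hC k hk x hx

theorem nk_linFormNeg_good {m : ℕ} (S : NikSys m) (F : ℂ → ℂ) (hF : NkGood (S.a 0) (S.b 0) F) :
    ∀ j ≤ m, NkGood (S.a j) (S.b j) (linFormNeg S.μ S.e F j) := by
  intro j
  induction j with
  | zero => intro _; exact hF
  | succ j ih =>
    intro hj
    haveI := S.fin j
    have hd : Set.Icc (S.a (j + 1)) (S.b (j + 1)) ∩ Set.Icc (S.a j) (S.b j) = ∅ := by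
      rw [Set.inter_comm]; exact S.disj j (by omega)
    exact nk_transform hd (S.μ j) (nk_compl_null S (by omega)) (ih (by omega)) _

theorem nk_pow_good {a b : ℝ} {f : ℂ → ℂ} (hf : NkGood a b f) (i : ℕ) :
    NkGood a b (fun z => z ^ i * f z) := by
  obtain ⟨hm, C, hC⟩ := hf
  obtain ⟨D, hD⟩ := (isCompact_Icc (a := a) (b := b)).exists_bound_of_continuousOn
      (f := fun x : ℝ => (x : ℂ) ^ i) (by fun_prop)
  refine ⟨(measurable_id.pow_const i).mul hm, D * C, fun x hx => ?_⟩
  rw [norm_mul]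
  exact mul_le_mul (hD x hx) (hC x hx) (norm_nonneg _) ((norm_nonneg _).trans (hD x hx))

theorem nk_integrable {a b : ℝ} {f : ℂ → ℂ} (hf : NkGood a b f)
    (μ : Measure ℝ) [IsFiniteMeasure μ] (hμ : ∀ᵐ x ∂μ, x ∈ Set.Icc a b) :
    Integrable (fun x : ℝ => f (x : ℂ)) μ := by
  obtain ⟨hm, C, hC⟩ := hf
  refine Integrable.of_bound (hm.comp Complex.measurable_ofReal).aestronglyMeasurable C ?_
  filter_upwards [hμ] with x hx using hC x hx

theorem nk_shift {a b c d : ℝ} (h : Set.Icc a b ∩ Set.Icc c d = ∅)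
    (μ : Measure ℝ) [IsFiniteMeasure μ] (hμ : ∀ᵐ x ∂μ, x ∈ Set.Icc c d)
    {f : ℂ → ℂ} (hf : NkGood c d f) {t : ℝ} (ht : t ∈ Set.Icc a b) :
    ∀ ν : ℕ, (∀ i < ν, ∫ x, (x : ℂ) ^ i * f (x : ℂ) ∂μ = 0) →
    (t : ℂ) ^ ν * ∫ x, f (x : ℂ) / ((t : ℂ) - (x : ℂ)) ∂μ
      = ∫ x, (x : ℂ) ^ ν * f (x : ℂ) / ((t : ℂ) - (x : ℂ)) ∂μ := by
  obtain ⟨K, hK0, hK⟩ := nk_kernel h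
  have hint : ∀ ν : ℕ, Integrable
      (fun x : ℝ => (x : ℂ) ^ ν * f (x : ℂ) / ((t : ℂ) - (x : ℂ))) μ := by
    intro ν
    obtain ⟨hm, C, hC⟩ := nk_pow_good hf ν
    refine Integrable.of_bound (C := C * K) ?_ ?_
    · exact ((hm.comp Complex.measurable_ofReal).div
        (measurable_const.sub Complex.measurable_ofReal)).aestronglyMeasurable
    · filter_upwards [hμ] with x hx
      rw [div_eq_mul_inv, norm_mul]
      exact mul_le_mul (hC x hx) (hK t ht x hx).2 (norm_nonneg _)
        ((norm_nonneg _).trans (hC x hx))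
  intro ν
  induction ν with
  | zero => intro _; simp
  | succ ν ih =>
    intro h0
    have hz := h0 ν (by omega)
    rw [pow_succ', mul_assoc, ih (fun i hi => h0 i (by omega)), ← integral_const_mul]
    have : ∫ x, (t : ℂ) * ((x : ℂ) ^ ν * f (x : ℂ) / ((t : ℂ) - (x : ℂ))) ∂μ
        = ∫ x, ((x : ℂ) ^ (ν + 1) * f (x : ℂ) / ((t : ℂ) - (x : ℂ))
            + (x : ℂ) ^ ν * f (x : ℂ)) ∂μ := by
      apply integral_congr_ae
      filter_upwards [hμ] with x hx
      have := (hK t ht x hx).1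
      field_simp
      ring
    rw [this, integral_add (hint (ν + 1)) (nk_integrable (nk_pow_good hf ν) μ hμ), hz, add_zero]

theorem nk_key {a b c d : ℝ} (h : Set.Icc a b ∩ Set.Icc c d = ∅)
    (μ l : Measure ℝ) [IsFiniteMeasure μ] [IsFiniteMeasure l]
    (hμ : ∀ᵐ x ∂μ, x ∈ Set.Icc c d) (hl : ∀ᵐ x ∂l, x ∈ Set.Icc a b)
    {f w : ℂ → ℂ} (hf : NkGood c d f) (hw : NkGood a b w) (ν : ℕ)
    (h0 : ∀ i < ν, ∫ x, (x : ℂ) ^ i * f (x : ℂ) ∂μ = 0)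
    (h1 : ∫ x, (x : ℂ) ^ ν * f (x : ℂ) * ∫ t, w (t : ℂ) / ((x : ℂ) - (t : ℂ)) ∂l ∂μ = 0) :
    ∫ t, (t : ℂ) ^ ν * (∫ x, f (x : ℂ) / ((t : ℂ) - (x : ℂ)) ∂μ) * w (t : ℂ) ∂l = 0 := by
  obtain ⟨K, hK0, hK⟩ := nk_kernel h
  have e1 : ∫ t, (t : ℂ) ^ ν * (∫ x, f (x : ℂ) / ((t : ℂ) - (x : ℂ)) ∂μ) * w (t : ℂ) ∂l
      = ∫ t, ∫ x, (x : ℂ) ^ ν * f (x : ℂ) / ((t : ℂ) - (x : ℂ)) * w (t : ℂ) ∂μ ∂l := by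
    apply integral_congr_ae
    filter_upwards [hl] with t ht
    rw [nk_shift h μ hμ hf ht ν h0, integral_mul_const]
  rw [e1, integral_integral_swap]
  · rw [← neg_eq_zero, ← integral_neg, ← h1]
    congr 1
    funext x
    rw [← integral_const_mul, ← integral_neg]
    congr 1
    funext t
    rw [← neg_sub (x : ℂ) (t : ℂ), div_neg]
    ring
  · obtain ⟨hm, C, hC⟩ := nk_pow_good hf ν
    obtain ⟨hwm, D, hD⟩ := hw
    refine Integrable.of_bound (C := C * K * D) ?_ ?_
    · apply Measurable.aestronglyMeasurable
      have m1 : Measurable (fun p : ℝ × ℝ => (p.1 : ℂ)) :=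
        Complex.measurable_ofReal.comp measurable_fst
      have m2 : Measurable (fun p : ℝ × ℝ => (p.2 : ℂ)) :=
        Complex.measurable_ofReal.comp measurable_snd
      exact ((hm.comp m2).div (m1.sub m2)).mul (hwm.comp m1)
    · have a1 : ∀ᵐ p ∂(l.prod μ), p.1 ∈ Set.Icc a b :=
        Measure.quasiMeasurePreserving_fst.ae hl
      have a2 : ∀ᵐ p ∂(l.prod μ), p.2 ∈ Set.Icc c d :=
        Measure.quasiMeasurePreserving_snd.ae hμ
      filter_upwards [a1, a2] with p hp1 hp2
      have hC0 : 0 ≤ C := (norm_nonneg _).trans (hC _ hp2)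
      simp only [Function.uncurry]
      rw [div_eq_mul_inv, norm_mul, norm_mul]
      exact mul_le_mul (mul_le_mul (hC _ hp2) (hK _ hp1 _ hp2).2 (norm_nonneg _) hC0)
        (hD _ hp1) (norm_nonneg _) (mul_nonneg hC0 hK0)

theorem nk_decr {m : ℕ} {n : ℕ → ℕ} (h : Decr m n) {j : ℕ} :
    ∀ k, j ≤ k → k ≤ m → n k ≤ n j := by
  intro k hjk
  induction k, hjk using Nat.le_induction with
  | base => intro _; exact le_rfl
  | succ k hk ih => intro hm; exact (h k (by omega)).trans (ih (by omega))

/-- Orthogonality relations of the negative-index forms: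
`∫ x^ν 𝒜_{n,-j}(x) d s²_{j,k}(x) = 0` for `k = j,…,m₂` and `ν < n_{2,k}`. -/
theorem orthogonality_of_negative_forms
    (m₁ m₂ : ℕ) (S1 : NikSys m₁) (S2 : NikSys m₂)
    (hbase : S1.μ 0 = S2.μ 0 ∧ S1.e 0 = S2.e 0)
    (n1 n2 : ℕ → ℕ) (h1 : Decr m₁ n1) (h2 : Decr m₂ n2)
    (hsum : msum m₂ n2 + 1 = msum m₁ n1) (hlast : 1 ≤ n1 m₁)
    (A : ℕ → Polynomial ℝ)
    (hA : IsMOP m₁ m₂ S1 S2 n1 n2 A) (hAm : MonicLast m₁ A) :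
    ∀ j ≤ m₂, ∀ k, j ≤ k → k ≤ m₂ → ∀ ν < n2 k,
      sInt S2.μ S2.e j k (fun x => (x : ℂ) ^ ν *
        linFormNeg S2.μ S2.e (linForm S1.μ S1.e m₁ 0 A) j (x : ℂ)) = 0 := by
  intro j
  have hI : Set.Icc (S1.a 0) (S1.b 0) = Set.Icc (S2.a 0) (S2.b 0) := by
    rw [← S1.hull 0 (Nat.zero_le _), ← S2.hull 0 (Nat.zero_le _), hbase.1]
  have hF : NkGood (S2.a 0) (S2.b 0) (linForm S1.μ S1.e m₁ 0 A) := by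
    have := nk_linForm_good S1 A
    unfold NkGood at this ⊢
    rwa [hI] at this
  set F := linForm S1.μ S1.e m₁ 0 A with hFdef
  have he : ∀ j, (S2.e j : ℂ) ≠ 0 := by
    intro j
    rcases S2.sgn j with h | h <;> simp [h]
  induction j with
  | zero =>
    intro _ k _ hk ν hν
    exact hA.2.2 k hk ν hν
  | succ j ih =>
    intro hj k hjk hk ν hν
    haveI := S2.fin j
    haveI := S2.fin (j + 1)
    have hd : Set.Icc (S2.a (j + 1)) (S2.b (j + 1)) ∩ Set.Icc (S2.a j) (S2.b j) = ∅ := by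
      rw [Set.inter_comm]; exact S2.disj j (by omega)
    have hf := nk_linFormNeg_good S2 F hF j (by omega)
    have hw := nk_wt_good S2 k hk k (j + 1) (by omega)
    have h0 : ∀ i < ν, ∫ x, (x : ℂ) ^ i * linFormNeg S2.μ S2.e F j (x : ℂ) ∂(S2.μ j) = 0 := by
      intro i hi
      have := ih (by omega) j le_rfl (by omega) i
        (lt_of_lt_of_le (hi.trans hν) (nk_decr h2 k (by omega) hk))
      unfold sInt at this
      simpa [wt, he j] using this
    have hv : ∫ x, (x : ℂ) ^ ν * linFormNeg S2.μ S2.e F j (x : ℂ) *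
        ∫ t, wt S2.μ S2.e (j + 1) k (t : ℂ) / ((x : ℂ) - (t : ℂ)) ∂(S2.μ (j + 1))
          ∂(S2.μ j) = 0 := by
      have := ih (by omega) k (by omega) hk ν hν
      unfold sInt at this
      have this := (mul_eq_zero.1 this).resolve_left (he j)
      simp only [nk_wt_eq S2.μ S2.e (show j < k by omega)] at this
      simp only [mul_left_comm _ (S2.e (j + 1) : ℂ)] at this
      rw [integral_const_mul] at this
      exact (mul_eq_zero.1 this).resolve_left (he (j + 1))
    have key := nk_key hd (S2.μ j) (S2.μ (j + 1)) (nk_compl_null S2 (by omega))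
      (nk_compl_null S2 (by omega)) hf hw ν h0 hv
    unfold sInt
    simp only [linFormNeg]
    simp only [mul_left_comm _ (S2.e j : ℂ), mul_assoc (S2.e j : ℂ)]
    rw [integral_const_mul, key]
    simp

end
end

section
/- Let n and n^l both lie in ℤ₊^{m₁+1}(•) × ℤ₊^{m₂+1}(•) with n_{1,m₁} ≥ 1, let A,B ∈ ℝ with |A| + |B| > 0, and set G_{n,j} = A·A_{n,j} + B·A_{n^l,j}. Then for every j ∈ {0,…,m₁} with n_{1,j} ≥ 2, the polynomial A·a_{n,j} + B·a_{n^l,j} has degree ≥ n_{1,j} − 2, and G_{n,j} is not identically zero. -/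
open MeasureTheory Polynomial Set Filter

noncomputable section

/-- constant strict sign of `f` on `J` -/
def CS (J : Set ℝ) (f : ℝ → ℝ) : Prop := ∃ ε : ℝ, ∀ x ∈ J, 0 < ε * f x

lemma CS.mul {J : Set ℝ} {f g : ℝ → ℝ} (hf : CS J f) (hg : CS J g) : CS J (fun x => f x * g x) := by
  obtain ⟨e, he⟩ := hf
  obtain ⟨d, hd⟩ := hg
  refine ⟨e * d, fun x hx => ?_⟩
  have := mul_pos (he x hx) (hd x hx)
  nlinarith

lemma CS.inv {J : Set ℝ} {f : ℝ → ℝ} (hf : CS J f) : CS J (fun x => (f x)⁻¹) := by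
  obtain ⟨e, he⟩ := hf
  refine ⟨e⁻¹, fun x hx => ?_⟩
  rw [← mul_inv]
  exact inv_pos.2 (he x hx)

lemma CS.mono {J K : Set ℝ} {f : ℝ → ℝ} (hf : CS J f) (h : K ⊆ J) : CS K f := by
  obtain ⟨e, he⟩ := hf
  exact ⟨e, fun x hx => he x (h hx)⟩

lemma CS.ne {J : Set ℝ} {f : ℝ → ℝ} (hf : CS J f) {x : ℝ} (h : x ∈ J) : f x ≠ 0 := by
  obtain ⟨e, he⟩ := hf
  intro h0
  have := he x h
  simp [h0] at this

lemma cs_of_cont {J : Set ℝ} (hJ : J.OrdConnected) {f : ℝ → ℝ} (hf : ContinuousOn f J)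
    (h0 : ∀ x ∈ J, f x ≠ 0) : ∃ ε : ℝ, (ε = 1 ∨ ε = -1) ∧ ∀ x ∈ J, 0 < ε * f x := by
  by_cases h : ∃ x ∈ J, 0 < f x
  · obtain ⟨x, hx, hpos⟩ := h
    refine ⟨1, Or.inl rfl, fun y hy => ?_⟩
    by_contra hc
    have hy0 : f y ≤ 0 := by linarith
    have := hJ.isPreconnected.intermediate_value hy hx hf
    obtain ⟨z, hz, hz0⟩ := this (show (0:ℝ) ∈ Icc (f y) (f x) from ⟨hy0, hpos.le⟩)
    exact h0 z hz hz0
  · push Not at h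
    refine ⟨-1, Or.inr rfl, fun y hy => ?_⟩
    have := lt_of_le_of_ne (h y hy) (h0 y hy)
    linarith

lemma cs_of_cont' {J : Set ℝ} (hJ : J.OrdConnected) {f : ℝ → ℝ} (hf : ContinuousOn f J)
    (h0 : ∀ x ∈ J, f x ≠ 0) : CS J f := by
  obtain ⟨e, -, he⟩ := cs_of_cont hJ hf h0
  exact ⟨e, he⟩

/-- the monic polynomial function with simple zeros at `S` -/
def qq (S : Finset ℝ) (x : ℝ) : ℝ := ∏ z ∈ S, (x - z)

lemma qq_cont (S : Finset ℝ) : Continuous (qq S) := by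
  unfold qq; fun_prop

lemma qq_ne {S : Finset ℝ} {x : ℝ} (h : x ∉ S) : qq S x ≠ 0 := by
  unfold qq
  refine Finset.prod_ne_zero_iff.2 fun z hz h0 => h ?_
  have : x = z := by linarith
  rwa [this]

lemma signLemma (Z : Finset ℝ) : ∀ (J : Set ℝ), J.OrdConnected → ∀ f : ℝ → ℝ, ContinuousOn f J →
    (∀ x ∈ J, f x = 0 → x ∈ Z) → ∃ S ⊆ Z, ∃ ε : ℝ, (ε = 1 ∨ ε = -1) ∧
      ∀ x ∈ J, 0 ≤ ε * (f x * qq S x) := by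
  induction Z using Finset.induction_on_max with
  | empty =>
    intro J hJ f hf h0
    obtain ⟨e, he, h⟩ := cs_of_cont hJ hf (fun x hx h => by simpa using h0 x hx h)
    exact ⟨∅, by simp, e, he, fun x hx => by simpa [qq] using (h x hx).le⟩
  | insert z Z hz ih =>
    intro J hJ f hf h0
    obtain ⟨S, hS, e, he, h⟩ := ih (J ∩ Iio z) (hJ.inter ordConnected_Iio) f
      (hf.mono inter_subset_left) (fun x hx h => by
        rcases Finset.mem_insert.1 (h0 x hx.1 h) with h | h
        · exact absurd h (ne_of_lt hx.2)
        · exact h)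
    obtain ⟨d, hd, h'⟩ := cs_of_cont (hJ.inter (ordConnected_Ioi (a := z))) (hf.mono inter_subset_left)
      (fun x hx h => by
        rcases Finset.mem_insert.1 (h0 x hx.1 h) with h | h
        · exact absurd h (ne_of_gt hx.2)
        · exact absurd (hz x h) (not_lt.2 (le_of_lt hx.2)))
    have hzS : z ∉ S := fun h => lt_irrefl _ (hz z (hS h))
    have hpos : ∀ x, z ≤ x → 0 < qq S x := fun x hx =>
      Finset.prod_pos fun y hy => by linarith [hz y (hS hy)]
    have hins : ∀ x, qq (insert z S) x = (x - z) * qq S x := fun x => by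
      unfold qq; rw [Finset.prod_insert hzS]
    by_cases hfz : z ∈ J ∧ f z ≠ 0
    · -- no zero at `z`
      obtain ⟨S, hS, e, he, h⟩ := ih J hJ f hf (fun x hx h2 => by
        rcases Finset.mem_insert.1 (h0 x hx h2) with h1 | h1
        · subst h1; exact absurd h2 hfz.2
        · exact h1)
      exact ⟨S, hS.trans (Finset.subset_insert _ _), e, he, h⟩
    by_cases hed : e = d
    · refine ⟨S, hS.trans (Finset.subset_insert _ _), e, he, fun x hx => ?_⟩
      rcases lt_trichotomy x z with hxz | hxz | hxz
      · exact h x ⟨hx, hxz⟩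
      · push Not at hfz
        subst hxz; simp [hfz hx]
      · have := h' x ⟨hx, hxz⟩
        have h2 := hpos x hxz.le
        rw [hed, ← mul_assoc]; positivity
    · refine ⟨insert z S, Finset.insert_subset_insert _ hS, d, hd, fun x hx => ?_⟩
      have hed' : d = -e := by rcases he with rfl | rfl <;> rcases hd with rfl | rfl <;> simp_all
      rw [hins]
      rcases lt_trichotomy x z with hxz | hxz | hxz
      · have := h x ⟨hx, hxz⟩
        have : 0 ≤ (e * (f x * qq S x)) * (z - x) := mul_nonneg this (by linarith)
        rw [hed']; linarith
      · subst hxz; simp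
      · have := h' x ⟨hx, hxz⟩
        have h2 := hpos x hxz.le
        have h3 : 0 ≤ (d * f x) * (qq S x * (x - z)) := by
          have : 0 < x - z := by linarith
          positivity
        linarith

/-- Haar (Chebyshev) family on `J`. -/
def Haar {ι : Type} [Fintype ι] (ψ : ι → ℝ → ℝ) (J : Set ℝ) : Prop :=
  (∀ i, ContinuousOn (ψ i) J) ∧ ∀ c : ι → ℝ, ∀ T : Finset ℝ, (↑T ⊆ J) → Fintype.card ι ≤ T.card →
    (∀ x ∈ T, ∑ i, c i * ψ i x = 0) → c = 0

lemma Haar.interp {ι : Type} [Fintype ι] {ψ : ι → ℝ → ℝ} {J : Set ℝ} (h : Haar ψ J)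
    (T : Finset ℝ) (hT : ↑T ⊆ J) (hc : T.card = Fintype.card ι) (y : ℝ → ℝ) :
    ∃ c : ι → ℝ, ∀ x ∈ T, ∑ i, c i * ψ i x = y x := by
  let M : (ι → ℝ) →ₗ[ℝ] (T → ℝ) :=
    { toFun := fun c x => ∑ i, c i * ψ i x
      map_add' := fun c d => by
        ext x; simp [add_mul, Finset.sum_add_distrib]
      map_smul' := fun r c => by
        ext x; simp [Finset.mul_sum, mul_assoc] }
  have hinj : Function.Injective M := by
    rw [injective_iff_map_eq_zero]
    intro c hc0
    exact h.2 c T hT hc.ge (fun x hx => congrFun hc0 ⟨x, hx⟩)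
  have hsurj := (LinearMap.injective_iff_surjective_of_finrank_eq_finrank
    (by simp [hc]) (f := M)).1 hinj
  obtain ⟨c, hc⟩ := hsurj (fun x => y x)
  exact ⟨c, fun x hx => congrFun hc ⟨x, hx⟩⟩

/-- a member of a Haar family with `K-1` prescribed zeros changes sign exactly there -/
lemma Haar.sign {ι : Type} [Fintype ι] {ψ : ι → ℝ → ℝ} {a b : ℝ} (hab : a < b) (h : Haar ψ (Icc a b))
    (Z : Finset ℝ) (hZ : ↑Z ⊆ Ioo a b) (hc : Z.card + 1 = Fintype.card ι) :
    ∃ c : ι → ℝ, (∀ x ∈ Icc a b, ∑ i, c i * ψ i x = 0 → x ∈ Z) ∧ ∃ ε : ℝ,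
      ∀ x ∈ Icc a b, 0 ≤ ε * ((∑ i, c i * ψ i x) * qq Z x) ∧ ε ≠ 0 := by
  have haZ : a ∉ Z := fun h => lt_irrefl _ (hZ h).1
  obtain ⟨c, hcz⟩ := h.interp (insert a Z) (by
    intro x hx
    rcases Finset.mem_insert.1 (Finset.mem_coe.1 hx) with rfl | hx
    · exact ⟨le_rfl, hab.le⟩
    · exact Ioo_subset_Icc_self (hZ hx)) (by rw [Finset.card_insert_of_notMem haZ, hc])
    (fun x => if x = a then 1 else 0)
  have hFa : ∑ i, c i * ψ i a = 1 := by simpa using hcz a (Finset.mem_insert_self _ _)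
  have hFZ : ∀ x ∈ Z, ∑ i, c i * ψ i x = 0 := fun x hx => by
    rw [hcz x (Finset.mem_insert_of_mem hx), if_neg]
    rintro rfl; exact haZ hx
  have hcont : ∀ c : ι → ℝ, ContinuousOn (fun x => ∑ i, c i * ψ i x) (Icc a b) := fun c =>
    continuousOn_finsetSum _ fun i _ => continuousOn_const.mul (h.1 i)
  have hZ' : (↑Z : Set ℝ) ⊆ Icc a b := hZ.trans Ioo_subset_Icc_self
  have hzero : ∀ x ∈ Icc a b, ∑ i, c i * ψ i x = 0 → x ∈ Z := by
    intro x hx h0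
    by_contra hxZ
    have := h.2 c (insert x Z) (by
      intro y hy
      rcases Finset.mem_insert.1 (Finset.mem_coe.1 hy) with rfl | hy
      · exact hx
      · exact hZ' hy) (by rw [Finset.card_insert_of_notMem hxZ, hc]) (by
      intro y hy
      rcases Finset.mem_insert.1 hy with rfl | hy
      · exact h0
      · exact hFZ y hy)
    simp [this] at hFa
  refine ⟨c, hzero, ?_⟩
  obtain ⟨S, hS, e, he, hsg⟩ := signLemma Z (Icc a b) ordConnected_Icc _ (hcont c) hzero
  have he0 : e ≠ 0 := by rcases he with rfl | rfl <;> norm_num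
  suffices hSZ : S = Z by
    subst hSZ
    exact ⟨e, fun x hx => ⟨hsg x hx, he0⟩⟩
  by_contra hne
  obtain ⟨z, hzZ, hzS⟩ : ∃ z ∈ Z, z ∉ S := by
    by_contra hcon
    push Not at hcon
    exact hne (Finset.Subset.antisymm hS hcon)
  have hz := hZ hzZ
  -- perturbation direction
  obtain ⟨d, hd⟩ := h.interp (insert a Z) (by
    intro x hx
    rcases Finset.mem_insert.1 (Finset.mem_coe.1 hx) with rfl | hx
    · exact ⟨le_rfl, hab.le⟩
    · exact Ioo_subset_Icc_self (hZ hx)) (by rw [Finset.card_insert_of_notMem haZ, hc])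
    (fun x => if x = z then e * qq S z else 0)
  have hdz : ∑ i, d i * ψ i z = e * qq S z := by
    simpa using hd z (Finset.mem_insert_of_mem hzZ)
  have hdZ : ∀ x ∈ Z, x ≠ z → ∑ i, d i * ψ i x = 0 := fun x hx hxz => by
    rw [hd x (Finset.mem_insert_of_mem hx), if_neg hxz]
  -- two nearby points
  obtain ⟨u, v, hu, hv, hau, hvb, hnear⟩ : ∃ u v, u < z ∧ z < v ∧ a ≤ u ∧ v ≤ b ∧
      ∀ x ∈ Icc u v, x ∈ Z → x = z := by
    have hop : IsOpen ((↑(Z.erase z) : Set ℝ)ᶜ ∩ Ioo a b) :=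
      (Finset.finite_toSet _).isClosed.isOpen_compl.inter isOpen_Ioo
    have hmem : z ∈ ((↑(Z.erase z) : Set ℝ)ᶜ ∩ Ioo a b) := ⟨by simp, hz⟩
    obtain ⟨r, hr, hball⟩ := Metric.isOpen_iff.1 hop z hmem
    have hin : ∀ x ∈ Icc (z - r/2) (z + r/2), x ∈ ((↑(Z.erase z) : Set ℝ)ᶜ ∩ Ioo a b) := by
      intro x hx
      apply hball
      rw [Metric.mem_ball, Real.dist_eq, abs_lt]
      constructor <;> linarith [hx.1, hx.2]
    refine ⟨z - r/2, z + r/2, by linarith, by linarith,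
      (hin _ ⟨le_rfl, by linarith⟩).2.1.le, (hin _ ⟨by linarith, le_rfl⟩).2.2.le, ?_⟩
    intro x hx hxZ
    by_contra hxz
    exact (hin x hx).1 (by simp [hxZ, hxz])
  set F : ℝ → ℝ := fun x => ∑ i, c i * ψ i x with hF
  set E : ℝ → ℝ := fun x => ∑ i, d i * ψ i x with hE
  have hposF : ∀ x ∈ Icc a b, x ∉ Z → 0 < e * (F x * qq S x) := by
    intro x hx hxZ
    refine lt_of_le_of_ne (hsg x hx) (Ne.symm ?_)
    refine mul_ne_zero he0 (mul_ne_zero (fun h0 => hxZ (hzero x hx h0)) (qq_ne (fun h0 => hxZ (hS h0))))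
  have huI : u ∈ Icc a b := ⟨hau, by linarith⟩
  have hvI : v ∈ Icc a b := ⟨by linarith, hvb⟩
  have huZ : u ∉ Z := fun h0 => hu.ne (hnear u ⟨le_rfl, by linarith⟩ h0)
  have hvZ : v ∉ Z := fun h0 => hv.ne' (hnear v ⟨by linarith, le_rfl⟩ h0)
  have hpu := hposF u huI huZ
  have hpv := hposF v hvI hvZ
  obtain ⟨δ, hδ, hδu, hδv⟩ : ∃ δ : ℝ, 0 < δ ∧ 0 < e * ((F u - δ * E u) * qq S u) ∧
      0 < e * ((F v - δ * E v) * qq S v) := by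
    have h1 : ∀ p : ℝ, 0 < e * (F p * qq S p) →
        ∀ᶠ δ in nhdsWithin (0:ℝ) (Ioi 0), 0 < e * ((F p - δ * E p) * qq S p) := by
      intro p hp
      have hct : Continuous (fun δ : ℝ => e * ((F p - δ * E p) * qq S p)) := by fun_prop
      have := hct.tendsto 0
      simp only [zero_mul, sub_zero] at this
      exact ((tendsto_order.1 this).1 0 hp).filter_mono nhdsWithin_le_nhds
    obtain ⟨δ, h⟩ := ((h1 u hpu).and ((h1 v hpv).and self_mem_nhdsWithin)).exists
    exact ⟨δ, h.2.2, h.1, h.2.1⟩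
  set g : ℝ → ℝ := fun x => e * ((F x - δ * E x) * qq S x) with hg
  have hgc : ContinuousOn g (Icc a b) :=
    continuousOn_const.mul (((hcont c).sub (continuousOn_const.mul (hcont d))).mul
      (qq_cont S).continuousOn)
  have hgz : g z < 0 := by
    have h1 : F z = 0 := hFZ z hzZ
    have h2 : E z = e * qq S z := hdz
    have h3 : g z = - (δ * (e * qq S z)^2) := by simp only [hg, h1, h2]; ring
    rw [h3]
    have := qq_ne hzS
    have : 0 < δ * (e * qq S z)^2 := by positivity
    linarith
  obtain ⟨x1, hx1, hx10⟩ : ∃ x ∈ Icc u z, g x = 0 :=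
    intermediate_value_Icc' hu.le (hgc.mono (Icc_subset_Icc hau hz.2.le)) ⟨hgz.le, hδu.le⟩
  obtain ⟨x2, hx2, hx20⟩ : ∃ x ∈ Icc z v, g x = 0 :=
    intermediate_value_Icc hv.le (hgc.mono (Icc_subset_Icc hz.1.le hvb)) ⟨hgz.le, hδv.le⟩
  have hx1z : x1 ≠ z := by rintro rfl; linarith
  have hx2z : x2 ≠ z := by rintro rfl; linarith
  have hx1Z : x1 ∉ Z := fun h0 => hx1z (hnear x1 ⟨hx1.1, by linarith [hx1.2]⟩ h0)
  have hx2Z : x2 ∉ Z := fun h0 => hx2z (hnear x2 ⟨by linarith [hx2.1], hx2.2⟩ h0)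
  have h12 : x1 ≠ x2 := by
    intro h0
    apply hx1z
    apply le_antisymm hx1.2
    rw [h0]; exact hx2.1
  have hform : ∀ x, ∑ i, (c i - δ * d i) * ψ i x = F x - δ * E x := by
    intro x
    simp only [hF, hE, Finset.mul_sum, ← Finset.sum_sub_distrib]
    exact Finset.sum_congr rfl fun i _ => by ring
  have hg0 : ∀ x, x ∉ Z → g x = 0 → F x - δ * E x = 0 := by
    intro x hxZ h0
    simp only [hg] at h0
    have := qq_ne (fun h => hxZ (hS h))
    rcases mul_eq_zero.1 h0 with h | h
    · exact absurd h he0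
    · rcases mul_eq_zero.1 h with h | h
      · exact h
      · exact absurd h this
  have hz0 := h.2 (fun i => c i - δ * d i) (insert x1 (insert x2 (Z.erase z))) (by
      intro y hy
      simp only [Finset.coe_insert, mem_insert_iff, Finset.mem_coe, Finset.mem_erase] at hy
      rcases hy with rfl | rfl | hy
      · exact ⟨by linarith [hx1.1], by linarith [hx1.2, hz.2]⟩
      · exact ⟨by linarith [hx2.1, hz.1], by linarith [hx2.2]⟩
      · exact hZ' hy.2) (by
      rw [Finset.card_insert_of_notMem, Finset.card_insert_of_notMem, Finset.card_erase_of_mem hzZ]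
      · omega
      · simp [hx2Z]
      · simp [hx1Z, h12]) (by
      intro y hy
      rw [hform]
      simp only [Finset.mem_insert, Finset.mem_erase] at hy
      rcases hy with rfl | rfl | hy
      · exact hg0 _ hx1Z hx10
      · exact hg0 _ hx2Z hx20
      · have h1 : F y = 0 := hFZ y hy.2
        have h2 : E y = 0 := hdZ y hy.2 hy.1
        rw [h1, h2]; ring)
  have h1 := hform z
  have hz00 : ∀ i, c i - δ * d i = 0 := fun i => congrFun hz0 i
  simp only [hz00, zero_mul, Finset.sum_const_zero] at h1
  have h2 : g z = 0 := by simp only [hg, ← h1]; ring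
  linarith

/-- Orthogonality to a Haar family forces zeros. -/
lemma Haar.zeros {ι : Type} [Fintype ι] {ψ : ι → ℝ → ℝ} {a b a' b' : ℝ} (h : Haar ψ (Icc a' b'))
    (ha : a' < a) (hb : b < b') (s : Finset ℝ) (hs : ↑s ⊆ Icc a b) (hcard : Fintype.card ι ≤ s.card)
    (w : ℝ → ℝ) (hw : CS ↑s w) (f : ℝ → ℝ) (hf : ContinuousOn f (Icc a b))
    (horth : ∀ i, ∑ t ∈ s, w t * (f t * ψ i t) = 0) :
    ∃ Z : Finset ℝ, ↑Z ⊆ Icc a b ∧ Z.card = Fintype.card ι ∧ ∀ x ∈ Z, f x = 0 := by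
  classical
  by_contra hcon
  have hab : a ≤ b ∨ Fintype.card ι = 0 := by
    rcases Nat.eq_zero_or_pos (Fintype.card ι) with h | h
    · exact Or.inr h
    · left
      obtain ⟨x, hx⟩ := Finset.card_pos.1 (lt_of_lt_of_le h hcard)
      exact (hs hx).1.trans (hs hx).2
  rcases hab with hab | h0
  swap
  · exact hcon ⟨∅, by simp, by simp [h0], by simp⟩
  set Zs : Set ℝ := {x | x ∈ Icc a b ∧ f x = 0} with hZs
  have hsub : ∀ T : Finset ℝ, (↑T ⊆ Zs) → T.card < Fintype.card ι := by
    intro T hT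
    by_contra hlt
    obtain ⟨T', hT', hcT⟩ := Finset.exists_subset_card_eq (not_lt.1 hlt)
    exact hcon ⟨T', fun x hx => (hT (hT' hx)).1, hcT, fun x hx => (hT (hT' hx)).2⟩
  have hfin : Zs.Finite := by
    by_contra hinf
    obtain ⟨T, hT, hc⟩ := Set.Infinite.exists_subset_card_eq hinf (Fintype.card ι)
    have := hsub T hT
    omega
  set Z := hfin.toFinset with hZdef
  have hZmem : ∀ x, x ∈ Z ↔ x ∈ Icc a b ∧ f x = 0 := by
    intro x; rw [hZdef, Set.Finite.mem_toFinset]; rfl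
  have hZc : Z.card < Fintype.card ι := hsub Z (fun x hx => (hZmem x).1 hx)
  obtain ⟨S, hS, e, he, hsg⟩ := signLemma Z (Icc a b) ordConnected_Icc f hf
    (fun x hx h0 => (hZmem x).2 ⟨hx, h0⟩)
  have he0 : e ≠ 0 := by rcases he with rfl | rfl <;> norm_num
  obtain ⟨E, hE, hEc⟩ := (Ioo_infinite hb).exists_subset_card_eq (Fintype.card ι - 1 - S.card)
  have hSc := Finset.card_le_card hS
  have hdisj : Disjoint S E := by
    rw [Finset.disjoint_left]
    intro x hx hxE
    have h1 := ((hZmem x).1 (hS hx)).1.2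
    have h2 := (hE hxE).1
    linarith
  obtain ⟨c, hcz, d, hd⟩ := h.sign (by linarith) (S ∪ E) (by
    intro x hx
    rcases Finset.mem_union.1 (Finset.mem_coe.1 hx) with hx | hx
    · have := ((hZmem x).1 (hS hx)).1
      exact ⟨by linarith [this.1], by linarith [this.2]⟩
    · have := hE hx
      exact ⟨by linarith [this.1], this.2⟩) (by
    rw [Finset.card_union_of_disjoint hdisj]; omega)
  have hIcc : Icc a b ⊆ Icc a' b' := Icc_subset_Icc ha.le hb.le
  have hd0 : d ≠ 0 := (hd a (hIcc ⟨le_rfl, hab⟩)).2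
  obtain ⟨r, hr⟩ : CS (Icc a b) (qq E) := cs_of_cont' ordConnected_Icc (qq_cont E).continuousOn
    (fun x hx => qq_ne (fun h0 => by linarith [(hE h0).1, hx.2]))
  obtain ⟨p, hp⟩ := hw
  set F : ℝ → ℝ := fun x => ∑ i, c i * ψ i x with hF
  have hqU : ∀ x, qq (S ∪ E) x = qq S x * qq E x := fun x => by
    unfold qq; rw [Finset.prod_union hdisj]
  have hmain : ∀ t ∈ s, 0 ≤ (p * e * d * r) * (w t * (f t * F t)) := by
    intro t ht
    by_cases htS : t ∈ S
    · have := ((hZmem t).1 (hS htS)).2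
      simp [this]
    have h1 := hsg t (hs ht)
    have h2 := (hd t (hIcc (hs ht))).1
    have h3 := hr t (hs ht)
    have h4 := hp t ht
    rw [hqU] at h2
    have hq := qq_ne htS
    have hqe : qq E t ≠ 0 := qq_ne (fun h0 => by linarith [(hE h0).1, (hs ht).2])
    have h5 : 0 ≤ ((e * (f t * qq S t)) * (d * (F t * (qq S t * qq E t)))) * ((r * qq E t) * (p * w t)) := by
      positivity
    have h6 : ((e * (f t * qq S t)) * (d * (F t * (qq S t * qq E t)))) * ((r * qq E t) * (p * w t)) =
      ((p * e * d * r) * (w t * (f t * F t))) * (qq S t * qq E t)^2 := by ring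
    rw [h6] at h5
    have h7 : 0 < (qq S t * qq E t)^2 := by positivity
    exact nonneg_of_mul_nonneg_left h5 h7
  have hsum : ∑ t ∈ s, (p * e * d * r) * (w t * (f t * F t)) = 0 := by
    rw [← Finset.mul_sum]
    have : ∑ t ∈ s, w t * (f t * F t) = ∑ i, c i * ∑ t ∈ s, w t * (f t * ψ i t) := by
      simp only [hF, Finset.mul_sum]
      rw [Finset.sum_comm]
      exact Finset.sum_congr rfl fun i _ => Finset.sum_congr rfl fun t _ => by ring
    rw [this]
    simp [horth]
  have hall := (Finset.sum_eq_zero_iff_of_nonneg hmain).1 hsum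
  have hsZ : s ⊆ Z := by
    intro t ht
    have h1 := hall t ht
    have hr0 : r ≠ 0 := by
      rintro rfl
      have := hr t (hs ht); simp at this
    have hp0 : p ≠ 0 := by
      rintro rfl
      have := hp t ht; simp at this
    have hw0 : w t ≠ 0 := by
      intro h0
      have := hp t ht; simp [h0] at this
    have h2 : f t * F t = 0 := by
      rcases mul_eq_zero.1 h1 with h | h
      · exact absurd h (by positivity)
      · exact (mul_eq_zero.1 h).resolve_left hw0
    rcases mul_eq_zero.1 h2 with h3 | h3
    · exact (hZmem t).2 ⟨hs ht, h3⟩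
    · rcases Finset.mem_union.1 (hcz t (hIcc (hs ht)) h3) with h4 | h4
      · exact hS h4
      · linarith [(hE h4).1, (hs ht).2]
  have := Finset.card_le_card hsZ
  omega

lemma deg_C_mul_le (c : ℝ) (p : ℝ[X]) : (C c * p).degree ≤ p.degree := by
  rw [← smul_eq_C_mul]; exact degree_smul_le c p

/-- derivative of the nodal polynomial at a node -/
def qd (S : Finset ℝ) (x : ℝ) : ℝ := qq (S.erase x) x

lemma qd_ne (S : Finset ℝ) (x : ℝ) : qd S x ≠ 0 := qq_ne (by simp)

lemma nodal_eval (S : Finset ℝ) (x : ℝ) : (Lagrange.nodal S id).eval x = qq S x := by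
  rw [Lagrange.eval_nodal]; rfl

lemma qq_erase {S : Finset ℝ} {y : ℝ} (h : y ∈ S) (x : ℝ) : qq S x = (x - y) * qq (S.erase y) x := by
  unfold qq; rw [Finset.mul_prod_erase S (fun z => x - z) h]

lemma lagr1 (S : Finset ℝ) (R : ℝ[X]) (hR : R.degree < S.card) (y : ℝ) (hy : y ∉ S) :
    ∑ x ∈ S, R.eval x / (qd S x * (y - x)) = R.eval y / qq S y := by
  have h1 := Lagrange.eq_interpolate (s := S) (v := id) (f := R) (Function.injective_id.injOn) hR
  have h2 := Lagrange.eval_interpolate_not_at_node (s := S) (v := id) (x := y) (fun i => R.eval i)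
    (fun i hi h => hy (by simpa [h] using hi))
  have h3 : R.eval y = (Lagrange.interpolate S id (fun i => R.eval i)).eval y := by
    conv_lhs => rw [h1]
    rfl
  rw [h3, h2, nodal_eval, mul_div_cancel_left₀ _ (qq_ne hy)]
  refine Finset.sum_congr rfl fun x hx => ?_
  rw [Lagrange.nodalWeight, qd, qq, Finset.prod_inv_distrib]
  simp only [id]
  rw [div_eq_mul_inv, mul_inv]; ring

lemma lagr2 (S : Finset ℝ) (R : ℝ[X]) (hR : R.natDegree + 1 < S.card) :
    ∑ x ∈ S, R.eval x / qd S x = 0 := by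
  have h1 := Lagrange.coeff_eq_sum (s := S) (v := id) (P := R) (Function.injective_id.injOn)
    (lt_of_le_of_lt degree_le_natDegree (by exact_mod_cast (by omega : R.natDegree < S.card)))
  rw [coeff_eq_zero_of_natDegree_lt (by omega)] at h1
  rw [h1]
  rfl

lemma natDegree_lt_of {p : ℝ[X]} {n : ℕ} (h0 : p ≠ 0) (h : p.degree < n) : p.natDegree < n := by
  rwa [natDegree_lt_iff_degree_lt h0]

lemma poly_zero_of {p : ℝ[X]} {n : ℕ} (h : p.degree < n) (T : Finset ℝ) (hT : n ≤ T.card)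
    (h0 : ∀ x ∈ T, p.eval x = 0) : p = 0 :=
  Polynomial.eq_zero_of_degree_lt_of_eval_finset_eq_zero T
    (lt_of_lt_of_le h (by exact_mod_cast hT)) h0

lemma haar_poly (K : ℕ) (J : Set ℝ) : Haar (fun (i : Fin K) (x : ℝ) => x ^ (i : ℕ)) J := by
  refine ⟨fun i => by fun_prop, fun c T _ hT h0 => ?_⟩
  simp only [Fintype.card_fin] at hT
  set p : ℝ[X] := ∑ i : Fin K, C (c i) * X ^ (i : ℕ) with hp
  have hdeg : p.degree < K := by
    refine (degree_sum_le _ _).trans_lt ?_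
    rw [Finset.sup_lt_iff (by exact WithBot.bot_lt_coe K)]
    intro i _
    exact lt_of_le_of_lt (degree_C_mul_X_pow_le _ _) (by exact_mod_cast i.2)
  have hp0 : p = 0 := poly_zero_of hdeg T hT (fun x hx => by
    rw [← h0 x hx, hp, eval_finsetSum]; simp)
  funext i
  have h1 : p.coeff i = c i := by
    rw [hp, finsetSum_coeff]
    simp only [coeff_C_mul, coeff_X_pow]
    rw [Finset.sum_eq_single i]
    · simp
    · intro j _ hj
      rw [if_neg, mul_zero]
      exact fun h => hj (Fin.ext h.symm)
    · simp
  rw [← h1, hp0]; simp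

lemma poly_zeros {a b : ℝ} (K : ℕ) (s : Finset ℝ) (hs : ↑s ⊆ Icc a b) (hcard : K ≤ s.card)
    (w : ℝ → ℝ) (hw : CS ↑s w) (f : ℝ → ℝ) (hf : ContinuousOn f (Icc a b))
    (horth : ∀ R : ℝ[X], R.degree < K → ∑ t ∈ s, w t * (f t * R.eval t) = 0) :
    ∃ Z : Finset ℝ, ↑Z ⊆ Icc a b ∧ Z.card = K ∧ ∀ x ∈ Z, f x = 0 := by
  have := (haar_poly K (Icc (a-1) (b+1))).zeros (a := a) (b := b) (by linarith) (by linarith) s hs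
    (by simpa using hcard) w hw f hf (fun i => by
      have := horth (X ^ (i : ℕ)) (by rw [degree_X_pow]; exact_mod_cast i.2)
      simpa using this)
  simpa using this

lemma step (T s : Finset ℝ) (hTs : ∀ x ∈ T, ∀ y ∈ s, x ≠ y) (v : ℝ → ℝ) (P : ℝ[X]) (m : ℕ)
    (h : ℕ → ℝ[X]) (ω : ℕ → ℝ → ℝ) (d K : ℕ) (hP : P.degree < d)
    (hh : ∀ k < m, (h k).degree < ((d + 1 : ℕ) : WithBot ℕ))
    (h0 : ∀ x ∈ T, P.eval x + ∑ y ∈ s, v y / (x - y) * ∑ k ∈ Finset.range m, (h k).eval x * ω k y = 0)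
    (hK : K + d ≤ T.card) (R : ℝ[X]) (hR : R.degree < K) :
    ∑ y ∈ s, (v y * (qq T y)⁻¹) * ((∑ k ∈ Finset.range m, (h k).eval y * ω k y) * R.eval y) = 0 := by
  by_cases hR0 : R = 0
  · simp [hR0]
  have hRn := natDegree_lt_of hR0 hR
  set u : ℕ → ℝ → ℝ[X] := fun k y => (h k) /ₘ (X - C y) with hu
  have huev : ∀ k y x, (h k).eval x = (h k).eval y + (x - y) * (u k y).eval x := by
    intro k y x
    have := congrArg (eval x) (modByMonic_add_div (h k) (X - C y))
    rw [modByMonic_X_sub_C_eq_C_eval] at this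
    simp at this
    rw [← this]
  have hudeg : ∀ k < m, ∀ y, (u k y).degree < d := by
    intro k hk y
    by_cases hk0 : h k = 0
    · simp [hu, hk0]
    by_cases hu0 : u k y = 0
    · simp [hu0]
    have h1 := natDegree_lt_of hk0 (hh k hk)
    rw [← natDegree_lt_iff_degree_lt hu0]
    have h2 : (u k y).natDegree = (h k).natDegree - 1 := by
      rw [hu]; simp only; rw [natDegree_divByMonic _ (monic_X_sub_C y), natDegree_X_sub_C]
    rcases Nat.eq_zero_or_pos (h k).natDegree with h3 | h3
    · exfalso
      apply hu0
      simp only [hu]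
      rw [divByMonic_eq_zero_iff (monic_X_sub_C y), degree_X_sub_C, degree_eq_natDegree hk0, h3]
      norm_num
    · omega
  set Q : ℝ[X] := P + ∑ y ∈ s, ∑ k ∈ Finset.range m, C (v y * ω k y) * u k y with hQ
  have hQdeg : Q.degree < d := by
    refine (degree_add_le _ _).trans_lt (max_lt hP ?_)
    refine (degree_sum_le _ _).trans_lt ?_
    rw [Finset.sup_lt_iff (by exact WithBot.bot_lt_coe d)]
    intro y _
    refine (degree_sum_le _ _).trans_lt ?_
    rw [Finset.sup_lt_iff (by exact WithBot.bot_lt_coe d)]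
    intro k hk
    exact lt_of_le_of_lt (deg_C_mul_le _ _) (hudeg k (Finset.mem_range.1 hk) y)
  set H : ℝ → ℝ := fun y => ∑ k ∈ Finset.range m, (h k).eval y * ω k y with hH
  have hQ0 : ∀ x ∈ T, Q.eval x + ∑ y ∈ s, v y / (x - y) * H y = 0 := by
    intro x hx
    rw [← h0 x hx, hQ, eval_add, add_assoc, eval_finsetSum, ← Finset.sum_add_distrib]
    congr 1
    refine Finset.sum_congr rfl fun y hy => ?_
    have hxy : x - y ≠ 0 := sub_ne_zero.2 (hTs x hx y hy)
    rw [eval_finsetSum, hH]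
    simp only [Finset.mul_sum]
    rw [← Finset.sum_add_distrib]
    refine Finset.sum_congr rfl fun k _ => ?_
    rw [huev k y x]
    simp only [eval_mul, eval_C]
    field_simp
    ring
  have hsum1 : ∑ x ∈ T, (R * Q).eval x / qd T x = 0 := by
    by_cases hQ00 : Q = 0
    · simp [hQ00]
    refine lagr2 T (R * Q) ?_
    have := natDegree_lt_of hQ00 hQdeg
    rw [natDegree_mul hR0 hQ00]
    omega
  have hRT : R.degree < T.card := lt_of_lt_of_le hR (by exact_mod_cast (by omega : K ≤ T.card))
  have hsum2 : ∑ x ∈ T, R.eval x / qd T x * (Q.eval x + ∑ y ∈ s, v y / (x - y) * H y) = 0 :=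
    Finset.sum_eq_zero fun x hx => by rw [hQ0 x hx, mul_zero]
  have hsum3 : ∑ x ∈ T, R.eval x / qd T x * ∑ y ∈ s, v y / (x - y) * H y = 0 := by
    simp only [mul_add, Finset.sum_add_distrib] at hsum2
    have : ∑ x ∈ T, R.eval x / qd T x * Q.eval x = 0 := by
      rw [← hsum1]
      exact Finset.sum_congr rfl fun x _ => by rw [eval_mul]; ring
    rw [this, zero_add] at hsum2
    exact hsum2
  simp only [Finset.mul_sum] at hsum3
  rw [Finset.sum_comm] at hsum3
  rw [← neg_eq_zero, ← hsum3, ← Finset.sum_neg_distrib]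
  refine Finset.sum_congr rfl fun y hy => ?_
  have hl := lagr1 T R hRT y (fun hyT => hTs y hyT y hy rfl)
  have : ∑ x ∈ T, R.eval x / qd T x * (v y / (x - y) * H y) =
      - (v y * H y) * ∑ x ∈ T, R.eval x / (qd T x * (y - x)) := by
    rw [Finset.mul_sum]
    refine Finset.sum_congr rfl fun x hx => ?_
    have hxy : x - y ≠ 0 := sub_ne_zero.2 (hTs x hx y hy)
    have hyx : y - x ≠ 0 := sub_ne_zero.2 (hTs x hx y hy).symm
    have := qd_ne T x
    rw [show x - y = -(y - x) by ring]
    field_simp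
  rw [this, hl]
  ring

lemma cs_hat {a b : ℝ} {s : Finset ℝ} (hs : ↑s ⊆ Icc a b) (hne : s.Nonempty) {w : ℝ → ℝ} (hw : CS ↑s w)
    {x : ℝ} (hx : x ∉ Icc a b) : ∑ t ∈ s, w t / (x - t) ≠ 0 := by
  obtain ⟨e, he⟩ := hw
  intro h0
  rcases lt_or_ge x a with hxa | hxa
  · have : 0 < ∑ t ∈ s, (-e) * (w t / (x - t)) := by
      refine Finset.sum_pos (fun t ht => ?_) hne
      have h1 := he t ht
      have h2 := (hs ht).1
      have h3 : (-e) * (w t / (x - t)) = (e * w t) / (t - x) := by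
        rw [show x - t = -(t - x) by ring, div_neg]; ring
      rw [h3]
      exact div_pos h1 (by linarith)
    rw [← Finset.mul_sum, h0] at this
    simp at this
  · have hxb : b < x := by
      by_contra hc
      exact hx ⟨hxa, not_lt.1 hc⟩
    have : 0 < ∑ t ∈ s, e * (w t / (x - t)) := by
      refine Finset.sum_pos (fun t ht => ?_) hne
      have h1 := he t ht
      have h2 := (hs ht).2
      rw [← mul_div_assoc]
      exact div_pos h1 (by linarith)
    rw [← Finset.mul_sum, h0] at this
    simp at this

/-- Inverse of the Cauchy transform of a discrete measure. -/
lemma inv_hat {a b : ℝ} (s : Finset ℝ) (hs : ↑s ⊆ Icc a b) (hne : s.Nonempty) (w : ℝ → ℝ)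
    (hw : CS ↑s w) : ∃ α β : ℝ, ∃ (s' : Finset ℝ) (v : ℝ → ℝ), ↑s' ⊆ Icc a b ∧ s'.card + 1 = s.card ∧
      CS ↑s' v ∧ ∀ x ∉ Icc a b, (∑ t ∈ s, w t / (x - t))⁻¹ = α * x + β + ∑ y ∈ s', v y / (x - y) := by
  have hcard := Finset.card_pos.2 hne
  set q : ℝ[X] := ∑ t ∈ s, C (w t) * Lagrange.nodal (s.erase t) id with hq
  have hqev : ∀ x, q.eval x = ∑ t ∈ s, w t * qq (s.erase t) x := by
    intro x
    rw [hq, eval_finsetSum]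
    exact Finset.sum_congr rfl fun t _ => by rw [eval_mul, eval_C, nodal_eval]
  have hqs : ∀ t ∈ s, q.eval t = w t * qd s t := by
    intro t ht
    rw [hqev, Finset.sum_eq_single t]
    · rfl
    · intro t' ht' hne'
      have : qq (s.erase t') t = 0 := by
        unfold qq
        exact Finset.prod_eq_zero (Finset.mem_erase.2 ⟨hne'.symm, ht⟩) (by ring)
      rw [this, mul_zero]
    · intro h; exact absurd ht h
  have hqx : ∀ x ∉ s, q.eval x = qq s x * ∑ t ∈ s, w t / (x - t) := by
    intro x hx
    rw [hqev, Finset.mul_sum]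
    refine Finset.sum_congr rfl fun t ht => ?_
    have : x - t ≠ 0 := sub_ne_zero.2 (fun h => hx (h ▸ ht))
    rw [qq_erase ht]
    field_simp
  have hqdeg : q.degree ≤ ((s.card - 1 : ℕ) : WithBot ℕ) := by
    refine (degree_sum_le _ _).trans (Finset.sup_le fun t ht => ?_)
    refine (deg_C_mul_le _ _).trans ?_
    rw [Lagrange.degree_nodal, Finset.card_erase_of_mem ht]
  obtain ⟨Z, hZ, hZc, hZ0⟩ := poly_zeros (a := a) (b := b) (s.card - 1) s hs (by omega)
    (fun t => (w t)⁻¹ * ((qd s t)^2)⁻¹) (hw.inv.mul ⟨1, fun t _ => by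
      have := qd_ne s t; positivity⟩) (fun x => q.eval x) q.continuous.continuousOn (by
    intro R hR
    by_cases hR0 : R = 0
    · simp [hR0]
    have := natDegree_lt_of hR0 hR
    rw [← lagr2 s R (by omega)]
    refine Finset.sum_congr rfl fun t ht => ?_
    rw [hqs t ht]
    have h1 := hw.ne ht
    have h2 := qd_ne s t
    field_simp)
  obtain ⟨t0, ht0⟩ := id hne
  have hZs : ∀ y ∈ Z, y ∉ s := by
    intro y hy hys
    have h1 := hZ0 y hy
    rw [hqs y hys] at h1
    exact mul_ne_zero (hw.ne hys) (qd_ne s y) h1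
  set κ := q.coeff (s.card - 1) with hκ
  have hqZ : q = C κ * Lagrange.nodal Z id := by
    have h1 : (q - C κ * Lagrange.nodal Z id).degree < ((s.card - 1 : ℕ) : WithBot ℕ) := by
      rw [degree_lt_iff_coeff_zero]
      intro n hn
      rcases hn.eq_or_lt with rfl | hn
      · have h2 : (Lagrange.nodal Z (id : ℝ → ℝ)).coeff (s.card - 1) = 1 := by
          have := (Lagrange.nodal_monic (s := Z) (v := (id : ℝ → ℝ))).coeff_natDegree
          rwa [Lagrange.natDegree_nodal, hZc] at this
        rw [coeff_sub, coeff_C_mul, h2, hκ]; ring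
      · rw [coeff_sub, coeff_C_mul, coeff_eq_zero_of_degree_lt (lt_of_le_of_lt hqdeg (by exact_mod_cast hn)),
          coeff_eq_zero_of_degree_lt (p := Lagrange.nodal Z id)]
        · ring
        · rw [Lagrange.degree_nodal, hZc]; exact_mod_cast hn
    have h2 := poly_zero_of h1 Z hZc.ge (fun x hx => by
      rw [eval_sub, eval_mul, nodal_eval, eval_C, qq_erase hx]
      have := hZ0 x hx
      rw [this]; ring)
    exact sub_eq_zero.1 h2
  have hκ0 : κ ≠ 0 := by
    intro h
    have h1 := hqs t0 ht0
    rw [hqZ, h] at h1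
    simp only [C_0, zero_mul, eval_zero] at h1
    exact mul_ne_zero (hw.ne ht0) (qd_ne s t0) h1.symm
  have hqd : ∀ y ∈ Z, κ * qd Z y = - (qq s y * ∑ t ∈ s, w t / (y - t)^2) := by
    intro y hy
    have hys := hZs y hy
    have hσ : ∑ t ∈ s, w t / (y - t) = 0 := by
      have h1 := hqx y hys
      have h2 := hZ0 y hy
      rw [h2] at h1
      exact (mul_eq_zero.1 h1.symm).resolve_left (qq_ne hys)
    set E : ℝ[X] := ∑ t ∈ s, C (w t / (t - y)) * Lagrange.nodal (s.erase t) id with hE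
    have hEev : ∀ x, E.eval x = ∑ t ∈ s, w t / (t - y) * qq (s.erase t) x := by
      intro x
      rw [hE, eval_finsetSum]
      exact Finset.sum_congr rfl fun t _ => by rw [eval_mul, eval_C, nodal_eval]
    have h1 : (X - C y) * (C κ * Lagrange.nodal (Z.erase y) id) = (X - C y) * E := by
      apply Polynomial.funext
      intro x
      have h2 : ((X - C y) * (C κ * Lagrange.nodal (Z.erase y) id)).eval x = q.eval x := by
        rw [hqZ]
        simp only [eval_mul, eval_sub, eval_X, eval_C, nodal_eval]
        rw [qq_erase hy x]; ring
      rw [h2, hqev, eval_mul, hEev, Finset.mul_sum, eval_sub, eval_X, eval_C]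
      have h3 : ∑ t ∈ s, qq s x * (w t / (y - t)) = 0 := by
        rw [← Finset.mul_sum, hσ, mul_zero]
      rw [← sub_eq_zero, ← Finset.sum_sub_distrib, ← h3]
      refine Finset.sum_congr rfl fun t ht => ?_
      have h4 : t - y ≠ 0 := sub_ne_zero.2 (fun h => hys (h ▸ ht))
      rw [qq_erase ht x, show y - t = -(t - y) by ring]
      field_simp
      ring
    have h2 := mul_left_cancel₀ (X_sub_C_ne_zero y) h1
    have h3 := congrArg (eval y) h2
    rw [eval_mul, eval_C, nodal_eval, hEev] at h3
    rw [qd, h3, Finset.mul_sum, ← Finset.sum_neg_distrib]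
    refine Finset.sum_congr rfl fun t ht => ?_
    have h4 : y - t ≠ 0 := sub_ne_zero.2 (fun h => hys (h ▸ ht))
    rw [qq_erase ht y, show t - y = -(y - t) by ring]
    field_simp
  set p : ℝ[X] := Lagrange.nodal s id with hp
  have hmon : (Lagrange.nodal Z (id : ℝ → ℝ)).Monic := Lagrange.nodal_monic
  set B := p /ₘ Lagrange.nodal Z id with hB
  set r := p %ₘ Lagrange.nodal Z id with hr
  have hpr : r + Lagrange.nodal Z id * B = p := modByMonic_add_div _ _
  have hBdeg : B.natDegree ≤ 1 := by
    rw [hB, natDegree_divByMonic _ hmon, hp, Lagrange.natDegree_nodal, Lagrange.natDegree_nodal]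
    omega
  obtain ⟨α, β, hαβ⟩ := exists_eq_X_add_C_of_natDegree_le_one hBdeg
  have hrdeg : r.degree < Z.card := by
    have := degree_modByMonic_lt p hmon
    rwa [Lagrange.degree_nodal] at this
  have hry : ∀ y ∈ Z, r.eval y = qq s y := by
    intro y hy
    have := congrArg (eval y) hpr
    rw [eval_add, eval_mul, nodal_eval, hp, nodal_eval, qq_erase hy] at this
    simpa using this
  refine ⟨α / κ, β / κ, Z, fun y => qq s y / (κ * qd Z y), hZ, by omega, ?_, ?_⟩
  · obtain ⟨e, he⟩ := hw
    refine ⟨-e, fun y hy => ?_⟩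
    have hys := hZs y hy
    have hpos : 0 < e * ∑ t ∈ s, w t / (y - t)^2 := by
      rw [Finset.mul_sum]
      refine Finset.sum_pos (fun t ht => ?_) hne
      have h4 : y - t ≠ 0 := sub_ne_zero.2 (fun h => hys (h ▸ ht))
      rw [← mul_div_assoc]
      exact div_pos (he t ht) (by positivity)
    have hS0 : (∑ t ∈ s, w t / (y - t)^2) ≠ 0 := by
      intro h; rw [h, mul_zero] at hpos; exact lt_irrefl _ hpos
    simp only
    rw [hqd y hy]
    have hq0 := qq_ne hys
    have : -e * (qq s y / -(qq s y * ∑ t ∈ s, w t / (y - t)^2)) =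
      (e * ∑ t ∈ s, w t / (y - t)^2) / (∑ t ∈ s, w t / (y - t)^2)^2 := by
      field_simp
    rw [this]
    positivity
  · intro x hx
    have hxs : x ∉ s := fun h => hx (hs h)
    have hxZ : x ∉ Z := fun h => hx (hZ h)
    have h1 := hqx x hxs
    have h2 : q.eval x = κ * qq Z x := by rw [hqZ, eval_mul, eval_C, nodal_eval]
    have h3 := congrArg (eval x) hpr
    rw [eval_add, eval_mul, nodal_eval, hp, nodal_eval, hαβ] at h3
    simp only [eval_add, eval_mul, eval_C, eval_X] at h3
    have h4 := lagr1 Z r hrdeg x hxZ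
    have h5 : ∑ y ∈ Z, qq s y / (κ * qd Z y) / (x - y) = κ⁻¹ * (r.eval x / qq Z x) := by
      rw [← h4, Finset.mul_sum]
      refine Finset.sum_congr rfl fun y hy => ?_
      have : x - y ≠ 0 := sub_ne_zero.2 (fun h => hxZ (h ▸ hy))
      rw [hry y hy]
      have := qd_ne Z y
      field_simp
    rw [h5]
    have hqs0 := qq_ne hxs
    have hqZ0 := qq_ne hxZ
    have h6 : ∑ t ∈ s, w t / (x - t) = κ * qq Z x / qq s x := by
      rw [← h2, h1]; field_simp
    rw [h6, ← h3]
    have : eval x r + qq Z x * (α * x + β) ≠ 0 := by rw [h3]; exact hqs0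
    field_simp
    ring

/-- Abstract positive-type functional on an interval. -/
structure Fn (I : (ℝ → ℝ) → ℝ) (a b : ℝ) : Prop where
  disc : ∀ (ι : Type) [Fintype ι] (φ : ι → ℝ → ℝ), (∀ i, ContinuousOn (φ i) (Icc a b)) → ∀ L : ℕ,
    ∃ (s : Finset ℝ) (w : ℝ → ℝ), ↑s ⊆ Icc a b ∧ L ≤ s.card ∧ CS ↑s w ∧
      ∀ i, I (φ i) = ∑ t ∈ s, w t * φ i t
  cont : ∀ φ : ℝ → ℝ, ContinuousOn φ (Icc a b) →
    ContinuousOn (fun x => I (fun t => φ t / (x - t))) (Icc a b)ᶜ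

lemma Fn.congr {I a b} (h : Fn I a b) {φ ψ : ℝ → ℝ} (hφ : ContinuousOn φ (Icc a b))
    (he : ∀ x ∈ Icc a b, φ x = ψ x) : I φ = I ψ := by
  obtain ⟨s, w, hs, -, -, h1⟩ := h.disc Bool (fun i => if i then φ else ψ) (by
    intro i
    cases i
    · simpa using hφ.congr (fun x hx => (he x hx).symm)
    · simpa using hφ) 0
  have h2 := h1 true
  have h3 := h1 false
  simp only [if_true, Bool.false_eq_true, if_false] at h2 h3
  rw [h2, h3]
  exact Finset.sum_congr rfl fun t ht => by rw [he t (hs ht)]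

lemma Fn.lin {I a b} (h : Fn I a b) {κ : Type} (S : Finset κ) (c : κ → ℝ) (φ : κ → ℝ → ℝ)
    (hφ : ∀ i ∈ S, ContinuousOn (φ i) (Icc a b)) :
    I (fun t => ∑ i ∈ S, c i * φ i t) = ∑ i ∈ S, c i * I (φ i) := by
  obtain ⟨s, w, hs, -, -, h1⟩ := h.disc (Option S)
    (fun i => Option.elim i (fun t => ∑ i ∈ S, c i * φ i t) (fun i => φ i)) (by
      rintro (_ | i)
      · exact continuousOn_finsetSum _ fun i hi => continuousOn_const.mul (hφ i hi)
      · exact hφ i i.2) 0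
  have h2 := h1 none
  simp only [Option.elim] at h2
  rw [h2]
  have h3 : ∀ i ∈ S, c i * I (φ i) = ∑ t ∈ s, c i * (w t * φ i t) := by
    intro i hi
    have := h1 (some ⟨i, hi⟩)
    simp only [Option.elim] at this
    rw [this, Finset.mul_sum]
  rw [Finset.sum_congr rfl h3, Finset.sum_comm]
  refine Finset.sum_congr rfl fun t _ => ?_
  rw [Finset.mul_sum]
  exact Finset.sum_congr rfl fun i _ => by ring

lemma Fn.dens {I a b} (h : Fn I a b) {ρ : ℝ → ℝ} (hρ : ContinuousOn ρ (Icc a b))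
    (hc : CS (Icc a b) ρ) : Fn (fun φ => I (fun t => ρ t * φ t)) a b := by
  constructor
  · intro ι _ φ hφ L
    obtain ⟨s, w, hs, hL, hw, h1⟩ := h.disc ι (fun i t => ρ t * φ i t) (fun i => hρ.mul (hφ i)) L
    refine ⟨s, fun t => w t * ρ t, hs, hL, hw.mul (hc.mono hs), fun i => ?_⟩
    rw [h1 i]
    exact Finset.sum_congr rfl fun t _ => by ring
  · intro φ hφ
    have := h.cont (fun t => ρ t * φ t) (hρ.mul hφ)
    simpa only [mul_div_assoc] using this

/-- Iterated Cauchy transforms of the abstract system. -/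
def W : ℕ → (ℕ → (ℝ → ℝ) → ℝ) → ℝ → ℝ
  | 0, _, _ => 1
  | k + 1, I, x => I 0 (fun t => W k (fun i => I (i + 1)) t / (x - t))

structure Sys (m : ℕ) (I : ℕ → (ℝ → ℝ) → ℝ) (a b : ℕ → ℝ) : Prop where
  fn : ∀ i < m, Fn (I i) (a i) (b i)
  dj : ∀ i, i + 1 < m → Icc (a i) (b i) ∩ Icc (a (i+1)) (b (i+1)) = ∅

lemma Sys.tail {m I a b} (h : Sys (m+1) I a b) :
    Sys m (fun i => I (i+1)) (fun i => a (i+1)) (fun i => b (i+1)) :=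
  ⟨fun i hi => h.fn (i+1) (by omega), fun i hi => h.dj (i+1) (by omega)⟩

lemma W_cont : ∀ (k m : ℕ) (I : ℕ → (ℝ → ℝ) → ℝ) (a b : ℕ → ℝ), Sys m I a b → k ≤ m → ∀ J : Set ℝ,
    (0 < m → J ⊆ (Icc (a 0) (b 0))ᶜ) → ContinuousOn (W k I) J := by
  intro k
  induction k with
  | zero => intro m I a b _ _ J _; exact continuousOn_const
  | succ k ih =>
    intro m I a b hS hk J hJ
    obtain ⟨m, rfl⟩ : ∃ m', m = m' + 1 := ⟨m - 1, by omega⟩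
    refine ((hS.fn 0 (by omega)).cont _ (ih m _ _ _ hS.tail (by omega) _ ?_)).mono (hJ (by omega))
    intro hm x hx hx'
    have : x ∈ Icc (a 0) (b 0) ∩ Icc (a 1) (b 1) := ⟨hx, hx'⟩
    rw [hS.dj 0 (by omega)] at this
    exact this

/-- The linear form. -/
def form (m : ℕ) (I : ℕ → (ℝ → ℝ) → ℝ) (g : ℕ → ℝ[X]) (x : ℝ) : ℝ :=
  ∑ k ∈ Finset.range (m + 1), (g k).eval x * W k I x

lemma form_cont {m : ℕ} {I : ℕ → (ℝ → ℝ) → ℝ} {a b : ℕ → ℝ} (h : Sys m I a b) (g : ℕ → ℝ[X]) {J : Set ℝ}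
    (hJ : 0 < m → J ⊆ (Icc (a 0) (b 0))ᶜ) : ContinuousOn (form m I g) J := by
  unfold form
  refine continuousOn_finsetSum _ fun k hk => (g k).continuous.continuousOn.mul ?_
  exact W_cont k m I a b h (by have := Finset.mem_range.1 hk; omega) J hJ

lemma hat_cont {a b : ℝ} (s : Finset ℝ) (hs : ↑s ⊆ Icc a b) (w : ℝ → ℝ) :
    ContinuousOn (fun x => ∑ t ∈ s, w t / (x - t)) (Icc a b)ᶜ := by
  refine continuousOn_finsetSum _ fun t ht => ?_
  refine continuousOn_const.div (by fun_prop) fun x hx => sub_ne_zero.2 ?_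
  rintro rfl
  exact hx (hs ht)

lemma inv_id {a b : ℝ} (s : Finset ℝ) (hs : ↑s ⊆ Icc a b) (hne : s.Nonempty) (w : ℝ → ℝ)
    (hw : CS ↑s w) (α β : ℝ) (s' : Finset ℝ) (v : ℝ → ℝ) (hs' : ↑s' ⊆ Icc a b)
    (h : ∀ x ∉ Icc a b, (∑ t ∈ s, w t / (x - t))⁻¹ = α * x + β + ∑ y ∈ s', v y / (x - y))
    {x u : ℝ} (hx : x ∉ Icc a b) (hu : u ∉ Icc a b) :
    ∑ t ∈ s, w t / ((x - t) * (t - u)) = (∑ t ∈ s, w t / (x - t)) * (∑ t ∈ s, w t / (u - t)) *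
      (-α - ∑ y ∈ s', v y / ((x - y) * (y - u))) := by
  have main : ∀ x ∉ Icc a b, x ≠ u → ∑ t ∈ s, w t / ((x - t) * (t - u)) = (∑ t ∈ s, w t / (x - t)) * (∑ t ∈ s, w t / (u - t)) *
      (-α - ∑ y ∈ s', v y / ((x - y) * (y - u))) := by
    intro x hx hxu
    have hxu' : x - u ≠ 0 := sub_ne_zero.2 hxu
    have key : ∀ (s : Finset ℝ) (w : ℝ → ℝ), ↑s ⊆ Icc a b → (x - u) * ∑ t ∈ s, w t / ((x - t) * (t - u))
        = ∑ t ∈ s, w t / (x - t) - ∑ t ∈ s, w t / (u - t) := by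
      intro s w hs
      rw [← Finset.sum_sub_distrib, Finset.mul_sum]
      refine Finset.sum_congr rfl fun t ht => ?_
      have h1 : x - t ≠ 0 := sub_ne_zero.2 (fun h => hx (h ▸ hs ht))
      have h2 : u - t ≠ 0 := sub_ne_zero.2 (fun h => hu (h ▸ hs ht))
      rw [show t - u = -(u - t) by ring]
      field_simp
      ring
    have k1 := key s w hs
    have k2 := key s' v hs'
    have e1 := h x hx
    have e2 := h u hu
    have n1 := cs_hat hs hne hw hx
    have n2 := cs_hat hs hne hw hu
    generalize (∑ t ∈ s, w t / (x - t)) = p at *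
    generalize (∑ t ∈ s, w t / (u - t)) = q at *
    apply mul_left_cancel₀ hxu'
    rw [k1]
    have e3 : (x - u) * (-α - ∑ y ∈ s', v y / ((x - y) * (y - u))) = -(p⁻¹ - q⁻¹) := by
      rw [mul_sub, k2, e1, e2]; ring
    rw [show (x - u) * (p * q * (-α - ∑ y ∈ s', v y / ((x - y) * (y - u)))) =
      p * q * ((x - u) * (-α - ∑ y ∈ s', v y / ((x - y) * (y - u)))) by ring, e3]
    field_simp
    ring
  by_cases hxu : x = u
  · subst hxu
    have c0 : ∀ (s : Finset ℝ) (w : ℝ → ℝ), ↑s ⊆ Icc a b →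
        ContinuousAt (fun z => ∑ t ∈ s, w t / ((z - t) * (t - x))) x := by
      intro s w hs
      refine tendsto_finsetSum _ fun t ht => ?_
      have : x - t ≠ 0 := sub_ne_zero.2 (fun h => hx (h ▸ hs ht))
      have h2 : t - x ≠ 0 := sub_ne_zero.2 (fun h => hx (h ▸ hs ht))
      exact ContinuousAt.div (by fun_prop) (by fun_prop) (mul_ne_zero this h2)
    have hop : (Icc a b)ᶜ ∈ nhds x := isClosed_Icc.isOpen_compl.mem_nhds hx
    have c1 := c0 s w hs
    have c2 : ContinuousAt (fun z => (∑ t ∈ s, w t / (z - t)) * (∑ t ∈ s, w t / (x - t)) *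
      (-α - ∑ y ∈ s', v y / ((z - y) * (y - x)))) x :=
      (((hat_cont s hs w).continuousAt hop).mul continuousAt_const).mul
        (continuousAt_const.sub (c0 s' v hs'))
    have t1 := c1.tendsto.mono_left (nhdsWithin_le_nhds (s := {x}ᶜ))
    have t2 := c2.tendsto.mono_left (nhdsWithin_le_nhds (s := {x}ᶜ))
    refine tendsto_nhds_unique (t1.congr' ?_) t2
    filter_upwards [nhdsWithin_le_nhds hop, self_mem_nhdsWithin] with z hz hzx
    exact main z hz hzx
  · exact main x hx hxu

lemma Sys.notmem {m I a b} (h : Sys (m+1) I a b) (hm : 0 < m) {x : ℝ} (hx : x ∈ Icc (a 0) (b 0)) :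
    x ∉ Icc (a 1) (b 1) := by
  intro hx'
  have : x ∈ Icc (a 0) (b 0) ∩ Icc (a 1) (b 1) := ⟨hx, hx'⟩
  rw [h.dj 0 (by omega)] at this
  exact this

lemma Sys.notmem' {m I a b} (h : Sys (m+1) I a b) (hm : 0 < m) {x : ℝ} (hx : x ∈ Icc (a 1) (b 1)) :
    x ∉ Icc (a 0) (b 0) := fun hx' => h.notmem hm hx' hx

lemma Sys.disc0 {m I a b} (hS : Sys (m+1) I a b) (T : Finset ℝ) (hT : ∀ x ∈ T, x ∉ Icc (a 0) (b 0)) (L : ℕ) :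
    ∃ (s : Finset ℝ) (w : ℝ → ℝ), ↑s ⊆ Icc (a 0) (b 0) ∧ L ≤ s.card ∧ CS ↑s w ∧
      ∀ x ∈ T, ∀ k ≤ m, W (k+1) I x = ∑ t ∈ s, w t * (W k (fun i => I (i+1)) t / (x - t)) := by
  obtain ⟨s, w, hs, hL, hw, h⟩ := (hS.fn 0 (by omega)).disc (T × Fin (m+1))
    (fun i t => W i.2 (fun i => I (i+1)) t / (i.1 - t)) (by
      rintro ⟨x, k⟩
      refine ContinuousOn.div (W_cont k m _ _ _ hS.tail (by omega) _ ?_) (by fun_prop) ?_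
      · intro hm y hy
        exact hS.notmem hm hy
      · intro y hy
        refine sub_ne_zero.2 ?_
        intro h
        exact hT x x.2 (h ▸ hy)) L
  refine ⟨s, w, hs, hL, hw, fun x hx k hk => ?_⟩
  have := h (⟨x, hx⟩, ⟨k, by omega⟩)
  simpa [W] using this

lemma cs_weight {a b : ℝ} {s : Finset ℝ} (hs : ↑s ⊆ Icc a b) {T : Finset ℝ} (hT : ∀ x ∈ T, x ∉ Icc a b)
    {w : ℝ → ℝ} (hw : CS ↑s w) : CS ↑s (fun y => w y * (qq T y)⁻¹) := by
  refine hw.mul (CS.mono (CS.inv ?_) hs)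
  exact cs_of_cont' ordConnected_Icc (qq_cont T).continuousOn fun x hx => qq_ne fun h => hT x h hx

theorem zz : ∀ (m : ℕ) (I : ℕ → (ℝ → ℝ) → ℝ) (a b : ℕ → ℝ), Sys m I a b → ∀ (N : ℕ → ℕ) (j : ℕ),
    (∀ i < j, ∀ k, i < k → k ≤ m → N k ≤ N i + 1) → (∀ i, j < i → i < m → N (i+1) ≤ N i) →
    ∀ g : ℕ → ℝ[X], (∀ k ≤ m, (g k).degree < (N k : WithBot ℕ)) →
    ∀ T : Finset ℝ, (0 < m → ∀ x ∈ T, x ∉ Icc (a 0) (b 0)) → ∑ k ∈ Finset.range (m+1), N k ≤ T.card →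
    (∀ x ∈ T, form m I g x = 0) → ∀ k ≤ m, g k = 0 := by
  intro m
  induction m with
  | zero =>
    intro I a b _ N j _ _ g hg T _ hc h0 k hk
    obtain rfl : k = 0 := by omega
    refine poly_zero_of (hg 0 le_rfl) T (by simpa using hc) fun x hx => ?_
    have := h0 x hx
    simpa [form, W] using this
  | succ m ih =>
    intro I a b hS N j hc1 hc2 g hg T hT hc h0
    have hT := hT (by omega)
    -- the direct step
    have direct : (∀ k, k ≤ m → N (k+1) ≤ N 0 + 1) → (∃ j' : ℕ, (∀ i < j', ∀ k, i < k → k ≤ m → N (k+1) ≤ N (i+1) + 1) ∧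
        (∀ i, j' < i → i < m → N (i+1+1) ≤ N (i+1))) → ∀ k ≤ m+1, g k = 0 := by
      rintro hN ⟨j', hj1, hj2⟩
      set K := ∑ k ∈ Finset.range (m+1), N (k+1) with hK
      have hKT : K + N 0 ≤ T.card := by rwa [Finset.sum_range_succ'] at hc
      obtain ⟨s, w, hs, hL, hw, hd⟩ := hS.disc0 T hT K
      have hst := step T s (fun x hx y hy h => hT x hx (h ▸ hs hy)) w (g 0) (m+1) (fun k => g (k+1))
        (fun k => W k (fun i => I (i+1))) (N 0) K (hg 0 (by omega)) (by
          intro k hk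
          refine (hg (k+1) (by omega)).trans_le ?_
          exact_mod_cast hN k (by omega)) (by
          intro x hx
          rw [← h0 x hx, form, Finset.sum_range_succ' _ (m+1), add_comm]
          congr 1
          · simp only [Finset.mul_sum]
            rw [Finset.sum_comm]
            refine Finset.sum_congr rfl fun k hk => ?_
            rw [hd x hx k (by have := Finset.mem_range.1 hk; omega), Finset.mul_sum]
            exact Finset.sum_congr rfl fun y _ => by ring
          · simp [W]) hKT
      obtain ⟨Z, hZ, hZc, hZ0⟩ := poly_zeros K s hs hL _ (cs_weight hs hT hw)
        (form m (fun i => I (i+1)) (fun k => g (k+1)))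
        (form_cont hS.tail _ fun hm y hy => hS.notmem hm hy) hst
      have hg1 := ih _ _ _ hS.tail (fun k => N (k+1)) j' hj1 hj2 (fun k => g (k+1))
        (fun k hk => hg (k+1) (by omega)) Z (fun hm x hx => hS.notmem hm (hZ hx)) hZc.ge hZ0
      have hg0 : g 0 = 0 := by
        refine poly_zero_of (hg 0 (by omega)) T (by omega) fun x hx => ?_
        have := h0 x hx
        rw [form, Finset.sum_range_succ', Finset.sum_eq_zero] at this
        · simpa [W] using this
        · intro k hk
          rw [hg1 k (by have := Finset.mem_range.1 hk; omega)]; simp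
      intro k hk
      rcases k with _ | k
      · exact hg0
      · exact hg1 k (by omega)
    rcases Nat.eq_zero_or_pos j with rfl | hj
    · have hdec : ∀ k, k ≤ m → N (k+1) ≤ N 1 := by
        intro k
        induction k with
        | zero => intro _; exact le_rfl
        | succ k ihk => intro hk; exact (hc2 (k+1) (by omega) (by omega)).trans (ihk (by omega))
      by_cases hN1 : N 1 ≤ N 0 + 1
      · exact direct (fun k hk => (hdec k hk).trans hN1) ⟨0, fun i hi => absurd hi (by omega),
          fun i hi hi' => hc2 (i+1) (by omega) (by omega)⟩
      · -- the inverse step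
        set K := N 0 + ∑ k ∈ Finset.range m, N (k+1+1) with hK
        have hKT : K + N 1 ≤ T.card := by
          rw [Finset.sum_range_succ', Finset.sum_range_succ'] at hc
          simp only [zero_add] at hc
          omega
        obtain ⟨s, w, hs, hL, hw, hd⟩ := hS.disc0 T hT (K+1)
        have hne : s.Nonempty := Finset.card_pos.1 (by omega)
        obtain ⟨α, β, s', v, hs', hcard, hv, hinv⟩ := inv_hat s hs hne w hw
        set σ : ℝ → ℝ := fun x => ∑ t ∈ s, w t / (x - t) with hσ
        have hσc : ContinuousOn σ (Icc (a 0) (b 0))ᶜ := hat_cont s hs w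
        have hσ0 : ∀ x ∉ Icc (a 0) (b 0), σ x ≠ 0 := fun x hx => cs_hat hs hne hw hx
        set I' : ℕ → (ℝ → ℝ) → ℝ := fun i => if i = 0 then (fun φ => I 1 (fun t => σ t * φ t)) else I (i+1) with hI'
        have hS' : Sys m I' (fun i => a (i+1)) (fun i => b (i+1)) := by
          refine ⟨fun i hi => ?_, fun i hi => hS.dj (i+1) (by omega)⟩
          rcases i with _ | i
          · have hsub : Icc (a 1) (b 1) ⊆ (Icc (a 0) (b 0))ᶜ := fun x hx => hS.notmem' hi hx
            have := (hS.fn 1 (by omega)).dens (hσc.mono hsub)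
              (cs_of_cont' ordConnected_Icc (hσc.mono hsub) fun x hx => hσ0 x (hsub hx))
            simpa [hI'] using this
          · have := hS.fn (i+1+1) (by omega)
            simpa [hI'] using this
        set ct : ℕ → ℝ := fun k => I 1 (fun u => σ u * W k (fun i => I (i+2)) u) with hct
        have hI'tail : (fun i => I' (i+1)) = fun i => I (i+2) := by
          funext i; simp [hI']
        have hWc : ∀ k, k < m → ContinuousOn (W k (fun i => I (i+2))) (Icc (a 1) (b 1)) := by
          intro k hk
          obtain ⟨m', rfl⟩ : ∃ m', m = m' + 1 := ⟨m - 1, by omega⟩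
          refine W_cont k m' _ _ _ hS.tail.tail (by omega) _ ?_
          intro hm y hy
          exact hS.tail.notmem hm hy
        have key : ∀ x ∈ T, ∀ k < m, W (k+2) I x = σ x * (-α * ct k - ∑ y ∈ s', v y / (x - y) * W (k+1) I' y) := by
          intro x hx k hk
          rw [hd x hx (k+1) (by omega)]
          have hf1 := hS.fn 1 (by omega)
          have hkc := hWc k hk
          have hx0 := hT x hx
          have e1 : ∑ t ∈ s, w t * (W (k+1) (fun i => I (i+1)) t / (x - t))
              = I 1 (fun u => ∑ t ∈ s, (w t / (x - t)) * (W k (fun i => I (i+2)) u / (t - u))) := by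
            rw [hf1.lin s (fun t => w t / (x - t)) (fun t u => W k (fun i => I (i+2)) u / (t - u))]
            · refine Finset.sum_congr rfl fun t _ => ?_
              simp only [W]
              ring
            · intro t ht
              refine hkc.div (by fun_prop) fun u hu => sub_ne_zero.2 ?_
              rintro rfl
              exact hS.notmem' (by omega) hu (hs ht)
          have e2 : I 1 (fun u => ∑ t ∈ s, (w t / (x - t)) * (W k (fun i => I (i+2)) u / (t - u)))
              = I 1 (fun u => ∑ i ∈ Finset.insertNone s', (Option.elim i (- σ x * α) (fun y => - σ x * (v y / (x - y)))) *
                (Option.elim i (fun u => σ u * W k (fun i => I (i+2)) u)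
                  (fun y u => σ u * (W k (fun i => I (i+2)) u / (y - u))) u)) := by
            apply hf1.congr
            · refine continuousOn_finsetSum _ fun t ht => continuousOn_const.mul ?_
              refine hkc.div (by fun_prop) fun u hu => sub_ne_zero.2 ?_
              rintro rfl
              exact hS.notmem' (by omega) hu (hs ht)
            · intro u hu
              have hu0 := hS.notmem' (by omega) hu
              have := inv_id s hs hne w hw α β s' v hs' hinv hx0 hu0
              rw [Finset.sum_insertNone]
              simp only [Option.elim]
              have l1 : ∑ t ∈ s, (w t / (x - t)) * (W k (fun i => I (i+2)) u / (t - u)) =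
                  W k (fun i => I (i+2)) u * ∑ t ∈ s, w t / ((x - t) * (t - u)) := by
                rw [Finset.mul_sum]
                refine Finset.sum_congr rfl fun t _ => ?_
                rw [div_mul_div_comm]; ring
              have l2 : ∑ y ∈ s', -σ x * (v y / (x - y)) * (σ u * (W k (fun i => I (i+2)) u / (y - u))) =
                  -σ x * σ u * W k (fun i => I (i+2)) u * ∑ y ∈ s', v y / ((x - y) * (y - u)) := by
                rw [Finset.mul_sum]
                refine Finset.sum_congr rfl fun t _ => ?_
                rw [← div_div]; ring
              rw [l1, l2, this]
              simp only [hσ]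
              ring
          rw [e1, e2, hf1.lin]
          · rw [Finset.sum_insertNone]
            simp only [Option.elim]
            rw [mul_sub, Finset.mul_sum, sub_eq_add_neg (σ x * _)]
            congr 1
            · simp only [hct]; ring
            · refine Eq.trans (Finset.sum_congr rfl fun y _ => ?_) (Finset.sum_neg_distrib ..)
              have : W (k+1) I' y = I 1 (fun u => σ u * (W k (fun i => I (i+2)) u / (y - u))) := by
                rw [W, hI'tail]
                simp [hI']
              rw [this]; ring
          · have hsc : ContinuousOn σ (Icc (a 1) (b 1)) :=
              hσc.mono fun x hx => hS.notmem' (by omega) hx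
            rintro (_ | y) hy
            · exact hsc.mul hkc
            · refine hsc.mul (hkc.div (by fun_prop) fun u hu => sub_ne_zero.2 ?_)
              rintro rfl
              exact hS.notmem' (by omega) hu (hs' (by simpa using hy))
        have hW1 : ∀ x ∈ T, W 1 I x = σ x := by
          intro x hx
          rw [hd x hx 0 (by omega)]
          exact Finset.sum_congr rfl fun t _ => by simp only [W]; ring
        set g' : ℕ → ℝ[X] := fun k => if k = 0 then g 0 else - g (k+1) with hg'
        set P : ℝ[X] := g 1 + (C α * X + C β) * g 0 - ∑ k ∈ Finset.range m, C (α * ct k) * g (k+2) with hP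
        have hPdeg : P.degree < (N 1 : WithBot ℕ) := by
          refine (degree_sub_le _ _).trans_lt (max_lt ((degree_add_le _ _).trans_lt (max_lt (hg 1 (by omega)) ?_)) ?_)
          · have h1 := hg 0 (by omega)
            by_cases h00 : g 0 = 0
            · rw [h00, mul_zero, degree_zero]; exact WithBot.bot_lt_coe _
            refine (degree_mul_le _ _).trans_lt ?_
            rw [degree_eq_natDegree h00] at h1 ⊢
            have h2 : (g 0).natDegree < N 0 := by exact_mod_cast h1
            refine (add_le_add_left (degree_linear_le (a := α) (b := β)) _).trans_lt ?_
            have : 1 + (g 0).natDegree < N 1 := by omega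
            exact_mod_cast this
          · refine (degree_sum_le _ _).trans_lt ?_
            rw [Finset.sup_lt_iff (by exact WithBot.bot_lt_coe _)]
            intro k hk
            have hk := Finset.mem_range.1 hk
            refine (deg_C_mul_le _ _).trans_lt ((hg (k+2) (by omega)).trans_le ?_)
            exact_mod_cast hdec (k+1) (by omega)
        have hg'deg : ∀ k ≤ m, (g' k).degree < ((if k = 0 then N 0 else N (k+1) : ℕ) : WithBot ℕ) := by
          intro k hk
          rcases k with _ | k
          · simpa [hg'] using hg 0 (by omega)
          · simpa [hg'] using hg (k+1+1) (by omega)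
        have hst := step T s' (fun x hx y hy h => hT x hx (h ▸ hs' hy)) v P (m+1) g'
          (fun k => W k I') (N 1) K hPdeg (by
            intro k hk
            refine (hg'deg k (by omega)).trans_le ?_
            rcases k with _ | k
            · simp only [if_true]; exact_mod_cast (by omega : N 0 ≤ N 1 + 1)
            · simp only [Nat.succ_ne_zero, if_false]
              have := hdec (k+1) (by omega)
              exact_mod_cast (by omega : N (k+1+1) ≤ N 1 + 1)) (by
            intro x hx
            have hx0 := hT x hx
            have hσx := hσ0 x hx0
            have h1 := h0 x hx
            have h2 := hinv x hx0
            change (σ x)⁻¹ = _ at h2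
            rw [form, Finset.sum_range_succ', Finset.sum_range_succ'] at h1
            have h3 : ∑ k ∈ Finset.range m, eval x (g (k+1+1)) * W (k+1+1) I x =
                σ x * (∑ k ∈ Finset.range m, (- (α * ct k) * eval x (g (k+2)) -
                  eval x (g (k+2)) * ∑ y ∈ s', v y / (x - y) * W (k+1) I' y)) := by
              rw [Finset.mul_sum]
              refine Finset.sum_congr rfl fun k hk => ?_
              rw [key x hx k (Finset.mem_range.1 hk)]; ring
            rw [h3, zero_add, hW1 x hx, Finset.sum_sub_distrib] at h1
            have h4 : ∑ y ∈ s', v y / (x - y) * ∑ k ∈ Finset.range (m+1), eval x (g' k) * W k I' y =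
                eval x (g 0) * ∑ y ∈ s', v y / (x - y) -
                ∑ k ∈ Finset.range m, eval x (g (k+2)) * ∑ y ∈ s', v y / (x - y) * W (k+1) I' y := by
              have : ∀ y ∈ s', v y / (x - y) * ∑ k ∈ Finset.range (m+1), eval x (g' k) * W k I' y =
                  eval x (g 0) * (v y / (x - y)) - ∑ k ∈ Finset.range m, eval x (g (k+2)) * (v y / (x - y) * W (k+1) I' y) := by
                intro y _
                have q1 : ∑ k ∈ Finset.range m, v y / (x - y) * (eval x (g' (k+1)) * W (k+1) I' y) =
                    - ∑ k ∈ Finset.range m, eval x (g (k+2)) * (v y / (x - y) * W (k+1) I' y) := by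
                  refine Eq.trans (Finset.sum_congr rfl fun k _ => ?_) (Finset.sum_neg_distrib ..)
                  simp only [hg', Nat.succ_ne_zero, if_false, eval_neg]
                  ring
                have q2 : eval x (g' 0) * W 0 I' y = eval x (g 0) := by simp [hg', W]
                rw [Finset.sum_range_succ', mul_add, Finset.mul_sum, q1, q2]
                ring
              rw [Finset.sum_congr rfl this, Finset.sum_sub_distrib, ← Finset.mul_sum, Finset.sum_comm]
              congr 1
              exact Finset.sum_congr rfl fun k _ => by rw [Finset.mul_sum]
            rw [h4, hP]
            simp only [eval_sub, eval_add, eval_mul, eval_C, eval_X, eval_finsetSum]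
            have h5 : α * x + β + ∑ y ∈ s', v y / (x - y) = (σ x)⁻¹ := h2.symm
            have h6 : W 0 I x = 1 := rfl
            rw [h6] at h1
            have h7 : ∑ k ∈ Finset.range m, -(α * ct k) * eval x (g (k+2)) =
                - ∑ k ∈ Finset.range m, α * ct k * eval x (g (k+2)) := by
              rw [← Finset.sum_neg_distrib]
              exact Finset.sum_congr rfl fun k _ => by ring
            rw [h7] at h1
            apply mul_left_cancel₀ hσx
            have h8 : σ x * (α * x + β + ∑ y ∈ s', v y / (x - y)) = 1 := by
              rw [h5]; exact mul_inv_cancel₀ hσx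
            rw [mul_zero, ← h1]
            linear_combination eval x (g 0) * h8) hKT
        obtain ⟨Z, hZ, hZc, hZ0⟩ := poly_zeros K s' hs' (by omega) _ (cs_weight hs' hT hv)
          (form m I' g') (form_cont hS' _ fun hm y hy => hS.notmem hm hy) hst
        have hsumN : ∑ k ∈ Finset.range (m+1), (if k = 0 then N 0 else N (k+1)) = K := by
          rw [Finset.sum_range_succ', hK, add_comm]
          simp
        have hg1 := ih _ _ _ hS' (fun k => if k = 0 then N 0 else N (k+1)) 0 (fun i hi => absurd hi (by omega))
          (by
            intro i hi hi'
            have := hc2 (i+1) (by omega) (by omega)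
            simp only [Nat.succ_ne_zero, if_false, hi.ne']
            exact this) g' hg'deg Z (fun hm x hx => hS.notmem hm (hZ hx)) (by rw [hsumN, hZc]) hZ0
        have g0 : g 0 = 0 := by simpa [hg'] using hg1 0 (by omega)
        have g2 : ∀ k < m, g (k+2) = 0 := by
          intro k hk
          simpa [hg'] using hg1 (k+1) (by omega)
        have g1 : g 1 = 0 := by
          refine poly_zero_of (hg 1 (by omega)) T (by omega) fun x hx => ?_
          have h1 := h0 x hx
          rw [form, Finset.sum_range_succ', Finset.sum_range_succ', Finset.sum_eq_zero, g0, zero_add, hW1 x hx] at h1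
          · simpa [hσ0 x (hT x hx)] using h1
          · intro k hk
            rw [g2 k (Finset.mem_range.1 hk)]; simp
        intro k hk
        rcases k with _ | _ | k
        · exact g0
        · exact g1
        · exact g2 k (by omega)
    · exact direct (fun k hk => hc1 0 hj (k+1) (by omega) (by omega)) ⟨j - 1,
        fun i hi k hk hk' => hc1 (i+1) (by omega) (k+1) (by omega) (by omega),
        fun i hi hi' => hc2 (i+1) (by omega) (by omega)⟩

lemma compact_hull {E : Type} [NormedAddCommGroup E] [NormedSpace ℝ E] [FiniteDimensional ℝ E] {K : Set E}
    (hK : IsCompact K) : IsCompact (convexHull ℝ K) := by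
  rcases K.eq_empty_or_nonempty with rfl | ⟨k0, hk0⟩
  · simp
  set n := Module.finrank ℝ E + 1
  have hc : IsCompact ((fun p : (Fin n → ℝ) × (Fin n → E) => ∑ i, p.1 i • p.2 i) ''
      ((stdSimplex ℝ (Fin n)) ×ˢ (Set.univ.pi fun _ => K))) :=
    ((isCompact_stdSimplex ℝ (Fin n)).prod (isCompact_univ_pi fun _ => hK)).image (by fun_prop)
  convert hc using 1
  apply Subset.antisymm
  · intro x hx
    obtain ⟨ι, _, z, w, hz, hai, hw, hw1, hx⟩ := eq_pos_convex_span_of_mem_convexHull hx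
    have hcard : Fintype.card ι ≤ Fintype.card (Fin n) := by
      rw [Fintype.card_fin]
      exact hai.card_le_finrank_succ.trans (Nat.succ_le_succ (Submodule.finrank_le _))
    obtain ⟨e⟩ := Function.Embedding.nonempty_of_card_le hcard
    have he := e.injective
    refine ⟨(Function.extend e w 0, Function.extend e z (fun _ => k0)), ⟨⟨?_, ?_⟩, ?_⟩, ?_⟩
    · intro i
      by_cases hi : ∃ a, e a = i
      · obtain ⟨a, rfl⟩ := hi
        simp only [he.extend_apply]; exact (hw a).le
      · simp [Function.extend_apply' _ _ _ hi]
    · rw [← hw1]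
      symm
      refine Fintype.sum_of_injective e he _ _ ?_ ?_
      · intro i hi
        simp only [Function.extend_apply' _ _ _ hi, Pi.zero_apply]
      · intro i; simp only [he.extend_apply]
    · intro i _
      by_cases hi : ∃ a, e a = i
      · obtain ⟨a, rfl⟩ := hi
        simp only [he.extend_apply]; exact hz ⟨a, rfl⟩
      · simp only [Function.extend_apply' _ _ _ hi]; exact hk0
    · simp only
      rw [← hx]
      symm
      refine Fintype.sum_of_injective e he _ _ ?_ ?_
      · intro i hi
        simp only [Function.extend_apply' _ _ _ hi, Pi.zero_apply, zero_smul]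
      · intro i; simp only [he.extend_apply]
  · rintro _ ⟨⟨w, z⟩, ⟨⟨h1, h2⟩, h3⟩, rfl⟩
    exact (convex_convexHull ℝ K).sum_mem (fun i _ => h1 i) h2
      fun i _ => subset_convexHull ℝ K (h3 i (mem_univ i))

lemma msupport_null {μ : Measure ℝ} {a b : ℝ} (h : convexHull ℝ (msupport μ) = Icc a b) :
    ∀ᵐ x ∂μ, x ∈ Icc a b := by
  have h1 : μ.support ⊆ Icc a b := by
    rw [← h]
    refine Subset.trans ?_ (subset_convexHull ℝ _)
    intro x hx U hU hxU
    exact ((Measure.mem_support_iff_forall x).1 hx U (hU.mem_nhds hxU)).ne'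
  filter_upwards [Measure.support_mem_ae (μ := μ)] with x hx using h1 hx

lemma intg {μ : Measure ℝ} [IsFiniteMeasure μ] {a b : ℝ} (h : ∀ᵐ x ∂μ, x ∈ Icc a b) {φ : ℝ → ℝ}
    (hφ : ContinuousOn φ (Icc a b)) : Integrable φ μ := by
  have := hφ.integrableOn_compact (μ := μ) isCompact_Icc
  rwa [IntegrableOn, Measure.restrict_eq_self_of_ae_mem h] at this

lemma tchak {μ : Measure ℝ} [IsFiniteMeasure μ] {a b : ℝ} (hae : ∀ᵐ x ∂μ, x ∈ Icc a b)
    (hinf : (msupport μ).Infinite) (κ : Type) [Fintype κ] (φ : κ → ℝ → ℝ)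
    (hφ : ∀ i, ContinuousOn (φ i) (Icc a b)) (hinj : ∃ i, φ i = id) :
    ∃ (s : Finset ℝ) (w : ℝ → ℝ), ↑s ⊆ Icc a b ∧ (∀ t ∈ s, 0 < w t) ∧
      ∀ i, ∫ t, φ i t ∂μ = ∑ t ∈ s, w t * φ i t := by
  classical
  have hμ : NeZero μ := by
    obtain ⟨x, hx⟩ := hinf.nonempty
    refine ⟨fun h => hx univ isOpen_univ (mem_univ x) (by rw [h]; rfl)⟩
  set Φ : ℝ → κ → ℝ := fun t i => φ i t with hΦ
  have hΦc : ContinuousOn Φ (Icc a b) := continuousOn_pi.2 hφ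
  have hΦi : Function.Injective Φ := by
    obtain ⟨i, hi⟩ := hinj
    intro x y hxy
    have := congrFun hxy i
    simpa [hΦ, hi] using this
  have hitg : ∀ i, Integrable (φ i) μ := fun i => intg hae (hφ i)
  have hmem := (convex_convexHull ℝ (Φ '' Icc a b)).average_mem (μ := μ) (f := Φ)
    (compact_hull (isCompact_Icc.image_of_continuousOn hΦc)).isClosed
    (by filter_upwards [hae] with x hx using subset_convexHull ℝ _ ⟨x, hx, rfl⟩)
    (Integrable.of_eval hitg)
  rw [convexHull_eq_union] at hmem
  simp only [mem_iUnion] at hmem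
  obtain ⟨t, ht, -, hmem⟩ := hmem
  obtain ⟨s, hs, rfl⟩ := Finset.subset_set_image_iff.1 ht
  rw [Finset.mem_convexHull'] at hmem
  obtain ⟨w, hw0, hw1, hw⟩ := hmem
  rw [Finset.sum_image (fun x _ y _ h => hΦi h)] at hw
  have hM : 0 < μ.real univ := by
    rw [measureReal_def]
    exact ENNReal.toReal_pos (by simpa using hμ.ne) (measure_ne_top _ _)
  refine ⟨s.filter (fun t => 0 < w (Φ t)), fun t => μ.real univ * w (Φ t), ?_, ?_, ?_⟩
  · intro t ht
    exact hs (Finset.mem_filter.1 ht).1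
  · intro t ht
    exact mul_pos hM (Finset.mem_filter.1 ht).2
  · intro i
    have h1 := congrFun hw i
    rw [average_eq, Pi.smul_apply, eval_integral hitg] at h1
    rw [Finset.sum_apply] at h1
    simp only [Pi.smul_apply, smul_eq_mul] at h1
    rw [Finset.sum_filter_of_ne]
    · simp only [mul_assoc]
      rw [← Finset.mul_sum]
      change ∑ t ∈ s, w (Φ t) * φ i t = _ at h1
      rw [h1]
      field_simp
    · intro t ht hne
      have := hw0 (Φ t) (Finset.mem_image_of_mem _ ht)
      refine lt_of_le_of_ne this ?_
      intro h
      apply hne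
      simp only [← h]; ring

lemma fn_measure {μ : Measure ℝ} [IsFiniteMeasure μ] {a b : ℝ} (h : convexHull ℝ (msupport μ) = Icc a b)
    (hinf : (msupport μ).Infinite) {e : ℝ} (he : e = 1 ∨ e = -1) : Fn (fun φ => e * ∫ t, φ t ∂μ) a b := by
  have hae := msupport_null h
  constructor
  · intro ι _ φ hφ L
    obtain ⟨s, w, hs, hw, hsum⟩ := tchak hae hinf (ι ⊕ Fin (2*L+2)) (Sum.elim φ (fun i t => t^(i:ℕ))) (by
      rintro (i | i)
      · exact hφ i
      · exact (continuous_pow _).continuousOn) ⟨Sum.inr ⟨1, by omega⟩, by funext t; simp⟩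
    refine ⟨s, fun t => e * w t, hs, ?_, ⟨e, ?_⟩, ?_⟩
    · by_contra hL
      push Not at hL
      set p : ℝ[X] := (Lagrange.nodal s id)^2 with hp
      have hpdeg : p.natDegree < 2*L+2 := by
        rw [hp, natDegree_pow, Lagrange.natDegree_nodal]; omega
      have hpe : ∀ x, p.eval x = (qq s x)^2 := fun x => by rw [hp, eval_pow, nodal_eval]
      have hpev : ∀ x, p.eval x = ∑ i : Fin (2*L+2), p.coeff i * x^(i:ℕ) := by
        intro x
        rw [eval_eq_sum_range' hpdeg, ← Fin.sum_univ_eq_sum_range (fun i => p.coeff i * x^i)]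
      have hpi : Integrable (fun x => p.eval x) μ := intg hae p.continuous.continuousOn
      have h0 : ∫ x, p.eval x ∂μ = 0 := by
        simp only [hpev]
        rw [integral_finsetSum _ (fun i _ => (intg hae (continuous_pow _).continuousOn).const_mul _)]
        have h1 : ∀ i : Fin (2*L+2), ∫ x, p.coeff i * x^(i:ℕ) ∂μ = ∑ t ∈ s, w t * (p.coeff i * t^(i:ℕ)) := by
          intro i
          have := hsum (Sum.inr i)
          simp only [Sum.elim_inr] at this
          rw [integral_const_mul, this, Finset.mul_sum]
          exact Finset.sum_congr rfl fun t _ => by ring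
        rw [Finset.sum_congr rfl fun i _ => h1 i, Finset.sum_comm]
        refine Finset.sum_eq_zero fun t ht => ?_
        rw [← Finset.mul_sum, ← hpev, hpe]
        have : qq s t = 0 := Finset.prod_eq_zero ht (by ring)
        rw [this]; ring
      rw [integral_eq_zero_iff_of_nonneg (fun x => by simp only [hpe, Pi.zero_apply]; positivity) hpi] at h0
      obtain ⟨x, hx, hxs⟩ := hinf.exists_notMem_finset s
      refine hx (↑s)ᶜ s.finite_toSet.isClosed.isOpen_compl (by simpa using hxs) ?_
      refine measure_mono_null ?_ (ae_iff.1 h0)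
      intro y hy
      have : qq s y ≠ 0 := qq_ne (by simpa using hy)
      simp only [mem_ofPred_eq, hpe, Pi.zero_apply]
      positivity
    · intro t ht
      have := hw t ht
      rcases he with rfl | rfl <;> simpa using this
    · intro i
      have := hsum (Sum.inl i)
      simp only [Sum.elim_inl] at this
      rw [this, Finset.mul_sum]
      exact Finset.sum_congr rfl fun t _ => by ring
  · intro φ hφ x0 hx0
    refine ContinuousAt.continuousWithinAt ?_
    refine continuousAt_const.mul ?_
    obtain ⟨δ, hδ, hball⟩ := Metric.isOpen_iff.1 (isClosed_Icc.isOpen_compl) x0 hx0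
    obtain ⟨M, hM⟩ := isCompact_Icc.exists_bound_of_continuousOn hφ
    have hd : ∀ x ∈ Metric.ball x0 (δ/2), ∀ t ∈ Icc a b, δ/2 ≤ |x - t| := by
      intro x hx t ht
      by_contra hlt
      push Not at hlt
      refine hball (show t ∈ Metric.ball x0 δ from ?_) ht
      rw [Metric.mem_ball, Real.dist_eq] at hx ⊢
      have := abs_sub_le t x x0
      rw [abs_sub_comm t x] at this
      linarith
    refine continuousAt_of_dominated (bound := fun _ => M / (δ/2)) ?_ ?_ (integrable_const _) ?_
    · filter_upwards [Metric.ball_mem_nhds x0 (half_pos hδ)] with x hx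
      refine (intg hae (hφ.div (by fun_prop) fun t ht h0 => ?_)).aestronglyMeasurable
      have := hd x hx t ht
      rw [h0, abs_zero] at this
      linarith
    · filter_upwards [Metric.ball_mem_nhds x0 (half_pos hδ)] with x hx
      filter_upwards [hae] with t ht
      rw [norm_div, Real.norm_eq_abs (x - t)]
      exact div_le_div₀ ((norm_nonneg _).trans (hM t ht)) (hM t ht) (half_pos hδ) (hd x hx t ht)
    · filter_upwards [hae] with t ht
      have : x0 - t ≠ 0 := sub_ne_zero.2 (fun h => hx0 (h ▸ ht))
      exact continuousAt_const.div (by fun_prop) this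

lemma haar2 {m : ℕ} {I : ℕ → (ℝ → ℝ) → ℝ} {a b : ℕ → ℝ} (hS : Sys m I a b) (n : ℕ → ℕ) (hn : Decr m n)
    (J : Set ℝ) (hJ : 0 < m → J ⊆ (Icc (a 0) (b 0))ᶜ) :
    Haar (fun (i : Σ k : Fin (m+1), Fin (n k)) x => x^(i.2:ℕ) * W i.1 I x) J := by
  constructor
  · rintro ⟨k, ν⟩
    exact (continuous_pow _).continuousOn.mul (W_cont k m I a b hS (by omega) J hJ)
  · intro c T hT hcard h0
    set g : ℕ → ℝ[X] := fun k => if h : k < m + 1 then ∑ ν : Fin (n k), C (c ⟨⟨k, h⟩, ν⟩) * X^(ν:ℕ) else 0 with hg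
    have hg0 := zz m I a b hS n 0 (fun i hi => absurd hi (by omega)) (fun i _ hi => hn i hi) g (by
      intro k hk
      simp only [hg, dif_pos (Nat.lt_succ_of_le hk)]
      exact degree_sum_fin_lt _) T (fun hm x hx => hJ hm (hT hx)) (by
        rw [Fintype.card_sigma] at hcard
        simp only [Fintype.card_fin] at hcard
        rwa [Fin.sum_univ_eq_sum_range (fun k => n k) (m+1)] at hcard) (by
        intro x hx
        rw [← h0 x hx, Fintype.sum_sigma, form, ← Fin.sum_univ_eq_sum_range (fun k => eval x (g k) * W k I x)]
        refine Finset.sum_congr rfl fun k _ => ?_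
        simp only [hg, dif_pos k.2, eval_finsetSum, Finset.sum_mul]
        refine Finset.sum_congr rfl fun ν _ => ?_
        simp [mul_assoc])
    funext ⟨⟨k, hk⟩, ν⟩
    have := congrArg (fun p => coeff p (ν:ℕ)) (hg0 k (by omega))
    simp only [hg, dif_pos hk, finsetSum_coeff, coeff_C_mul, coeff_X_pow, coeff_zero] at this
    rw [Finset.sum_eq_single ν] at this
    · simpa using this
    · intro ν' _ hne
      rw [if_neg (fun h => hne (Fin.ext h.symm)), mul_zero]
    · simp

lemma orth_zeros {m : ℕ} {I : ℕ → (ℝ → ℝ) → ℝ} {a b : ℕ → ℝ} (hS : Sys m I a b) (n : ℕ → ℕ) (hn : Decr m n)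
    {I0 : (ℝ → ℝ) → ℝ} {a0 b0 : ℝ} (h0 : Fn I0 a0 b0) (hab : a0 ≤ b0)
    (hdj : 0 < m → Icc a0 b0 ⊆ (Icc (a 0) (b 0))ᶜ) (f : ℝ → ℝ) (hf : ContinuousOn f (Icc a0 b0))
    (ho : ∀ k ≤ m, ∀ ν < n k, I0 (fun x => x^ν * f x * W k I x) = 0) :
    ∃ Z : Finset ℝ, ↑Z ⊆ Icc a0 b0 ∧ Z.card = msum m n ∧ ∀ x ∈ Z, f x = 0 := by
  obtain ⟨U, hU, hUs, hUd⟩ : ∃ U : Set ℝ, IsOpen U ∧ Icc a0 b0 ⊆ U ∧ (0 < m → U ⊆ (Icc (a 0) (b 0))ᶜ) := by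
    by_cases hm : 0 < m
    · exact ⟨_, isClosed_Icc.isOpen_compl, hdj hm, fun _ => Subset.rfl⟩
    · exact ⟨univ, isOpen_univ, subset_univ _, fun h => absurd h hm⟩
  obtain ⟨ε, hε, h1⟩ := Metric.isOpen_iff.1 hU a0 (hUs ⟨le_rfl, hab⟩)
  obtain ⟨δ, hδ, h2⟩ := Metric.isOpen_iff.1 hU b0 (hUs ⟨hab, le_rfl⟩)
  have hsub : Icc (a0 - ε/2) (b0 + δ/2) ⊆ U := by
    rintro x ⟨hx1, hx2⟩
    rcases lt_or_ge x a0 with h | h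
    · apply h1
      rw [Metric.mem_ball, Real.dist_eq, abs_lt]
      constructor <;> linarith
    · rcases lt_or_ge b0 x with h' | h'
      · apply h2
        rw [Metric.mem_ball, Real.dist_eq, abs_lt]
        constructor <;> linarith
      · exact hUs ⟨h, h'⟩
  have hH := haar2 hS n hn _ (fun hm => hsub.trans (hUd hm))
  have hcard : Fintype.card (Σ k : Fin (m+1), Fin (n k)) = msum m n := by
    rw [Fintype.card_sigma]
    simp only [Fintype.card_fin]
    rw [Fin.sum_univ_eq_sum_range (fun k => n k) (m+1), msum]
  have hle : Icc a0 b0 ⊆ Icc (a0 - ε/2) (b0 + δ/2) := Icc_subset_Icc (by linarith) (by linarith)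
  obtain ⟨s, w, hs, hL, hw, hd⟩ := h0.disc (Σ k : Fin (m+1), Fin (n k))
    (fun i x => x^(i.2:ℕ) * f x * W i.1 I x) (by
      rintro ⟨k, ν⟩
      exact ((continuous_pow _).continuousOn.mul hf).mul
        (W_cont k m I a b hS (by omega) _ fun hm => (hUs.trans (hUd hm)))) (msum m n)
  rw [← hcard] at hL ⊢
  refine Haar.zeros hH (by linarith) (by linarith) s hs hL w hw f hf ?_
  rintro ⟨k, ν⟩
  have := hd ⟨k, ν⟩
  simp only at this
  rw [ho k (by omega) ν ν.2] at this
  rw [this]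
  exact Finset.sum_congr rfl fun t _ => by ring

/-- The functional of the `i`-th measure of a Nikishin system. -/
def NI (μ : ℕ → Measure ℝ) (e : ℕ → ℝ) (i : ℕ) (φ : ℝ → ℝ) : ℝ := e i * ∫ t, φ t ∂(μ i)

lemma nik_eq (μ : ℕ → Measure ℝ) (e : ℕ → ℝ) (g : ℕ) : ∀ (j : ℕ) (x : ℝ),
    nikhat μ e j g (x : ℂ) = ((W (g+1) (fun i => NI μ e (j+i)) x : ℝ) : ℂ) := by
  induction g with
  | zero =>
    intro j x
    simp only [nikhat, W, NI, add_zero, Complex.ofReal_mul]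
    rw [← integral_complex_ofReal]
    simp
  | succ g ih =>
    intro j x
    rw [nikhat, W, NI, Complex.ofReal_mul, ← integral_complex_ofReal]
    simp only [ih, add_zero]
    congr 2
    funext t
    rw [show (fun i => NI μ e (j + (i+1))) = fun i => NI μ e (j+1+i) by
      funext i; rw [add_assoc, add_comm 1 i]]
    push_cast
    rfl

lemma wt_eq (μ : ℕ → Measure ℝ) (e : ℕ → ℝ) (j k : ℕ) (x : ℝ) :
    wt μ e j k (x : ℂ) = ((W (k - j) (fun i => NI μ e (j+1+i)) x : ℝ) : ℂ) := by
  unfold wt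
  split_ifs with h
  · rw [nik_eq, show k - (j+1) + 1 = k - j by omega]
  · rw [show k - j = 0 by omega]; simp [W]

lemma linForm_eq (μ : ℕ → Measure ℝ) (e : ℕ → ℝ) {m j : ℕ} (hj : j ≤ m) (A : ℕ → ℝ[X]) (x : ℝ) :
    linForm μ e m j A (x : ℂ) = ((form (m - j) (fun i => NI μ e (j+1+i)) (fun k => A (j+k)) x : ℝ) : ℂ) := by
  unfold linForm form
  rw [← Finset.Ico_succ_right_eq_Icc, Finset.sum_Ico_eq_sum_range, Complex.ofReal_sum]
  simp only [Order.succ_eq_add_one]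
  rw [show m + 1 - j = m - j + 1 by omega]
  refine Finset.sum_congr rfl fun k _ => ?_
  rw [wt_eq, Complex.ofReal_mul, show j + k - j = k by omega]
  congr 1
  exact aeval_algebraMap_apply_eq_algebraMap_eval x (A (j+k))

lemma NikSys.sys {m : ℕ} (S : NikSys m) (j : ℕ) :
    Sys (m - j) (fun i => NI S.μ S.e (j+1+i)) (fun i => S.a (j+1+i)) (fun i => S.b (j+1+i)) := by
  refine ⟨fun i hi => ?_, fun i hi => S.disj (j+1+i) (by omega)⟩
  have := S.fin (j+1+i)
  exact fn_measure (S.hull (j+1+i) (by omega)) (S.inf (j+1+i) (by omega)) (S.sgn (j+1+i))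

lemma NikSys.fn0 {m : ℕ} (S : NikSys m) : Fn (NI S.μ S.e 0) (S.a 0) (S.b 0) := by
  have := S.fin 0
  exact fn_measure (S.hull 0 (by omega)) (S.inf 0 (by omega)) (S.sgn 0)

lemma NikSys.le0 {m : ℕ} (S : NikSys m) : S.a 0 ≤ S.b 0 := by
  obtain ⟨x, hx⟩ := (S.inf 0 (by omega)).nonempty
  have := subset_convexHull ℝ _ hx
  rw [S.hull 0 (by omega)] at this
  exact this.1.trans this.2

lemma NikSys.dj0 {m : ℕ} (S : NikSys m) (hm : 0 < m) : Icc (S.a 0) (S.b 0) ⊆ (Icc (S.a 1) (S.b 1))ᶜ := by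
  intro x hx hx'
  have : x ∈ Icc (S.a 0) (S.b 0) ∩ Icc (S.a 1) (S.b 1) := ⟨hx, hx'⟩
  rw [S.disj 0 hm] at this
  exact this

lemma form_add (m : ℕ) (I : ℕ → (ℝ → ℝ) → ℝ) (A A' : ℕ → ℝ[X]) (c d x : ℝ) :
    form m I (fun k => c • A k + d • A' k) x = c * form m I A x + d * form m I A' x := by
  unfold form
  rw [Finset.mul_sum, Finset.mul_sum, ← Finset.sum_add_distrib]
  refine Finset.sum_congr rfl fun k _ => ?_
  rw [eval_add, eval_smul, eval_smul]
  simp only [smul_eq_mul]; ring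

lemma orth_real {m₁ m₂ : ℕ} (S1 : NikSys m₁) (S2 : NikSys m₂) (A : ℕ → ℝ[X]) (k ν : ℕ)
    (h : sInt S2.μ S2.e 0 k (fun x => (x : ℂ) ^ ν * linForm S1.μ S1.e m₁ 0 A (x : ℂ)) = 0) :
    NI S2.μ S2.e 0 (fun x => x^ν * form m₁ (fun i => NI S1.μ S1.e (1+i)) A x *
      W k (fun i => NI S2.μ S2.e (1+i)) x) = 0 := by
  rw [← Complex.ofReal_eq_zero, ← h, NI, sInt, Complex.ofReal_mul, ← integral_complex_ofReal]
  congr 2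
  funext x
  rw [linForm_eq _ _ (Nat.zero_le m₁), wt_eq]
  simp only [Nat.sub_zero, zero_add]
  push_cast
  rfl

lemma msum_bump {m l : ℕ} (hl : l ≤ m) (n : ℕ → ℕ) : msum m (bump l n) = msum m n + 1 := by
  unfold msum
  have : ∀ k ∈ Finset.range (m+1), bump l n k = n k + if k = l then 1 else 0 := by
    intro k _; unfold bump; split_ifs <;> rfl
  rw [Finset.sum_congr rfl this, Finset.sum_add_distrib, Finset.sum_ite_eq', if_pos (Finset.mem_range.2 (by omega))]

lemma le_bump (l : ℕ) (n : ℕ → ℕ) (k : ℕ) : n k ≤ bump l n k := by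
  unfold bump; split_ifs <;> omega

lemma Decr.le {m : ℕ} {n : ℕ → ℕ} (h : Decr m n) {i k : ℕ} (hik : i ≤ k) (hk : k ≤ m) : n k ≤ n i := by
  induction k, hik using Nat.le_induction with
  | base => exact le_rfl
  | succ k hik ih => exact (h k (by omega)).trans (ih (by omega))

lemma deg_comb {p q : ℝ[X]} {M : WithBot ℕ} (hp : p.degree < M) (hq : q.degree < M) (c d : ℝ) :
    (c • p + d • q).degree < M :=
  (degree_add_le _ _).trans_lt (max_lt ((degree_smul_le _ _).trans_lt hp) ((degree_smul_le _ _).trans_lt hq))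

theorem degree_claim
    (m₁ m₂ : ℕ) (S1 : NikSys m₁) (S2 : NikSys m₂)
    (hbase : S1.μ 0 = S2.μ 0 ∧ S1.e 0 = S2.e 0)
    (n1 n2 : ℕ → ℕ) (l₁ l₂ : ℕ) (hl₁ : l₁ ≤ m₁) (hl₂ : l₂ ≤ m₂)
    (h1 : Decr m₁ n1) (h2 : Decr m₂ n2)
    (h1l : Decr m₁ (bump l₁ n1)) (h2l : Decr m₂ (bump l₂ n2))
    (hsum : msum m₂ n2 + 1 = msum m₁ n1)
    (A A' : ℕ → Polynomial ℝ)
    (hA : IsMOP m₁ m₂ S1 S2 n1 n2 A)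
    (hA' : IsMOP m₁ m₂ S1 S2 (bump l₁ n1) (bump l₂ n2) A')
    (c d : ℝ) (hcd : 0 < |c| + |d|) (j : ℕ) (hj : j ≤ m₁) (hj2 : 2 ≤ n1 j) :
    ((n1 j - 2 : ℕ) : WithBot ℕ) ≤ (c • A j + d • A' j).degree := by
  by_contra hlt
  rw [not_le] at hlt
  obtain ⟨hAd, hA0, hAo⟩ := hA
  obtain ⟨hA'd, hA'0, hA'o⟩ := hA'
  set I1 : ℕ → (ℝ → ℝ) → ℝ := fun i => NI S1.μ S1.e (1+i) with hI1
  set I2 : ℕ → (ℝ → ℝ) → ℝ := fun i => NI S2.μ S2.e (1+i) with hI2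
  have hS1 : Sys m₁ I1 (fun i => S1.a (1+i)) (fun i => S1.b (1+i)) := by simpa using S1.sys 0
  have hS2 : Sys m₂ I2 (fun i => S2.a (1+i)) (fun i => S2.b (1+i)) := by simpa using S2.sys 0
  have hIcc : Icc (S2.a 0) (S2.b 0) = Icc (S1.a 0) (S1.b 0) := by
    rw [← S1.hull 0 (by omega), ← S2.hull 0 (by omega), hbase.1]
  have hsub : 0 < m₁ → Icc (S2.a 0) (S2.b 0) ⊆ (Icc (S1.a 1) (S1.b 1))ᶜ := fun hm => by
    rw [hIcc]; exact S1.dj0 hm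
  have hc : ∀ g, ContinuousOn (form m₁ I1 g) (Icc (S2.a 0) (S2.b 0)) := fun g => form_cont hS1 g hsub
  have hWc : ∀ k ≤ m₂, ContinuousOn (W k I2) (Icc (S2.a 0) (S2.b 0)) := fun k hk =>
    W_cont k m₂ _ _ _ hS2 hk _ fun hm => S2.dj0 hm
  have oA : ∀ k ≤ m₂, ∀ ν < n2 k, NI S2.μ S2.e 0 (fun x => x^ν * form m₁ I1 A x * W k I2 x) = 0 :=
    fun k hk ν hν => orth_real S1 S2 A k ν (hAo k hk ν hν)
  have oA' : ∀ k ≤ m₂, ∀ ν < bump l₂ n2 k, NI S2.μ S2.e 0 (fun x => x^ν * form m₁ I1 A' x * W k I2 x) = 0 :=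
    fun k hk ν hν => orth_real S1 S2 A' k ν (hA'o k hk ν hν)
  set g : ℕ → ℝ[X] := fun k => c • A k + d • A' k with hg
  have oG : ∀ k ≤ m₂, ∀ ν < n2 k, NI S2.μ S2.e 0 (fun x => x^ν * form m₁ I1 g x * W k I2 x) = 0 := by
    intro k hk ν hν
    have hl := S2.fn0.lin (Finset.univ : Finset Bool) (fun i => if i then c else d)
      (fun i x => x^ν * form m₁ I1 (if i then A else A') x * W k I2 x) (by
        intro i _
        exact ((continuous_pow _).continuousOn.mul (hc _)).mul (hWc k hk))
    simp only [Fintype.sum_bool, if_true, Bool.false_eq_true, if_false] at hl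
    rw [oA k hk ν hν, oA' k hk ν (hν.trans_le (le_bump _ _ _)), mul_zero, mul_zero, add_zero] at hl
    rw [← hl]
    congr 1
    funext x
    rw [hg, form_add]; ring
  obtain ⟨Z, hZ, hZc, hZ0⟩ := orth_zeros hS2 n2 h2 S2.fn0 S2.le0 (fun hm => S2.dj0 hm) _ (hc g) oG
  obtain ⟨Z', hZ', hZc', hZ0'⟩ := orth_zeros hS2 (bump l₂ n2) h2l S2.fn0 S2.le0 (fun hm => S2.dj0 hm) _ (hc A') oA'
  rw [msum_bump hl₂, hsum] at hZc'
  set N : ℕ → ℕ := fun k => if k = j then n1 j - 2 else bump l₁ n1 k with hN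
  have hNle : ∀ k, N k ≤ bump l₁ n1 k := by
    intro k
    simp only [hN]
    split_ifs with h
    · subst h; have := le_bump l₁ n1 k; omega
    · exact le_rfl
  have hNsum : ∑ k ∈ Finset.range (m₁+1), N k ≤ Z.card := by
    have e1 : ∑ k ∈ Finset.range (m₁+1), (N k + if k = j then 2 else 0) ≤ msum m₁ (bump l₁ n1) := by
      refine Finset.sum_le_sum fun k _ => ?_
      simp only [hN]
      split_ifs with h
      · subst h; have := le_bump l₁ n1 k; omega
      · exact le_rfl
    rw [Finset.sum_add_distrib, Finset.sum_ite_eq', if_pos (Finset.mem_range.2 (by omega)), msum_bump hl₁] at e1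
    omega
  have hg0 := zz m₁ I1 _ _ hS1 N j (by
      intro i hi k hik hk
      have e1 : N i = bump l₁ n1 i := by simp only [hN]; rw [if_neg (by omega)]
      have := hNle k
      have := h1l.le hik.le hk
      omega) (by
      intro i hi hi'
      simp only [hN]
      rw [if_neg (by omega), if_neg (by omega)]
      exact h1l i hi') g (by
      intro k hk
      by_cases hkj : k = j
      · subst hkj
        simp only [hN, if_true]; exact hlt
      · simp only [hN, if_neg hkj]
        refine deg_comb ((hAd k hk).trans_le ?_) (hA'd k hk) c d
        exact_mod_cast le_bump l₁ n1 k) Z (fun hm x hx => hsub hm (hZ hx)) hNsum hZ0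
  by_cases hd : d = 0
  · have hc0 : c ≠ 0 := by
      rintro rfl
      simp [hd] at hcd
    obtain ⟨k, hk, hne⟩ := hA0
    have := hg0 k hk
    simp only [hg, hd, zero_smul, add_zero, smul_eq_zero] at this
    exact hne (this.resolve_left hc0)
  · have hA'eq : ∀ k ≤ m₁, A' k = (-(c/d)) • A k := by
      intro k hk
      have := hg0 k hk
      simp only [hg] at this
      have h3 : d • A' k = (-c) • A k := by
        rw [neg_smul]; exact eq_neg_of_add_eq_zero_right this
      have h4 := congrArg (fun p => d⁻¹ • p) h3
      simp only [smul_smul, inv_mul_cancel₀ hd, one_smul] at h4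
      rw [h4]; congr 1; ring
    have := zz m₁ I1 _ _ hS1 n1 0 (fun i hi => absurd hi (by omega)) (fun i _ hi => h1 i hi) A' (by
      intro k hk
      rw [hA'eq k hk]
      exact (degree_smul_le _ _).trans_lt (hAd k hk)) Z' (fun hm x hx => hsub hm (hZ' hx)) hZc'.ge hZ0'
    obtain ⟨k, hk, hne⟩ := hA'0
    exact hne (this k hk)

lemma form_nonzero {m : ℕ} (S : NikSys m) (j : ℕ) (hj : j ≤ m) (g : ℕ → ℝ[X]) (hg : g j ≠ 0) :
    ∃ x : ℝ, S.b (j+1) < x ∧ form (m - j) (fun i => NI S.μ S.e (j+1+i)) (fun k => g (j+k)) x ≠ 0 := by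
  classical
  by_contra! hcon
  set M := ∑ k ∈ Finset.range (m - j + 1), ((g (j+k)).natDegree + 1) with hM
  set T : Finset ℝ := (Finset.range ((m - j + 1) * M)).image (fun i : ℕ => S.b (j+1) + 1 + i) with hT
  have hTc : T.card = (m - j + 1) * M := by
    rw [hT, Finset.card_image_of_injective, Finset.card_range]
    intro x y hxy
    simpa using hxy
  have hTb : ∀ x ∈ T, S.b (j+1) < x := by
    intro x hx
    obtain ⟨i, -, rfl⟩ := Finset.mem_image.1 hx
    have : (0:ℝ) ≤ i := Nat.cast_nonneg i
    linarith
  have := zz (m - j) _ _ _ (S.sys j) (fun _ => M) 0 (fun i hi => absurd hi (by omega)) (fun _ _ _ => le_rfl)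
    (fun k => g (j+k)) (by
      intro k hk
      refine degree_le_natDegree.trans_lt ?_
      have h1 : (g (j+k)).natDegree + 1 ≤ M :=
        Finset.single_le_sum (f := fun k => (g (j+k)).natDegree + 1) (fun _ _ => Nat.zero_le _)
          (Finset.mem_range.2 (by omega))
      exact_mod_cast h1) T (fun _ x hx hx' => absurd hx'.2 (not_le.2 (hTb x hx)))
      (by rw [hTc]; simp) (fun x hx => hcon x (hTb x hx)) 0 (Nat.zero_le _)
  exact hg this

/-- If `n_{1,m₁} ≥ 1` and `|A| + |B| > 0`, then for every `j` with
`n_{1,j} ≥ 2` the polynomial `A·a_{n,j} + B·a_{n^l,j}` has degree `≥ n_{1,j} - 2`,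
and the form `𝒢_{n,j} = A·𝒜_{n,j} + B·𝒜_{n^l,j}` is not identically zero. -/
theorem combination_not_trivial
    (m₁ m₂ : ℕ) (S1 : NikSys m₁) (S2 : NikSys m₂)
    (hbase : S1.μ 0 = S2.μ 0 ∧ S1.e 0 = S2.e 0)
    (n1 n2 : ℕ → ℕ) (l₁ l₂ : ℕ) (hl₁ : l₁ ≤ m₁) (hl₂ : l₂ ≤ m₂)
    (h1 : Decr m₁ n1) (h2 : Decr m₂ n2)
    (h1l : Decr m₁ (bump l₁ n1)) (h2l : Decr m₂ (bump l₂ n2))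
    (hsum : msum m₂ n2 + 1 = msum m₁ n1) (hlast : 1 ≤ n1 m₁)
    (A A' : ℕ → Polynomial ℝ)
    (hA : IsMOP m₁ m₂ S1 S2 n1 n2 A) (hAm : MonicLast m₁ A)
    (hA' : IsMOP m₁ m₂ S1 S2 (bump l₁ n1) (bump l₂ n2) A') (hA'm : MonicLast m₁ A')
    (c d : ℝ) (hcd : 0 < |c| + |d|) :
    ∀ j ≤ m₁, 2 ≤ n1 j →
      (((n1 j - 2 : ℕ) : WithBot ℕ) ≤ (c • A j + d • A' j).degree ∧
        ∃ z ∈ (if j < m₁ then (cpx (Set.Icc (S1.a (j+1)) (S1.b (j+1))))ᶜ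
                else (Set.univ : Set ℂ)),
          (c : ℂ) * linForm S1.μ S1.e m₁ j A z +
            (d : ℂ) * linForm S1.μ S1.e m₁ j A' z ≠ 0) := by
  intro j hj hj2
  have hdeg := degree_claim m₁ m₂ S1 S2 hbase n1 n2 l₁ l₂ hl₁ hl₂ h1 h2 h1l h2l hsum A A' hA hA' c d hcd j hj hj2
  refine ⟨hdeg, ?_⟩
  obtain ⟨x, hx, hne⟩ := form_nonzero S1 j hj (fun k => c • A k + d • A' k) (by
    intro h
    rw [h, degree_zero] at hdeg
    exact absurd hdeg (by simp))
  refine ⟨(x : ℂ), ?_, ?_⟩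
  · split_ifs
    · rintro ⟨y, hy, hyx⟩
      have : y = x := Complex.ofReal_injective hyx
      subst this
      exact absurd hy.2 (not_le.2 hx)
    · exact mem_univ _
  · rw [linForm_eq _ _ hj, linForm_eq _ _ hj]
    rw [form_add _ _ (fun k => A (j+k)) (fun k => A' (j+k))] at hne
    exact_mod_cast hne

end
end
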